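/- arXiv:1109.4835 — 2 statements merged into one kernel-verified Lean document; each statement's English description precedes it below -/
import Mathlib

section
/- Let C be a quasicategory and let X and Y be objects of C. Then the two models of the mapping space, Hom_C(X,Y) and Hom^L_C(X,Y), are homotopy equivalent simplicial sets. -/
open CategoryTheory Simplicial Opposite

namespace SSetPaper

universe u

/-- Extend a morphism of `SimplexCategory` by one extra top vertex on each side,
sending the new top vertex to the new top vertex. -/
def joinPt {x y : SimplexCategory} (u : x ⟶ y) :
    (⦋x.len + 1⦌ : SimplexCategory) ⟶ ⦋y.len + 1⦌ :=
  SimplexCategory.mkHom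
    { toFun := fun i =>
        if h : (i : ℕ) < x.len + 1 then (u.toOrderHom ⟨i, h⟩).castSucc else Fin.last _
      monotone' := by
        intro i j hij
        dsimp only
        split_ifs with hi hj hj
        · exact Fin.castSucc_le_castSucc_iff.mpr (u.toOrderHom.monotone hij)
        · exact Fin.le_last _
        · exact absurd (lt_of_le_of_lt (show (i : ℕ) ≤ j from hij) hj) hi
        · exact le_rfl }

lemma joinPt_apply_of_lt {x y : SimplexCategory} (u : x ⟶ y) (i : Fin (x.len + 2))
    (h : (i : ℕ) < x.len + 1) :
    (joinPt u).toOrderHom i = (u.toOrderHom ⟨i, h⟩).castSucc :=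
  dif_pos h

lemma joinPt_apply_of_ge {x y : SimplexCategory} (u : x ⟶ y) (i : Fin (x.len + 2))
    (h : ¬ (i : ℕ) < x.len + 1) :
    (joinPt u).toOrderHom i = Fin.last (y.len + 1) :=
  dif_neg h

lemma joinPt_id (x : SimplexCategory) :
    joinPt (𝟙 x) = 𝟙 (⦋x.len + 1⦌ : SimplexCategory) := by
  apply SimplexCategory.Hom.ext
  apply OrderHom.ext
  funext i
  by_cases h : (i : ℕ) < x.len + 1
  · rw [joinPt_apply_of_lt _ i h]
    exact Fin.ext (by simp)
  · rw [joinPt_apply_of_ge _ i h]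
    have hi := i.isLt
    simp only [SimplexCategory.len_mk] at hi
    refine Fin.ext ?_
    simp only [Fin.val_last, SimplexCategory.id_toOrderHom, OrderHom.id_coe, id_eq]
    omega

lemma joinPt_comp {x y z : SimplexCategory} (u : x ⟶ y) (v : y ⟶ z) :
    joinPt (u ≫ v) = joinPt u ≫ joinPt v := by
  apply SimplexCategory.Hom.ext
  apply OrderHom.ext
  funext i
  rw [SimplexCategory.comp_toOrderHom, OrderHom.comp_coe]
  show (joinPt (u ≫ v)).toOrderHom i = (joinPt v).toOrderHom ((joinPt u).toOrderHom i)
  by_cases h : (i : ℕ) < x.len + 1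
  · rw [joinPt_apply_of_lt (u ≫ v) i h, joinPt_apply_of_lt u i h,
      joinPt_apply_of_lt v _ (by simpa using (u.toOrderHom ⟨i, h⟩).isLt)]
    rw [SimplexCategory.comp_toOrderHom, OrderHom.comp_coe]
    rfl
  · rw [joinPt_apply_of_ge (u ≫ v) i h, joinPt_apply_of_ge u i h,
      joinPt_apply_of_ge v _ (by simp)]

/-- The inclusion of `x` into `[x.len + 1]` as the initial segment
(the face opposite the final vertex). -/
def botIncl (x : SimplexCategory) : x ⟶ ⦋x.len + 1⦌ :=
  SimplexCategory.Hom.mk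
    { toFun := Fin.castSucc
      monotone' := fun _ _ h => Fin.castSucc_le_castSucc_iff.mpr h }

/-- The final vertex of `[x.len + 1]`. -/
def lastVtx (x : SimplexCategory) : (⦋0⦌ : SimplexCategory) ⟶ ⦋x.len + 1⦌ :=
  SimplexCategory.const ⦋0⦌ ⦋x.len + 1⦌ (Fin.last (x.len + 1))

lemma botIncl_joinPt {x y : SimplexCategory} (u : x ⟶ y) :
    botIncl x ≫ joinPt u = u ≫ botIncl y := by
  apply SimplexCategory.Hom.ext
  apply OrderHom.ext
  funext i
  rw [SimplexCategory.comp_toOrderHom, OrderHom.comp_coe, SimplexCategory.comp_toOrderHom,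
    OrderHom.comp_coe]
  show (joinPt u).toOrderHom ((botIncl x).toOrderHom i)
      = (botIncl y).toOrderHom (u.toOrderHom i)
  have hlt : ((botIncl x).toOrderHom i : ℕ) < x.len + 1 := by
    show ((Fin.castSucc i : Fin (x.len + 2)) : ℕ) < x.len + 1
    simpa using i.isLt
  rw [joinPt_apply_of_lt _ _ hlt]
  have e : (⟨((botIncl x).toOrderHom i : ℕ), hlt⟩ : Fin (x.len + 1)) = i := Fin.ext rfl
  rw [e]
  rfl

lemma lastVtx_joinPt {x y : SimplexCategory} (u : x ⟶ y) :
    lastVtx x ≫ joinPt u = lastVtx y := by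
  apply SimplexCategory.Hom.ext
  apply OrderHom.ext
  funext i
  rw [SimplexCategory.comp_toOrderHom, OrderHom.comp_coe]
  show (joinPt u).toOrderHom ((lastVtx x).toOrderHom i) = (lastVtx y).toOrderHom i
  have hge : ¬ (((lastVtx x).toOrderHom i : ℕ) < x.len + 1) := by
    show ¬ (((Fin.last (x.len + 1) : Fin (x.len + 2)) : ℕ) < x.len + 1)
    simp
  rw [joinPt_apply_of_ge _ _ hge]
  rfl

lemma toZero_unique {x : SimplexCategory} (f g : x ⟶ ⦋0⦌) : f = g := by
  apply SimplexCategory.Hom.ext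
  apply OrderHom.ext
  funext i
  have h1 := (f.toOrderHom i).isLt
  have h2 := (g.toOrderHom i).isLt
  simp only [SimplexCategory.len_mk] at h1 h2
  exact Fin.ext (by omega)

/-- The mapping space `Hom_C(X,Y)`: its `k`-simplices are the `(k+1)`-simplices of `C`
whose face opposite the final vertex is the totally degenerate `k`-simplex at `X` and whose
final vertex is `Y`, with faces and degeneracies inherited from `C`. -/
def RightHom (C : SSet.{u}) (X Y : C _⦋0⦌) : SSet.{u} where
  obj a := { σ : C.obj (op ⦋a.unop.len + 1⦌) //
      C.map (botIncl a.unop).op σ = C.map (SimplexCategory.const a.unop ⦋0⦌ 0).op X ∧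
      C.map (lastVtx a.unop).op σ = Y }
  map {a b} f := ↾fun σ => ⟨C.map (joinPt f.unop).op σ.1, by
    constructor
    · rw [← FunctorToTypes.map_comp_apply, ← op_comp, botIncl_joinPt, op_comp,
        FunctorToTypes.map_comp_apply, σ.2.1, ← FunctorToTypes.map_comp_apply, ← op_comp,
        toZero_unique (f.unop ≫ SimplexCategory.const a.unop ⦋0⦌ 0)
          (SimplexCategory.const b.unop ⦋0⦌ 0)]
    · rw [← FunctorToTypes.map_comp_apply, ← op_comp, lastVtx_joinPt]
      exact σ.2.2⟩
  map_id a := by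
    refine ConcreteCategory.hom_ext _ _ fun σ => ?_
    apply Subtype.ext
    show C.map (joinPt (𝟙 a).unop).op σ.1 = σ.1
    rw [unop_id, joinPt_id, op_id, FunctorToTypes.map_id_apply]
  map_comp {a b c} f g := by
    refine ConcreteCategory.hom_ext _ _ fun σ => ?_
    apply Subtype.ext
    show C.map (joinPt (f ≫ g).unop).op σ.1 = C.map (joinPt g.unop).op (C.map (joinPt f.unop).op σ.1)
    rw [unop_comp, joinPt_comp, op_comp, FunctorToTypes.map_comp_apply]


/-- Extend a morphism of `SimplexCategory` by one extra bottom vertex on each side,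
sending the new bottom vertex to the new bottom vertex. -/
def joinPtL {x y : SimplexCategory} (u : x ⟶ y) :
    (⦋x.len + 1⦌ : SimplexCategory) ⟶ ⦋y.len + 1⦌ :=
  SimplexCategory.mkHom
    { toFun := fun i =>
        if _ : (i : ℕ) = 0 then 0
        else (u.toOrderHom ⟨(i : ℕ) - 1, by have := i.isLt; omega⟩).succ
      monotone' := by
        intro i j hij
        have hij' : (i : ℕ) ≤ j := hij
        dsimp only
        split_ifs with hi hj hj
        · exact le_rfl
        · exact Fin.zero_le _
        · omega
        · exact Fin.succ_le_succ_iff.mpr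
            (u.toOrderHom.monotone (show ((i : ℕ) - 1) ≤ ((j : ℕ) - 1) by omega)) }

lemma joinPtL_apply_zero {x y : SimplexCategory} (u : x ⟶ y) (i : Fin (x.len + 2))
    (h : (i : ℕ) = 0) : (joinPtL u).toOrderHom i = 0 :=
  dif_pos h

lemma joinPtL_apply_pos {x y : SimplexCategory} (u : x ⟶ y) (i : Fin (x.len + 2))
    (h : ¬ (i : ℕ) = 0) :
    (joinPtL u).toOrderHom i
      = (u.toOrderHom ⟨(i : ℕ) - 1, by have := i.isLt; omega⟩).succ :=
  dif_neg h

lemma joinPtL_id (x : SimplexCategory) :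
    joinPtL (𝟙 x) = 𝟙 (⦋x.len + 1⦌ : SimplexCategory) := by
  apply SimplexCategory.Hom.ext
  apply OrderHom.ext
  funext i
  by_cases h : (i : ℕ) = 0
  · rw [joinPtL_apply_zero _ i h]
    exact Fin.ext (by simp [h])
  · rw [joinPtL_apply_pos _ i h]
    refine Fin.ext ?_
    show ((i : ℕ) - 1) + 1 = _
    simp only [SimplexCategory.id_toOrderHom, OrderHom.id_coe, id_eq]
    omega

lemma joinPtL_comp {x y z : SimplexCategory} (u : x ⟶ y) (v : y ⟶ z) :
    joinPtL (u ≫ v) = joinPtL u ≫ joinPtL v := by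
  apply SimplexCategory.Hom.ext
  apply OrderHom.ext
  funext i
  rw [SimplexCategory.comp_toOrderHom, OrderHom.comp_coe]
  show (joinPtL (u ≫ v)).toOrderHom i = (joinPtL v).toOrderHom ((joinPtL u).toOrderHom i)
  by_cases h : (i : ℕ) = 0
  · rw [joinPtL_apply_zero (u ≫ v) i h, joinPtL_apply_zero u i h,
      joinPtL_apply_zero v _ rfl]
  · rw [joinPtL_apply_pos (u ≫ v) i h, joinPtL_apply_pos u i h,
      joinPtL_apply_pos v _ (by simp)]
    rw [SimplexCategory.comp_toOrderHom, OrderHom.comp_coe]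
    rfl

/-- The inclusion of `x` into `[x.len + 1]` as the final segment
(the face opposite the initial vertex). -/
def topIncl (x : SimplexCategory) : x ⟶ ⦋x.len + 1⦌ :=
  SimplexCategory.Hom.mk
    { toFun := Fin.succ
      monotone' := fun _ _ h => Fin.succ_le_succ_iff.mpr h }

/-- The initial vertex of `[x.len + 1]`. -/
def zeroVtx (x : SimplexCategory) : (⦋0⦌ : SimplexCategory) ⟶ ⦋x.len + 1⦌ :=
  SimplexCategory.const ⦋0⦌ ⦋x.len + 1⦌ 0

lemma topIncl_joinPtL {x y : SimplexCategory} (u : x ⟶ y) :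
    topIncl x ≫ joinPtL u = u ≫ topIncl y := by
  apply SimplexCategory.Hom.ext
  apply OrderHom.ext
  funext i
  rw [SimplexCategory.comp_toOrderHom, OrderHom.comp_coe, SimplexCategory.comp_toOrderHom,
    OrderHom.comp_coe]
  show (joinPtL u).toOrderHom ((topIncl x).toOrderHom i)
      = (topIncl y).toOrderHom (u.toOrderHom i)
  have hne : ¬ (((topIncl x).toOrderHom i : ℕ) = 0) := by
    show ¬ ((Fin.succ i : Fin (x.len + 2)) : ℕ) = 0
    simp
  rw [joinPtL_apply_pos _ _ hne]
  have e : (⟨(((topIncl x).toOrderHom i : ℕ)) - 1, by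
      have hlt := ((topIncl x).toOrderHom i).isLt
      simp only [SimplexCategory.len_mk] at hlt
      omega⟩ : Fin (x.len + 1)) = i := by
    refine Fin.ext ?_
    show ((Fin.succ i : Fin (x.len + 2)) : ℕ) - 1 = (i : ℕ)
    simp
  rw [e]
  rfl

lemma zeroVtx_joinPtL {x y : SimplexCategory} (u : x ⟶ y) :
    zeroVtx x ≫ joinPtL u = zeroVtx y := by
  apply SimplexCategory.Hom.ext
  apply OrderHom.ext
  funext i
  rw [SimplexCategory.comp_toOrderHom, OrderHom.comp_coe]
  show (joinPtL u).toOrderHom ((zeroVtx x).toOrderHom i) = (zeroVtx y).toOrderHom i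
  rw [joinPtL_apply_zero _ _ rfl]
  rfl

/-- The mapping space `Hom^L_C(X,Y)`: its `k`-simplices are the `(k+1)`-simplices of `C`
whose `0`-th vertex is `X` and whose face opposite the `0`-th vertex is the totally
degenerate `k`-simplex at `Y`, with faces and degeneracies inherited from `C`. -/
def LeftHom (C : SSet.{u}) (X Y : C _⦋0⦌) : SSet.{u} where
  obj a := { σ : C.obj (op ⦋a.unop.len + 1⦌) //
      C.map (zeroVtx a.unop).op σ = X ∧
      C.map (topIncl a.unop).op σ = C.map (SimplexCategory.const a.unop ⦋0⦌ 0).op Y }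
  map {a b} f := ↾fun σ => ⟨C.map (joinPtL f.unop).op σ.1, by
    constructor
    · rw [← FunctorToTypes.map_comp_apply, ← op_comp, zeroVtx_joinPtL]
      exact σ.2.1
    · rw [← FunctorToTypes.map_comp_apply, ← op_comp, topIncl_joinPtL, op_comp,
        FunctorToTypes.map_comp_apply, σ.2.2, ← FunctorToTypes.map_comp_apply, ← op_comp,
        toZero_unique (f.unop ≫ SimplexCategory.const a.unop ⦋0⦌ 0)
          (SimplexCategory.const b.unop ⦋0⦌ 0)]⟩
  map_id a := by
    refine ConcreteCategory.hom_ext _ _ fun σ => ?_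
    apply Subtype.ext
    show C.map (joinPtL (𝟙 a).unop).op σ.1 = σ.1
    rw [unop_id, joinPtL_id, op_id, FunctorToTypes.map_id_apply]
  map_comp {a b c} f g := by
    refine ConcreteCategory.hom_ext _ _ fun σ => ?_
    apply Subtype.ext
    show C.map (joinPtL (f ≫ g).unop).op σ.1
        = C.map (joinPtL g.unop).op (C.map (joinPtL f.unop).op σ.1)
    rw [unop_comp, joinPtL_comp, op_comp, FunctorToTypes.map_comp_apply]

/-- The constant map at a vertex `i` of `Δ[1]`. -/
def constVertexMap (A : SSet.{0}) (i : Fin 2) : A ⟶ (Δ[1] : SSet) where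
  app m := ↾fun _ => SSet.stdSimplex.const 1 i m
  naturality _ _ _ := rfl

/-- The inclusion `A ≅ {i} × A ⟶ Δ[1] × A` at a vertex `i` of `Δ[1]`. -/
noncomputable def atVertex (A : SSet.{0}) (i : Fin 2) :
    A ⟶ MonoidalCategory.tensorObj (Δ[1] : SSet) A :=
  CartesianMonoidalCategory.lift (constVertexMap A i) (𝟙 A)

/-- An elementary homotopy between maps of simplicial sets: a map `H : Δ[1] × A ⟶ B`
restricting to `f` on `{0} × A` and to `g` on `{1} × A`. -/
def ElemHomotopic {A B : SSet.{0}} (f g : A ⟶ B) : Prop :=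
  ∃ H : MonoidalCategory.tensorObj (Δ[1] : SSet) A ⟶ B,
    atVertex A 0 ≫ H = f ∧ atVertex A 1 ≫ H = g

/-- Two maps of simplicial sets are homotopic if they are related by the equivalence
relation generated by elementary homotopies. -/
def Homotopic {A B : SSet.{0}} (f g : A ⟶ B) : Prop :=
  Relation.EqvGen ElemHomotopic f g

/-- A map of simplicial sets is a homotopy equivalence if it admits an inverse up to
homotopy. -/
def IsHomotopyEquivalence {A B : SSet.{0}} (f : A ⟶ B) : Prop :=
  ∃ g : B ⟶ A, Homotopic (f ≫ g) (𝟙 A) ∧ Homotopic (g ≫ f) (𝟙 B)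

end SSetPaper


namespace SSetAux

/-- vertices of a simplex -/
def vs {N m : ℕ} (g : Δ[N] _⦋m⦌) : Finset (Fin (N+1)) := Finset.univ.image (fun i => g i)

lemma vs_card {N m : ℕ} (g : Δ[N] _⦋m⦌) (hg : StrictMono (fun i => g i)) : (vs g).card = m + 1 := by
  rw [vs, Finset.card_image_of_injective _ hg.injective]; simp

lemma vs_δ {N m : ℕ} (g : Δ[N] _⦋m+1⦌) (hg : StrictMono (fun i => g i)) (i : Fin (m+2)) :
    vs (SimplicialObject.δ (Δ[N] : SSet.{0}) i g) = (vs g).erase (g i) := by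
  ext v
  simp only [vs, Finset.mem_image, Finset.mem_univ, true_and, Finset.mem_erase]
  constructor
  · rintro ⟨j, rfl⟩
    refine ⟨?_, ⟨i.succAbove j, rfl⟩⟩
    exact fun h => Fin.succAbove_ne i j (hg.injective h)
  · rintro ⟨h1, j, rfl⟩
    have : j ≠ i := fun h => h1 (by rw [h])
    obtain ⟨k, rfl⟩ := Fin.exists_succAbove_eq this
    exact ⟨k, rfl⟩

lemma strictMono_ext {N m : ℕ} (g g' : Δ[N] _⦋m⦌) (hg : StrictMono (fun i => g i))
    (hg' : StrictMono (fun i => g' i)) (h : vs g = vs g') : g = g' := by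
  have h1 := Finset.orderEmbOfFin_unique (s := vs g) (vs_card g hg)
    (f := fun i => g i) (fun x => by simp [vs]) hg
  have h2 := Finset.orderEmbOfFin_unique (s := vs g) (vs_card g hg)
    (f := fun i => g' i) (fun x => by rw [h]; simp [vs]) hg'
  apply SSet.stdSimplex.ext
  intro i
  exact congrFun (h1.trans h2.symm) i

lemma smk_eq {N m m' : ℕ} (g : Δ[N] _⦋m⦌) (g' : Δ[N] _⦋m'⦌) (hg : StrictMono (fun i => g i))
    (hg' : StrictMono (fun i => g' i)) (h : vs g = vs g') : SSet.S.mk g = SSet.S.mk g' := by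
  have e : m = m' := by
    have := vs_card g hg
    rw [h, vs_card g' hg'] at this
    omega
  subst e
  rw [strictMono_ext g g' hg hg' h]

lemma vs_eq_of_smk {N m m' : ℕ} (g : Δ[N] _⦋m⦌) (g' : Δ[N] _⦋m'⦌)
    (h : SSet.S.mk g = SSet.S.mk g') : vs g = vs g' :=
  congrArg (fun s : SSet.S Δ[N] => vs s.simplex) h

lemma exists_simplex {N m : ℕ} (F : Finset (Fin (N+1))) (hF : F.card = m + 1) :
    ∃ g : Δ[N] _⦋m⦌, StrictMono (fun i => g i) ∧ vs g = F := by
  refine ⟨SSet.stdSimplex.objMk (F.orderEmbOfFin hF).toOrderHom, ?_, ?_⟩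
  · exact (F.orderEmbOfFin hF).strictMono
  · ext v
    have := Finset.range_orderEmbOfFin F hF
    have h2 : v ∈ Set.range (F.orderEmbOfFin hF) ↔ v ∈ F := by rw [this]; simp
    rw [← h2]
    simp only [vs, Finset.mem_image, Finset.mem_univ, true_and, Set.mem_range]
    rfl

/-- data for a toggling argument -/
structure Toggle {N : ℕ} (A : (Δ[N] : SSet.{0}).Subcomplex) where
  Mis : Finset (Fin (N+1)) → Prop
  t : Finset (Fin (N+1)) → Fin (N+1)
  r : Finset (Fin (N+1)) → ℕ
  mem : ∀ {m : ℕ} (g : (Δ[N] : SSet.{0}) _⦋m⦌), g ∉ A.obj _ ↔ Mis (vs g)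
  ins : ∀ F, Mis F → Mis (insert (t F) F) ∧ t (insert (t F) F) = t F
  era : ∀ F, Mis F → Mis (F.erase (t F)) ∧ t (F.erase (t F)) = t F
  lo : ∀ F, Mis F → ∃ a ∈ F, a < t F
  hi : ∀ F, Mis F → ∃ a ∈ F, t F < a
  rk : ∀ F v, Mis F → t F ∈ F → v ∈ F → v ≠ t F → Mis (F.erase v) →
    t (F.erase v) ∉ F.erase v → r (F.erase v) < r (F.erase (t F))

namespace Toggle
variable {N : ℕ} {A : (Δ[N] : SSet.{0}).Subcomplex} (T : Toggle A)

abbrev Ix := {F : Finset (Fin (N+1)) // T.Mis F ∧ T.t F ∈ F}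

lemma card_eq (F : T.Ix) : F.1.card = (F.1.card - 2) + 1 + 1 := by
  obtain ⟨a, ha, h⟩ := T.lo F.1 F.2.1
  have : 1 < F.1.card := Finset.one_lt_card.2 ⟨a, ha, _, F.2.2, h.ne⟩
  omega

noncomputable def sx (F : T.Ix) : (Δ[N] : SSet.{0}) _⦋(F.1.card - 2) + 1⦌ :=
  (exists_simplex F.1 (T.card_eq F)).choose

lemma sx_mono (F : T.Ix) : StrictMono (fun i => T.sx F i) :=
  (exists_simplex F.1 (T.card_eq F)).choose_spec.1

lemma vs_sx (F : T.Ix) : vs (T.sx F) = F.1 :=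
  (exists_simplex F.1 (T.card_eq F)).choose_spec.2

lemma exists_idx (F : T.Ix) {a : Fin (N+1)} (ha : a ∈ F.1) : ∃ i, T.sx F i = a := by
  have := ha
  rw [← T.vs_sx F] at this
  simpa [vs] using this

noncomputable def ix (F : T.Ix) : Fin ((F.1.card - 2) + 2) := (T.exists_idx F F.2.2).choose

lemma sx_ix (F : T.Ix) : T.sx F (T.ix F) = T.t F.1 := (T.exists_idx F F.2.2).choose_spec

lemma δ_mono (F : T.Ix) : StrictMono (fun i => SimplicialObject.δ (Δ[N] : SSet.{0}) (T.ix F) (T.sx F) i) :=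
  (T.sx_mono F).comp (Fin.strictMono_succAbove _)

lemma vs_δ_sx (F : T.Ix) : vs (SimplicialObject.δ (Δ[N] : SSet.{0}) (T.ix F) (T.sx F)) = F.1.erase (T.t F.1) := by
  rw [vs_δ _ (T.sx_mono F), vs_sx, sx_ix]

lemma erase_inj {F G : T.Ix} (h : F.1.erase (T.t F.1) = G.1.erase (T.t G.1)) : F = G := by
  have h1 := (T.era F.1 F.2.1).2
  have h2 := (T.era G.1 G.2.1).2
  rw [h, h2] at h1
  apply Subtype.ext
  rw [← Finset.insert_erase F.2.2, ← Finset.insert_erase G.2.2, h, h1]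

noncomputable def core : A.PairingCore where
  ι := T.Ix
  dim F := F.1.card - 2
  simplex F := T.sx F
  index F := T.ix F
  nonDegenerate₁ F := SSet.stdSimplex.mem_nonDegenerate_iff_strictMono _ |>.2 (T.sx_mono F)
  nonDegenerate₂ F := SSet.stdSimplex.mem_nonDegenerate_iff_strictMono _ |>.2 (T.δ_mono F)
  notMem₁ F := (T.mem _).2 (by rw [vs_sx]; exact F.2.1)
  notMem₂ F := (T.mem _).2 (by rw [vs_δ_sx]; exact (T.era _ F.2.1).1)
  injective_type₁' {F G} h := by
    have := vs_eq_of_smk _ _ h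
    rw [vs_sx, vs_sx] at this
    exact Subtype.ext this
  injective_type₂' {F G} h := by
    have := vs_eq_of_smk _ _ h
    rw [vs_δ_sx, vs_δ_sx] at this
    exact T.erase_inj this
  type₁_ne_type₂' F G h := by
    have := vs_eq_of_smk _ _ h
    rw [vs_sx, vs_δ_sx] at this
    have h1 := F.2.2
    rw [this, (T.era _ G.2.1).2] at h1
    simp at h1
  surjective' x := by
    obtain ⟨m, g, hg, hg', rfl⟩ := x.mk_surjective
    have hg := SSet.stdSimplex.mem_nonDegenerate_iff_strictMono _ |>.1 hg
    have hM := (T.mem g).1 hg'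
    by_cases ht : T.t (vs g) ∈ vs g
    · exact ⟨⟨vs g, hM, ht⟩, Or.inl (smk_eq _ _ hg (T.sx_mono _) (by rw [vs_sx]))⟩
    · have hi := T.ins _ hM
      refine ⟨⟨insert (T.t (vs g)) (vs g), hi.1, ?_⟩, Or.inr (smk_eq _ _ hg (T.δ_mono _) ?_)⟩
      · rw [hi.2]; simp
      · rw [vs_δ_sx]
        change vs g = (insert (T.t (vs g)) (vs g)).erase (T.t (insert (T.t (vs g)) (vs g)))
        rw [hi.2, Finset.erase_insert ht]

instance : T.core.IsInner where
  ne_zero F h := by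
    obtain ⟨a, ha, hlt⟩ := T.lo _ F.2.1
    obtain ⟨i, rfl⟩ := T.exists_idx F ha
    rw [← T.sx_ix F] at hlt
    have h2 := (T.sx_mono F).lt_iff_lt.1 hlt
    change T.ix F = 0 at h
    rw [h] at h2
    exact absurd h2 (by simp)
  ne_last F h := by
    obtain ⟨a, ha, hlt⟩ := T.hi _ F.2.1
    obtain ⟨i, rfl⟩ := T.exists_idx F ha
    rw [← T.sx_ix F] at hlt
    have h2 := (T.sx_mono F).lt_iff_lt.1 hlt
    change T.ix F = Fin.last _ at h
    rw [h] at h2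
    exact absurd h2 (by simpa using Fin.le_last _)

lemma vs_subset_of_le {m m' : ℕ} (g : (Δ[N] : SSet.{0}) _⦋m⦌) (g' : (Δ[N] : SSet.{0}) _⦋m'⦌)
    (h : SSet.S.mk g ≤ SSet.S.mk g') : vs g ⊆ vs g' := by
  obtain ⟨f, hf⟩ := SSet.S.le_iff.1 h
  change (Δ[N] : SSet.{0}).map f.op g' = g at hf
  intro v hv
  rw [← hf] at hv
  simp only [vs, Finset.mem_image, Finset.mem_univ, true_and] at hv ⊢
  obtain ⟨i, rfl⟩ := hv
  exact ⟨f i, rfl⟩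

lemma wrank_lt (F G : T.Ix) (h : T.core.AncestralRel F G) (hd : T.core.dim F = T.core.dim G) :
    T.r (F.1.erase (T.t F.1)) < T.r (G.1.erase (T.t G.1)) := by
    obtain ⟨hne, hlt⟩ := h
    have hsub : F.1.erase (T.t F.1) ⊆ G.1 := by
      have := vs_subset_of_le _ _ hlt.le
      rw [← T.vs_δ_sx, ← T.vs_sx G]
      exact this
    change F.1.card - 2 = G.1.card - 2 at hd
    have hc := T.card_eq F
    have hc' := T.card_eq G
    have hce := Finset.card_erase_of_mem F.2.2
    obtain ⟨v, hv, hve⟩ : ∃ v ∈ G.1, F.1.erase (T.t F.1) = G.1.erase v := by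
      have : (G.1 \ F.1.erase (T.t F.1)).card = 1 := by
        rw [Finset.card_sdiff_of_subset hsub]; omega
      obtain ⟨v, hv⟩ := Finset.card_eq_one.1 this
      have hvG : v ∈ G.1 ∧ v ∉ F.1.erase (T.t F.1) := by
        rw [← Finset.mem_sdiff, hv]; simp
      refine ⟨v, hvG.1, Finset.eq_of_subset_of_card_le ?_ ?_⟩
      · exact fun a ha => Finset.mem_erase.2 ⟨fun h => hvG.2 (h ▸ ha), hsub ha⟩
      · rw [Finset.card_erase_of_mem hvG.1]; omega
    have hvt : v ≠ T.t G.1 := by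
      rintro rfl
      exact hne (T.erase_inj hve)
    have := T.rk G.1 v G.2.1 G.2.2 hv hvt (by rw [← hve]; exact (T.era _ F.2.1).1)
      (by rw [← hve, (T.era _ F.2.1).2]; simp)
    rw [hve]
    exact this

noncomputable def wrank : T.core.WeakRankFunction ℕ where
  rank F := T.r (Finset.erase (Subtype.val (show T.Ix from F)) (T.t (Subtype.val (show T.Ix from F))))
  lt {F G} h hd := T.wrank_lt F G h hd

theorem innerAnodyne {N : ℕ} {A : (Δ[N] : SSet.{0}).Subcomplex} (T : Toggle A) : SSet.innerAnodyneExtensions A.ι := by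
  have : T.core.IsRegular := T.wrank.isRegular
  exact T.core.pairing.innerAnodyneExtensions

end Toggle
end SSetAux


namespace SSetAux
section
variable {N n : ℕ} (P O : Fin (n+1) → Fin (N+1)) (z : Fin (N+1))

def PMis (F : Finset (Fin (N+1))) : Prop :=
  z ∈ F ∧ (∃ i, P i ∈ F) ∧ ∀ i, P i ∈ F ∨ O i ∈ F

open Classical in
noncomputable def mu (F : Finset (Fin (N+1))) : Fin (n+1) :=
  if h : (Finset.univ.filter (fun i => P i ∈ F)).Nonempty then Finset.min' _ h else 0

variable {P}
lemma mu_eq {F : Finset (Fin (N+1))} {i : Fin (n+1)} (hi : P i ∈ F) (h : ∀ j, P j ∈ F → i ≤ j) :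
    mu P F = i := by
  have hn : (Finset.univ.filter (fun i => P i ∈ F)).Nonempty := ⟨i, by simpa⟩
  rw [mu, dif_pos hn]
  apply le_antisymm
  · exact Finset.min'_le _ _ (by simpa)
  · apply Finset.le_min'
    intro j hj
    exact h j (by simpa using hj)

lemma mu_spec {F : Finset (Fin (N+1))} (h : ∃ i, P i ∈ F) :
    P (mu P F) ∈ F ∧ ∀ j, P j ∈ F → mu P F ≤ j := by
  obtain ⟨i, hi⟩ := h
  have hn : (Finset.univ.filter (fun i => P i ∈ F)).Nonempty := ⟨i, by simpa⟩
  rw [mu, dif_pos hn]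
  constructor
  · simpa using Finset.min'_mem _ hn
  · exact fun j hj => Finset.min'_le _ _ (by simpa)

variable (P)
noncomputable def mkToggle {A : (Δ[N] : SSet.{0}).Subcomplex}
    (hO : Function.Injective O)
    (hord : (∀ i j, P i < O j ∧ O j < z) ∨ (∀ i j, z < O j ∧ O j < P i))
    (mem : ∀ {m : ℕ} (g : (Δ[N] : SSet.{0}) _⦋m⦌), g ∉ A.obj _ ↔ PMis P O z (vs g)) :
    Toggle A :=
  have hPO : ∀ i j, P i ≠ O j := fun i j => by
    rcases hord with h | h
    · exact (h i j).1.ne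
    · exact (h i j).2.ne'
  have hzO : ∀ j, z ≠ O j := fun j => by
    rcases hord with h | h
    · exact (h j j).2.ne'
    · exact (h j j).1.ne
  have e1 : ∀ F, PMis P O z F → mu P (insert (O (mu P F)) F) = mu P F := by
    intro F hF
    obtain ⟨a, b⟩ := mu_spec hF.2.1
    refine mu_eq (by simp [a]) fun j hj => b j ?_
    rw [Finset.mem_insert] at hj
    exact hj.resolve_left (hPO _ _)
  have e2 : ∀ F, PMis P O z F → mu P (F.erase (O (mu P F))) = mu P F := by
    intro F hF
    obtain ⟨a, b⟩ := mu_spec hF.2.1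
    refine mu_eq (Finset.mem_erase.2 ⟨hPO _ _, a⟩) fun j hj => b j ?_
    exact (Finset.mem_erase.1 hj).2
  { Mis := PMis P O z
    t := fun F => O (mu P F)
    r := fun F => n - (mu P F : ℕ)
    mem := mem
    ins := fun F hF => ⟨⟨by simp [hF.1], hF.2.1.imp fun i hi => by simp [hi], fun i =>
      (hF.2.2 i).imp (fun h => by simp [h]) (fun h => by simp [h])⟩, by rw [e1 F hF]⟩
    era := fun F hF => by
      refine ⟨⟨Finset.mem_erase.2 ⟨hzO _, hF.1⟩, hF.2.1.imp fun i hi =>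
        Finset.mem_erase.2 ⟨hPO _ _, hi⟩, fun i => ?_⟩, by rw [e2 F hF]⟩
      by_cases h : i = mu P F
      · subst h
        exact Or.inl (Finset.mem_erase.2 ⟨hPO _ _, (mu_spec hF.2.1).1⟩)
      · exact (hF.2.2 i).imp (fun h => Finset.mem_erase.2 ⟨hPO _ _, h⟩)
          (fun h' => Finset.mem_erase.2 ⟨fun e => h (hO e), h'⟩)
    lo := fun F hF => by
      rcases hord with h | h
      · exact ⟨_, (mu_spec hF.2.1).1, (h _ _).1⟩
      · exact ⟨_, hF.1, (h (mu P F) _).1⟩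
    hi := fun F hF => by
      rcases hord with h | h
      · exact ⟨_, hF.1, (h (mu P F) _).2⟩
      · exact ⟨_, (mu_spec hF.2.1).1, (h _ _).2⟩
    rk := fun F v hF ht hv hvt hFv hnot => by
      rw [e2 F hF]
      obtain ⟨a, b⟩ := mu_spec hF.2.1
      obtain ⟨a', b'⟩ := mu_spec hFv.2.1
      have h1 := b _ (Finset.mem_erase.1 a').2
      have h2 : mu P F ≠ mu P (F.erase v) := by
        intro h
        rw [← h] at hnot
        exact hnot (Finset.mem_erase.2 ⟨hvt.symm, ht⟩)
      have h3 := lt_of_le_of_ne h1 h2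
      have := (mu P (F.erase v)).isLt
      have h4 : (mu P F : ℕ) < mu P (F.erase v) := h3
      omega }
end
end SSetAux


namespace SSetAux
open SSetPaper

/-- totally degenerate simplex -/
def cst (C : SSet.{0}) (X : C _⦋0⦌) (m : SimplexCategory) : C.obj (op m) :=
  C.map (SimplexCategory.const m ⦋0⦌ 0).op X

lemma map_cst (C : SSet.{0}) (X : C _⦋0⦌) {m m' : SimplexCategory} (f : m' ⟶ m) :
    C.map f.op (cst C X m) = cst C X m' := by
  unfold cst
  rw [← FunctorToTypes.map_comp_apply, ← op_comp]
  rfl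

lemma map_map (C : SSet.{0}) {a b c : SimplexCategory} (f : a ⟶ b) (g : b ⟶ c) (s : C.obj (op c)) :
    C.map f.op (C.map g.op s) = C.map (f ≫ g).op s := by
  rw [← FunctorToTypes.map_comp_apply, ← op_comp]

/-- A cosimplicial coloured simplex -/
structure Shape where
  Q : SimplexCategory ⥤ SimplexCategory
  col : ∀ k, Q.obj k ⟶ ⦋1⦌
  nat : ∀ {k l : SimplexCategory} (α : k ⟶ l), Q.map α ≫ col l = col k

def Good (S : Shape) (C : SSet.{0}) (X Y : C _⦋0⦌) (k : SimplexCategory)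
    (σ : C.obj (op (S.Q.obj k))) : Prop :=
  ∀ (m : SimplexCategory) (θ : m ⟶ S.Q.obj k),
    (θ ≫ S.col k = SimplexCategory.const m ⦋1⦌ 0 → C.map θ.op σ = cst C X m) ∧
    (θ ≫ S.col k = SimplexCategory.const m ⦋1⦌ 1 → C.map θ.op σ = cst C Y m)

lemma Good.map {S S' : Shape} {C : SSet.{0}} {X Y : C _⦋0⦌} {k k' : SimplexCategory}
    (f : S'.Q.obj k' ⟶ S.Q.obj k) (hf : f ≫ S.col k = S'.col k')
    {σ : C.obj (op (S.Q.obj k))} (h : Good S C X Y k σ) : Good S' C X Y k' (C.map f.op σ) := by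
  intro m θ
  rw [map_map]
  constructor
  · intro e
    exact (h m (θ ≫ f)).1 (by rw [Category.assoc, hf, e])
  · intro e
    exact (h m (θ ≫ f)).2 (by rw [Category.assoc, hf, e])

def Mp (S : Shape) (C : SSet.{0}) (X Y : C _⦋0⦌) : SSet.{0} where
  obj k := {σ : C.obj (op (S.Q.obj k.unop)) // Good S C X Y k.unop σ}
  map {a b} f := ↾fun σ => ⟨C.map (S.Q.map f.unop).op σ.1, σ.2.map _ (S.nat _)⟩
  map_id a := by
    refine ConcreteCategory.hom_ext _ _ fun σ => ?_
    apply Subtype.ext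
    show C.map (S.Q.map (𝟙 a).unop).op σ.1 = σ.1
    rw [unop_id, S.Q.map_id, op_id, FunctorToTypes.map_id_apply]
  map_comp {a b c} f g := by
    refine ConcreteCategory.hom_ext _ _ fun σ => ?_
    apply Subtype.ext
    show C.map (S.Q.map (f ≫ g).unop).op σ.1
      = C.map (S.Q.map g.unop).op (C.map (S.Q.map f.unop).op σ.1)
    rw [unop_comp, S.Q.map_comp, op_comp, FunctorToTypes.map_comp_apply]

lemma Mp_map_val (S : Shape) (C : SSet.{0}) (X Y : C _⦋0⦌) {a b : SimplexCategory} (f : a ⟶ b)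
    (σ : (Mp S C X Y).obj (op b)) :
    ((Mp S C X Y).map f.op σ).1 = C.map (S.Q.map f).op σ.1 := rfl

/-- Morphisms of shapes -/
@[ext]
structure SHom (S' S : Shape) where
  app : ∀ k, S'.Q.obj k ⟶ S.Q.obj k
  nat : ∀ {k l : SimplexCategory} (α : k ⟶ l), S'.Q.map α ≫ app l = app k ≫ S.Q.map α
  col : ∀ k, app k ≫ S.col k = S'.col k

def SHom.comp {S S' S'' : Shape} (f : SHom S S') (g : SHom S' S'') : SHom S S'' where
  app k := f.app k ≫ g.app k
  nat α := by rw [← Category.assoc, f.nat, Category.assoc, g.nat, Category.assoc]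
  col k := by rw [Category.assoc, g.col, f.col]

def SHom.id (S : Shape) : SHom S S where
  app k := 𝟙 _
  nat α := by simp
  col k := by simp

def SHom.ind {S' S : Shape} (f : SHom S' S) (C : SSet.{0}) (X Y : C _⦋0⦌) :
    Mp S C X Y ⟶ Mp S' C X Y where
  app k := ↾fun σ => ⟨C.map (f.app k.unop).op σ.1, σ.2.map _ (f.col _)⟩
  naturality a b g := by
    refine ConcreteCategory.hom_ext _ _ fun σ => ?_
    apply Subtype.ext
    show C.map (f.app _).op (C.map (S.Q.map g.unop).op σ.1)
      = C.map (S'.Q.map g.unop).op (C.map (f.app _).op σ.1)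
    rw [map_map, map_map, f.nat]

lemma SHom.ind_val {S' S : Shape} (f : SHom S' S) (C : SSet.{0}) (X Y : C _⦋0⦌)
   {k : SimplexCategory} (σ : (Mp S C X Y).obj (op k)) :
   ((f.ind C X Y).app (op k) σ).1 = C.map (f.app k).op σ.1 := rfl

lemma SHom.ind_comp {S S' S'' : Shape} (f : SHom S S') (g : SHom S' S'') (C : SSet.{0})
    (X Y : C _⦋0⦌) : (f.comp g).ind C X Y = g.ind C X Y ≫ f.ind C X Y := by
  apply NatTrans.ext
  funext k
  refine ConcreteCategory.hom_ext _ _ fun σ => ?_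
  apply Subtype.ext
  show C.map (f.app _ ≫ g.app _).op σ.1 = C.map (f.app _).op (C.map (g.app _).op σ.1)
  rw [map_map]

lemma SHom.ind_id (S : Shape) (C : SSet.{0})
    (X Y : C _⦋0⦌) : (SHom.id S).ind C X Y = 𝟙 _ := by
  apply NatTrans.ext
  funext k
  refine ConcreteCategory.hom_ext _ _ fun σ => ?_
  apply Subtype.ext
  show C.map (𝟙 _).op σ.1 = σ.1
  rw [op_id, FunctorToTypes.map_id_apply]

/-- homotopies of shape morphisms -/
structure SHtpy {S' S : Shape} (f g : SHom S' S) where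
  app : ∀ k, (k ⟶ ⦋1⦌) → (S'.Q.obj k ⟶ S.Q.obj k)
  nat : ∀ {k l : SimplexCategory} (α : k ⟶ l) (φ : l ⟶ ⦋1⦌),
    S'.Q.map α ≫ app l φ = app k (α ≫ φ) ≫ S.Q.map α
  col : ∀ k φ, app k φ ≫ S.col k = S'.col k
  zero : ∀ k, app k (SimplexCategory.const k ⦋1⦌ 0) = f.app k
  one : ∀ k, app k (SimplexCategory.const k ⦋1⦌ 1) = g.app k

def SHtpy.ind {S' S : Shape} {f g : SHom S' S} (h : SHtpy f g) (C : SSet.{0}) (X Y : C _⦋0⦌) :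
    MonoidalCategory.tensorObj (Δ[1] : SSet) (Mp S C X Y) ⟶ Mp S' C X Y where
  app k := ↾fun p => ⟨C.map (h.app k.unop (SSet.stdSimplex.objEquiv p.1)).op p.2.1,
    p.2.2.map _ (h.col _ _)⟩
  naturality a b u := by
    refine ConcreteCategory.hom_ext _ _ fun σ => ?_
    apply Subtype.ext
    show C.map (h.app _ (u.unop ≫ SSet.stdSimplex.objEquiv σ.1)).op
        (C.map (S.Q.map u.unop).op σ.2.1)
      = C.map (S'.Q.map u.unop).op (C.map (h.app _ (SSet.stdSimplex.objEquiv σ.1)).op σ.2.1)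
    rw [map_map, map_map, h.nat]

lemma SHtpy.homotopic {S' S : Shape} {f g : SHom S' S} (h : SHtpy f g) (C : SSet.{0})
    (X Y : C _⦋0⦌) : ElemHomotopic (f.ind C X Y) (g.ind C X Y) := by
  refine ⟨h.ind C X Y, ?_, ?_⟩
  · apply NatTrans.ext
    funext k
    refine ConcreteCategory.hom_ext _ _ fun σ => ?_
    apply Subtype.ext
    show C.map (h.app k.unop (SimplexCategory.const _ _ 0)).op σ.1 = C.map (f.app _).op σ.1
    rw [h.zero]
  · apply NatTrans.ext
    funext k
    refine ConcreteCategory.hom_ext _ _ fun σ => ?_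
    apply Subtype.ext
    show C.map (h.app k.unop (SimplexCategory.const _ _ 1)).op σ.1 = C.map (g.app _).op σ.1
    rw [h.one]

/-! homotopy calculus -/

lemma Homotopic.post {A B D : SSet.{0}} {f g : A ⟶ B} (h : Homotopic f g) (u : B ⟶ D) :
    Homotopic (f ≫ u) (g ≫ u) := by
  induction h with
  | rel f g h =>
    obtain ⟨H, h0, h1⟩ := h
    exact .rel _ _ ⟨H ≫ u, by rw [← Category.assoc, h0], by rw [← Category.assoc, h1]⟩
  | refl f => exact .refl _
  | symm f g _ ih => exact .symm _ _ ih
  | trans f g k _ _ ih1 ih2 => exact .trans _ _ _ ih1 ih2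

lemma atVertex_nat {A B : SSet.{0}} (u : A ⟶ B) (i : Fin 2) :
    atVertex A i ≫ MonoidalCategory.whiskerLeft _ u = u ≫ atVertex B i := by
  unfold atVertex
  rw [CartesianMonoidalCategory.lift_whiskerLeft, CartesianMonoidalCategory.comp_lift]
  simp
  rfl

lemma Homotopic.pre {A B D : SSet.{0}} {f g : B ⟶ D} (h : Homotopic f g) (u : A ⟶ B) :
    Homotopic (u ≫ f) (u ≫ g) := by
  induction h with
  | rel f g h =>
    obtain ⟨H, h0, h1⟩ := h
    exact .rel _ _ ⟨MonoidalCategory.whiskerLeft _ u ≫ H,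
      by rw [← Category.assoc, atVertex_nat, Category.assoc, h0],
      by rw [← Category.assoc, atVertex_nat, Category.assoc, h1]⟩
  | refl f => exact .refl _
  | symm f g _ ih => exact .symm _ _ ih
  | trans f g k _ _ ih1 ih2 => exact .trans _ _ _ ih1 ih2

/-- existence of a homotopy equivalence -/
def HEquiv (A B : SSet.{0}) : Prop := ∃ f : A ⟶ B, IsHomotopyEquivalence f

lemma HEquiv.symm {A B : SSet.{0}} (h : HEquiv A B) : HEquiv B A := by
  obtain ⟨f, g, h1, h2⟩ := h
  exact ⟨g, f, h2, h1⟩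

lemma HEquiv.trans {A B D : SSet.{0}} (h : HEquiv A B) (h' : HEquiv B D) : HEquiv A D := by
  obtain ⟨f, g, h1, h2⟩ := h
  obtain ⟨f', g', h1', h2'⟩ := h'
  refine ⟨f ≫ f', g' ≫ g, ?_, ?_⟩
  · have := Homotopic.pre (Homotopic.post h1' g) f
    rw [Category.id_comp] at this
    have e : (f ≫ f') ≫ g' ≫ g = f ≫ (f' ≫ g') ≫ g := by simp
    rw [e]
    exact .trans _ _ _ this h1
  · have := Homotopic.pre (Homotopic.post h2 f') g'
    rw [Category.id_comp] at this
    have e : (g' ≫ g) ≫ f ≫ f' = g' ≫ (g ≫ f) ≫ f' := by simp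
    rw [e]
    exact .trans _ _ _ this h2'

lemma HEquiv.of_inv {A B : SSet.{0}} (f : A ⟶ B) (g : B ⟶ A) (h : f ≫ g = 𝟙 A) (h' : g ≫ f = 𝟙 B) :
    HEquiv A B :=
  ⟨f, g, by rw [h]; exact .refl _, by rw [h']; exact .refl _⟩

lemma HEquiv.of_shape {S R : Shape} (v : SHom R S) (c : SHom S R)
    (h : v.comp c = SHom.id R)
    (H : Nonempty (SHtpy (SHom.id S) (c.comp v)) ∨ Nonempty (SHtpy (c.comp v) (SHom.id S)))
    (C : SSet.{0}) (X Y : C _⦋0⦌) : HEquiv (Mp S C X Y) (Mp R C X Y) := by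
  refine ⟨v.ind C X Y, c.ind C X Y, ?_, ?_⟩
  · rw [← SHom.ind_comp, ← SHom.ind_id]
    rcases H with ⟨⟨H⟩⟩ | ⟨⟨H⟩⟩
    · exact .symm _ _ (.rel _ _ (H.homotopic C X Y))
    · exact .rel _ _ (H.homotopic C X Y)
  · rw [← SHom.ind_comp, h, SHom.ind_id]
    exact .refl _

end SSetAux


namespace SSetAux
open SSetPaper

lemma const_ne {m : SimplexCategory} :
    SimplexCategory.const m ⦋1⦌ 0 ≠ SimplexCategory.const m ⦋1⦌ 1 := by
  intro h
  have := SimplexCategory.congr_toOrderHom_apply h 0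
  simp at this

/-- non surjective -/
def NS {k l : SimplexCategory} (α : k ⟶ l) : Prop := ¬ Function.Surjective α.toOrderHom

lemma NS.comp {k l m : SimplexCategory} (β : k ⟶ l) {α : l ⟶ m} (h : NS α) : NS (β ≫ α) := by
  intro hs
  apply h
  intro x
  obtain ⟨y, hy⟩ := hs x
  exact ⟨β.toOrderHom y, hy⟩

lemma exists_ret {n : ℕ} (I : Finset (Fin (n+1))) (hI : I.Nonempty) :
    ∃ u : (⦋n⦌ : SimplexCategory) ⟶ ⦋n⦌, (∀ i, u.toOrderHom i ∈ I) ∧ ∀ i ∈ I, u.toOrderHom i = i := by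
  classical
  let f : Fin (n+1) → Fin (n+1) := fun i =>
    if h : (I.filter (· ≤ i)).Nonempty then (I.filter (· ≤ i)).max' h else I.min' hI
  have hf : Monotone f := by
    intro i j hij
    dsimp only [f]
    split_ifs with h1 h2 h2
    · apply Finset.max'_subset
      intro x hx
      simp only [Finset.mem_filter] at hx ⊢
      exact ⟨hx.1, hx.2.trans hij⟩
    · exfalso
      apply h2
      obtain ⟨x, hx⟩ := h1
      simp only [Finset.mem_filter] at hx
      exact ⟨x, by simp only [Finset.mem_filter]; exact ⟨hx.1, hx.2.trans hij⟩⟩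
    · apply Finset.min'_le
      exact (Finset.mem_filter.1 (Finset.max'_mem _ h2)).1
    · exact le_rfl
  refine ⟨SimplexCategory.mkHom ⟨f, hf⟩, ?_, ?_⟩
  · intro i
    change f i ∈ I
    dsimp only [f]
    split_ifs with h
    · exact (Finset.mem_filter.1 (Finset.max'_mem _ h)).1
    · exact Finset.min'_mem _ _
  · intro i hi
    change f i = i
    have h : (I.filter (· ≤ i)).Nonempty := ⟨i, by simp [hi]⟩
    dsimp only [f]
    rw [dif_pos h]
    apply le_antisymm
    · exact (Finset.mem_filter.1 (Finset.max'_mem _ h)).2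
    · exact Finset.le_max' _ _ (by simp [hi])

lemma exists_ret_of_NS {k : SimplexCategory} {n : ℕ} (α : k ⟶ ⦋n⦌) (hα : NS α) :
    ∃ ρ : (⦋n⦌ : SimplexCategory) ⟶ ⦋n⦌, NS ρ ∧ α ≫ ρ = α := by
  classical
  obtain ⟨u, h1, h2⟩ := exists_ret (Finset.univ.image (fun i => α.toOrderHom i))
    ⟨α.toOrderHom 0, by simp⟩
  refine ⟨u, ?_, ?_⟩
  · intro hs
    apply hα
    intro x
    obtain ⟨y, rfl⟩ := hs x
    simpa using h1 y
  · apply SimplexCategory.Hom.ext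
    apply OrderHom.ext
    funext i
    exact h2 _ (by simp)

section
variable {D S : Shape} (ι : SHom D S) (n : ℕ)

/-- membership in the starting subcomplex -/
def InS {m : SimplexCategory} (g : m ⟶ S.Q.obj ⦋n⦌) : Prop :=
  (∃ g' : m ⟶ D.Q.obj ⦋n⦌, g' ≫ ι.app _ = g) ∨
  (g ≫ S.col _ = SimplexCategory.const m ⦋1⦌ 1) ∨
  (g ≫ S.col _ = SimplexCategory.const m ⦋1⦌ 0) ∨
  (∃ ρ : (⦋n⦌ : SimplexCategory) ⟶ ⦋n⦌, NS ρ ∧ g ≫ S.Q.map ρ = g)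

lemma InS.pre {m m' : SimplexCategory} {g : m ⟶ S.Q.obj ⦋n⦌} (h : InS ι n g) (f : m' ⟶ m) :
    InS ι n (f ≫ g) := by
  rcases h with ⟨g', h⟩ | h | h | ⟨ρ, h1, h2⟩
  · exact Or.inl ⟨f ≫ g', by rw [Category.assoc, h]⟩
  · exact Or.inr (Or.inl (by rw [Category.assoc, h]; rfl))
  · exact Or.inr (Or.inr (Or.inl (by rw [Category.assoc, h]; rfl)))
  · exact Or.inr (Or.inr (Or.inr ⟨ρ, h1, by rw [Category.assoc, h2]⟩))

def Ssub : (SSet.stdSimplex.{0}.obj (S.Q.obj ⦋n⦌)).Subcomplex where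
  obj m := {g | InS ι n (SSet.stdSimplex.objEquiv g)}
  map {a b} f g hg := InS.pre ι n hg f.unop

variable {C : SSet.{0}} {X Y : C _⦋0⦌} (δ : (Mp D C X Y).obj (op ⦋n⦌))
  (τ : ∀ (k : SimplexCategory) (α : k ⟶ ⦋n⦌), NS α → (Mp S C X Y).obj (op k))

/-- partial function relation -/
def RelS {m : SimplexCategory} (g : m ⟶ S.Q.obj ⦋n⦌) (s : C.obj (op m)) : Prop :=
  (∃ g' : m ⟶ D.Q.obj ⦋n⦌, g' ≫ ι.app _ = g ∧ C.map g'.op δ.1 = s) ∨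
  (g ≫ S.col _ = SimplexCategory.const m ⦋1⦌ 1 ∧ s = cst C Y m) ∨
  (g ≫ S.col _ = SimplexCategory.const m ⦋1⦌ 0 ∧ s = cst C X m) ∨
  (∃ (ρ : (⦋n⦌ : SimplexCategory) ⟶ ⦋n⦌) (h : NS ρ), g ≫ S.Q.map ρ = g ∧ C.map g.op (τ _ ρ h).1 = s)

lemma RelS.pre {m m' : SimplexCategory} {g : m ⟶ S.Q.obj ⦋n⦌} {s : C.obj (op m)}
    (h : RelS ι n δ τ g s) (f : m' ⟶ m) :
    RelS ι n δ τ (f ≫ g) (C.map f.op s) := by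
  rcases h with ⟨g', h, rfl⟩ | ⟨h, rfl⟩ | ⟨h, rfl⟩ | ⟨ρ, h1, h2, rfl⟩
  · exact Or.inl ⟨f ≫ g', by rw [Category.assoc, h], by rw [map_map]⟩
  · exact Or.inr (Or.inl ⟨by rw [Category.assoc, h]; rfl, map_cst _ _ _⟩)
  · exact Or.inr (Or.inr (Or.inl ⟨by rw [Category.assoc, h]; rfl, map_cst _ _ _⟩))
  · exact Or.inr (Or.inr (Or.inr ⟨ρ, h1, by rw [Category.assoc, h2], by rw [map_map]⟩))

lemma InS.exists_rel {m : SimplexCategory} {g : m ⟶ S.Q.obj ⦋n⦌} (h : InS ι n g) :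
    ∃ s, RelS ι n δ τ g s := by
  rcases h with ⟨g', h⟩ | h | h | ⟨ρ, h1, h2⟩
  · exact ⟨_, Or.inl ⟨g', h, rfl⟩⟩
  · exact ⟨_, Or.inr (Or.inl ⟨h, rfl⟩)⟩
  · exact ⟨_, Or.inr (Or.inr (Or.inl ⟨h, rfl⟩))⟩
  · exact ⟨_, Or.inr (Or.inr (Or.inr ⟨ρ, h1, h2, rfl⟩))⟩

lemma RelS.inS {m : SimplexCategory} {g : m ⟶ S.Q.obj ⦋n⦌} {s : C.obj (op m)}
    (h : RelS ι n δ τ g s) : InS ι n g := by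
  rcases h with ⟨g', h, _⟩ | ⟨h, _⟩ | ⟨h, _⟩ | ⟨ρ, h1, h2, _⟩
  · exact Or.inl ⟨g', h⟩
  · exact Or.inr (Or.inl h)
  · exact Or.inr (Or.inr (Or.inl h))
  · exact Or.inr (Or.inr (Or.inr ⟨ρ, h1, h2⟩))

/-- Condition (K) -/
def CondK (S : Shape) : Prop := ∀ (n : ℕ) (m : SimplexCategory) (g : m ⟶ S.Q.obj ⦋n⦌)
  (ρ ρ' : (⦋n⦌ : SimplexCategory) ⟶ ⦋n⦌), g ≫ S.Q.map ρ = g → g ≫ S.Q.map ρ' = g →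
  (g ≫ S.col _ = SimplexCategory.const m ⦋1⦌ 1) ∨ (g ≫ S.col _ = SimplexCategory.const m ⦋1⦌ 0) ∨
  ∃ u, g ≫ S.Q.map u = g ∧ u ≫ ρ = u ≫ ρ'

variable (hτ : ∀ {k l : SimplexCategory} (β : k ⟶ l) (α : l ⟶ ⦋n⦌) (h : NS α),
    C.map (S.Q.map β).op (τ l α h).1 = (τ k (β ≫ α) (h.comp β)).1)
  (hδ : ∀ {k : SimplexCategory} (α : k ⟶ ⦋n⦌) (h : NS α),
    C.map (ι.app k).op (τ k α h).1 = C.map (D.Q.map α).op δ.1)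
  (hmono : Mono (ι.app ⦋n⦌)) (K : CondK S)

include hτ hδ hmono K

lemma RelS.unique {m : SimplexCategory} {g : m ⟶ S.Q.obj ⦋n⦌} {s s' : C.obj (op m)}
    (h : RelS ι n δ τ g s) (h' : RelS ι n δ τ g s') : s = s' := by
  have h12 : ∀ g' : m ⟶ D.Q.obj ⦋n⦌, g' ≫ ι.app _ = g →
      g ≫ S.col _ = SimplexCategory.const m ⦋1⦌ 1 → C.map g'.op δ.1 = cst C Y m := by
    intro g' e1 e2
    exact (δ.2 m g').2 (by rw [← ι.col, ← Category.assoc, e1, e2])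
  have h13 : ∀ g' : m ⟶ D.Q.obj ⦋n⦌, g' ≫ ι.app _ = g →
      g ≫ S.col _ = SimplexCategory.const m ⦋1⦌ 0 → C.map g'.op δ.1 = cst C X m := by
    intro g' e1 e2
    exact (δ.2 m g').1 (by rw [← ι.col, ← Category.assoc, e1, e2])
  have h14 : ∀ g' : m ⟶ D.Q.obj ⦋n⦌, g' ≫ ι.app _ = g →
      ∀ (ρ : (⦋n⦌ : SimplexCategory) ⟶ ⦋n⦌) (h : NS ρ), g ≫ S.Q.map ρ = g →
      C.map g'.op δ.1 = C.map g.op (τ _ ρ h).1 := by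
    intro g' e1 ρ h e2
    have : g' ≫ D.Q.map ρ = g' := by
      rw [← cancel_mono (ι.app ⦋n⦌), Category.assoc, ι.nat, ← Category.assoc, e1, e2]
    rw [← e1, ← map_map, hδ, map_map, this]
  have h24 : g ≫ S.col _ = SimplexCategory.const m ⦋1⦌ 1 →
      ∀ (ρ : (⦋n⦌ : SimplexCategory) ⟶ ⦋n⦌) (h : NS ρ), C.map g.op (τ _ ρ h).1 = cst C Y m :=
    fun e ρ h => ((τ _ ρ h).2 m g).2 e
  have h34 : g ≫ S.col _ = SimplexCategory.const m ⦋1⦌ 0 →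
      ∀ (ρ : (⦋n⦌ : SimplexCategory) ⟶ ⦋n⦌) (h : NS ρ), C.map g.op (τ _ ρ h).1 = cst C X m :=
    fun e ρ h => ((τ _ ρ h).2 m g).1 e
  have h44 : ∀ (ρ : (⦋n⦌ : SimplexCategory) ⟶ ⦋n⦌) (h : NS ρ), g ≫ S.Q.map ρ = g →
      ∀ (ρ' : (⦋n⦌ : SimplexCategory) ⟶ ⦋n⦌) (h' : NS ρ'), g ≫ S.Q.map ρ' = g →
      C.map g.op (τ _ ρ h).1 = C.map g.op (τ _ ρ' h').1 := by
    intro ρ h e ρ' h' e'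
    rcases K n m g ρ ρ' e e' with k | k | ⟨u, k1, k2⟩
    · rw [h24 k, h24 k]
    · rw [h34 k, h34 k]
    · rw [← k1, ← map_map, ← map_map, hτ, hτ]
      congr 3
  rcases h with ⟨g', h, rfl⟩ | ⟨h, rfl⟩ | ⟨h, rfl⟩ | ⟨ρ, h1, h2, rfl⟩ <;>
  rcases h' with ⟨g'', h', rfl⟩ | ⟨h', rfl⟩ | ⟨h', rfl⟩ | ⟨ρ', h1', h2', rfl⟩
  · have : g' = g'' := by rw [← cancel_mono (ι.app ⦋n⦌), h, h']
    rw [this]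
  · exact h12 _ h h'
  · exact h13 _ h h'
  · exact h14 _ h _ _ h2'
  · exact (h12 _ h' h).symm
  · rfl
  · exact absurd (h'.symm.trans h) const_ne
  · exact (h24 h _ _).symm
  · exact (h13 _ h' h).symm
  · exact absurd (h.symm.trans h') const_ne
  · rfl
  · exact (h34 h _ _).symm
  · exact (h14 _ h' _ _ h2).symm
  · exact h24 h' _ _
  · exact h34 h' _ _
  · exact h44 _ _ h2 _ _ h2'

lemma exists_partial : ∃ φ : (Ssub ι n : SSet.{0}) ⟶ C, ∀ (m : SimplexCategory)
    (g : m ⟶ S.Q.obj ⦋n⦌) (s : C.obj (op m)) (h : RelS ι n δ τ g s),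
    φ.app (op m) ⟨SSet.stdSimplex.objEquiv.symm g, h.inS⟩ = s := by
  have uq : ∀ {m : SimplexCategory} {g : m ⟶ S.Q.obj ⦋n⦌} {s s' : C.obj (op m)}
    (h : RelS ι n δ τ g s) (h' : RelS ι n δ τ g s'), s = s' := fun h h' =>
    RelS.unique ι n δ τ hτ hδ hmono K h h'
  refine ⟨{ app := fun m => ↾fun g => (InS.exists_rel ι n δ τ (g := SSet.stdSimplex.objEquiv g.1) g.2).choose,
            naturality := ?_ }, ?_⟩
  · intro a b f
    refine ConcreteCategory.hom_ext _ _ fun g => ?_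
    have h1 := (InS.exists_rel ι n δ τ (g := SSet.stdSimplex.objEquiv g.1) g.2).choose_spec
    have h2 := RelS.pre ι n δ τ h1 f.unop
    exact uq (InS.exists_rel ι n δ τ (g := SSet.stdSimplex.objEquiv
      ((Ssub ι n : SSet.{0}).map f g).1) ((Ssub ι n : SSet.{0}).map f g).2).choose_spec h2
  · intro m g s h
    exact uq (InS.exists_rel ι n δ τ (g := SSet.stdSimplex.objEquiv.{0} (SSet.stdSimplex.objEquiv.{0}.symm g)) h.inS).choose_spec h

lemma exists_ext [SSet.Quasicategory C] (hS : SSet.innerAnodyneExtensions (Ssub ι n).ι) :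
    ∃ σ : C.obj (op (S.Q.obj ⦋n⦌)), ∀ (m : SimplexCategory)
    (g : m ⟶ S.Q.obj ⦋n⦌) (s : C.obj (op m)), RelS ι n δ τ g s → C.map g.op σ = s := by
  obtain ⟨φ, hφ⟩ := exists_partial ι n δ τ hτ hδ hmono K
  have hlp : HasLiftingProperty (Ssub ι n).ι (Limits.terminal.from C) :=
    hS _ (SSet.mem_innerFibrations _)
  have sq : CommSq φ (Ssub ι n).ι (Limits.terminal.from C) (Limits.terminal.from _) :=
    ⟨Subsingleton.elim _ _⟩
  refine ⟨sq.lift.app (op _) (SSet.stdSimplex.objEquiv.{0}.symm (𝟙 _)), fun m g s h => ?_⟩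
  have e := hφ m g s h
  rw [← sq.fac_left] at e
  rw [← e]
  have e2 := ConcreteCategory.congr_hom (sq.lift.naturality g.op) (SSet.stdSimplex.objEquiv.{0}.symm (𝟙 _))
  refine e2.symm.trans ?_
  change sq.lift.app (op m) (SSet.stdSimplex.objEquiv.{0}.symm (g ≫ 𝟙 _)) =
    sq.lift.app (op m) (SSet.stdSimplex.objEquiv.{0}.symm g)
  rw [Category.comp_id]

theorem lift_simplex [SSet.Quasicategory C] (hS : SSet.innerAnodyneExtensions (Ssub ι n).ι) :
    ∃ σ : (Mp S C X Y).obj (op ⦋n⦌), (ι.ind C X Y).app _ σ = δ ∧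
      ∀ (k : SimplexCategory) (α : k ⟶ ⦋n⦌) (h : NS α), (Mp S C X Y).map α.op σ = τ k α h := by
  obtain ⟨σ, hσ⟩ := exists_ext ι n δ τ hτ hδ hmono K hS
  refine ⟨⟨σ, fun m θ => ⟨fun e => hσ _ _ _ (Or.inr (Or.inr (Or.inl ⟨e, rfl⟩))),
    fun e => hσ _ _ _ (Or.inr (Or.inl ⟨e, rfl⟩))⟩⟩, ?_, ?_⟩
  · apply Subtype.ext
    refine hσ _ _ _ (Or.inl ⟨𝟙 _, Category.id_comp _, ?_⟩)
    rw [op_id, FunctorToTypes.map_id_apply]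
  · intro k α h
    apply Subtype.ext
    obtain ⟨ρ, h1, h2⟩ := exists_ret_of_NS α h
    have e := hσ _ (S.Q.map α) _ (Or.inr (Or.inr (Or.inr ⟨ρ, h1, by rw [← S.Q.map_comp, h2], rfl⟩)))
    rw [hτ] at e
    refine Eq.trans e ?_
    congr 2
end
end SSetAux


namespace SSetAux
open SSetPaper

lemma app_eq_map {n : SimplexCategory} {A : SSet.{0}} (d : SSet.stdSimplex.{0}.obj n ⟶ A)
    {k : SimplexCategory} (α : k ⟶ n) :
    A.map α.op (d.app (op n) (SSet.stdSimplex.objEquiv.{0}.symm (𝟙 _))) =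
      d.app (op k) (SSet.stdSimplex.objEquiv.{0}.symm α) := by
  have e2 := ConcreteCategory.congr_hom (d.naturality α.op) (SSet.stdSimplex.objEquiv.{0}.symm (𝟙 _))
  refine e2.symm.trans ?_
  change d.app (op k) (SSet.stdSimplex.objEquiv.{0}.symm (α ≫ 𝟙 _)) =
    d.app (op k) (SSet.stdSimplex.objEquiv.{0}.symm α)
  rw [Category.comp_id]

theorem ind_lift {D S : Shape} (ι : SHom D S) {C : SSet.{0}} [SSet.Quasicategory C] (X Y : C _⦋0⦌)
    (hmono : ∀ n : ℕ, Mono (ι.app ⦋n⦌)) (K : CondK S)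
    (hS : ∀ n : ℕ, SSet.innerAnodyneExtensions (Ssub ι n).ι) (n : ℕ) :
    HasLiftingProperty (SSet.boundary.{0} n).ι (ι.ind C X Y) := by
  constructor
  intro t d sq
  let τ : ∀ (k : SimplexCategory) (α : k ⟶ ⦋n⦌), NS α → (Mp S C X Y).obj (op k) :=
    fun k α h => t.app (op k) ⟨SSet.stdSimplex.objEquiv.{0}.symm α, h⟩
  let δ : (Mp D C X Y).obj (op ⦋n⦌) := d.app (op ⦋n⦌) (SSet.stdSimplex.objEquiv.{0}.symm (𝟙 _))
  have hτ : ∀ {k l : SimplexCategory} (β : k ⟶ l) (α : l ⟶ ⦋n⦌) (h : NS α),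
      C.map (S.Q.map β).op (τ l α h).1 = (τ k (β ≫ α) (h.comp β)).1 := by
    intro k l β α h
    have := ConcreteCategory.congr_hom (t.naturality β.op) ⟨SSet.stdSimplex.objEquiv.{0}.symm α, h⟩
    exact (congrArg Subtype.val this).symm
  have hδ : ∀ {k : SimplexCategory} (α : k ⟶ ⦋n⦌) (h : NS α),
      C.map (ι.app k).op (τ k α h).1 = C.map (D.Q.map α).op δ.1 := by
    intro k α h
    have e1 := ConcreteCategory.congr_hom (congrArg (fun f => f.app (op k)) sq.w)
      ⟨SSet.stdSimplex.objEquiv.{0}.symm α, h⟩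
    have e2 := app_eq_map d α
    exact (congrArg Subtype.val e1).trans (congrArg Subtype.val e2).symm
  obtain ⟨σ, h1, h2⟩ := lift_simplex ι n δ τ hτ hδ (hmono n) K (hS n)
  refine ⟨⟨SSet.yonedaEquiv.symm σ, ?_, ?_⟩⟩
  · apply NatTrans.ext
    funext k
    refine ConcreteCategory.hom_ext _ _ fun x => ?_
    exact h2 k.unop (SSet.stdSimplex.objEquiv x.1) x.2
  · rw [SSet.yonedaEquiv_symm_comp, h1]
    apply NatTrans.ext
    funext k
    refine ConcreteCategory.hom_ext _ _ fun x => ?_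
    exact app_eq_map d (SSet.stdSimplex.objEquiv x)

/-- the two ends of the cylinder -/
def ends (A : SSet.{0}) : (MonoidalCategory.tensorObj (Δ[1] : SSet.{0}) A).Subcomplex where
  obj m := {x | x.1 = SSet.stdSimplex.const 1 0 m ∨ x.1 = SSet.stdSimplex.const 1 1 m}
  map {a b} f x hx := by
    rcases hx with h | h
    · left
      change (Δ[1] : SSet.{0}).map f x.1 = _
      rw [h]; rfl
    · right
      change (Δ[1] : SSet.{0}).map f x.1 = _
      rw [h]; rfl

lemma sconst_ne (m : SimplexCategoryᵒᵖ) :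
    SSet.stdSimplex.const.{0} 1 0 m ≠ SSet.stdSimplex.const 1 1 m := by
  intro h
  have := congrArg SSet.stdSimplex.objEquiv h
  exact const_ne this

open Classical in
noncomputable def endsMap {A B : SSet.{0}} (f g : A ⟶ B) : (ends A : SSet.{0}) ⟶ B where
  app m := ↾fun x => if x.1.1 = SSet.stdSimplex.const 1 0 m then f.app m x.1.2 else g.app m x.1.2
  naturality a b u := by
    refine ConcreteCategory.hom_ext _ _ fun x => ?_
    change (if (Δ[1] : SSet.{0}).map u x.1.1 = SSet.stdSimplex.const 1 0 b then
      f.app b (A.map u x.1.2) else g.app b (A.map u x.1.2)) =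
      B.map u (if x.1.1 = SSet.stdSimplex.const 1 0 a then f.app a x.1.2 else g.app a x.1.2)
    rcases x.2 with h | h
    · rw [if_pos h, if_pos (by rw [h]; rfl)]
      exact ConcreteCategory.congr_hom (f.naturality u) x.1.2
    · rw [if_neg (by rw [h]; exact (sconst_ne _).symm),
        if_neg (by rw [h]; exact (sconst_ne _).symm)]
      exact ConcreteCategory.congr_hom (g.naturality u) x.1.2

theorem HEquiv.of_lift {A B : SSet.{0}} (p : A ⟶ B)
    (hp : ∀ n : ℕ, HasLiftingProperty (SSet.boundary.{0} n).ι p) : HEquiv A B := by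
  have hI : SSet.modelCategoryQuillen.I.{0}.rlp p := by
    intro _ _ i hi
    obtain ⟨n⟩ := hi
    exact hp n
  rw [← SSet.rlp_monomorphisms] at hI
  have lift : ∀ {U V : SSet.{0}} (i : U ⟶ V) [Mono i], HasLiftingProperty i p :=
    fun i hi => hI i hi
  have l1 := lift (⊥ : B.Subcomplex).ι
  have sq1 : CommSq (SSet.Subcomplex.isInitialBot.to A) (⊥ : B.Subcomplex).ι p (𝟙 B) :=
    ⟨SSet.Subcomplex.isInitialBot.hom_ext _ _⟩
  let s : B ⟶ A := sq1.lift
  have hs : s ≫ p = 𝟙 B := sq1.fac_right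
  have l2 := lift (ends A).ι
  have sq2 : CommSq (endsMap (p ≫ s) (𝟙 A)) (ends A).ι p
      (SemiCartesianMonoidalCategory.snd (Δ[1] : SSet.{0}) A ≫ p) := by
    constructor
    apply NatTrans.ext
    funext m
    refine ConcreteCategory.hom_ext _ _ fun x => ?_
    change p.app m (if x.1.1 = SSet.stdSimplex.const 1 0 m then (p ≫ s).app m x.1.2 else x.1.2) =
      p.app m x.1.2
    split_ifs
    · have := ConcreteCategory.congr_hom (congrArg (fun f => f.app m) hs) (p.app m x.1.2)
      exact this
    · rfl
  refine ⟨p, s, .rel _ _ ⟨sq2.lift, ?_, ?_⟩, by rw [hs]; exact .refl _⟩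
  · apply NatTrans.ext
    funext m
    refine ConcreteCategory.hom_ext _ _ fun x => ?_
    have := ConcreteCategory.congr_hom (congrArg (fun f => f.app m) sq2.fac_left)
      ⟨(SSet.stdSimplex.const 1 0 m, x), Or.inl rfl⟩
    refine Eq.trans this ?_
    exact if_pos rfl
  · apply NatTrans.ext
    funext m
    refine ConcreteCategory.hom_ext _ _ fun x => ?_
    have := ConcreteCategory.congr_hom (congrArg (fun f => f.app m) sq2.fac_left)
      ⟨(SSet.stdSimplex.const 1 1 m, x), Or.inr rfl⟩
    refine Eq.trans this ?_
    exact if_neg (sconst_ne m).symm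
end SSetAux


namespace SSetAux
open SSetPaper

/-- values of a morphism, as natural numbers -/
def val {a b : SimplexCategory} (f : a ⟶ b) (v : ℕ) : ℕ :=
  (f.toOrderHom ⟨min v a.len, by omega⟩ : ℕ)

lemma val_le {a b : SimplexCategory} (f : a ⟶ b) (v : ℕ) : val f v ≤ b.len := by
  have := (f.toOrderHom ⟨min v a.len, by omega⟩).isLt
  unfold val
  omega

lemma val_mono {a b : SimplexCategory} (f : a ⟶ b) {v w : ℕ} (h : v ≤ w) : val f v ≤ val f w := by
  apply f.toOrderHom.monotone
  change min v a.len ≤ min w a.len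
  omega

lemma val_fin {a b : SimplexCategory} (f : a ⟶ b) (i : Fin (a.len + 1)) :
    val f i = f.toOrderHom i := by
  unfold val
  congr 2
  apply Fin.ext
  have := i.isLt
  change min (i : ℕ) a.len = i
  omega

lemma val_comp {a b c : SimplexCategory} (f : a ⟶ b) (g : b ⟶ c) (v : ℕ) :
    val (f ≫ g) v = val g (val f v) := by
  conv_rhs => rw [val.eq_def f]
  rw [val_fin g]
  rfl

lemma val_id {a : SimplexCategory} {v : ℕ} (h : v ≤ a.len) : val (𝟙 a) v = v := by
  change min v a.len = v
  omega

lemma val_const {a b : SimplexCategory} (i : Fin (b.len + 1)) (v : ℕ) :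
    val (SimplexCategory.const a b i) v = i := rfl

lemma val_ext {a b : SimplexCategory} {f g : a ⟶ b} (h : ∀ v ≤ a.len, val f v = val g v) :
    f = g := by
  apply SimplexCategory.Hom.ext
  apply OrderHom.ext
  funext i
  apply Fin.ext
  have := h i (by have := i.isLt; omega)
  rwa [val_fin, val_fin] at this

def mkN (a b : SimplexCategory) (f : ℕ → ℕ) (hb : ∀ v ≤ a.len, f v ≤ b.len)
    (hm : ∀ v w, v ≤ w → w ≤ a.len → f v ≤ f w) : a ⟶ b :=
  SimplexCategory.Hom.mk
    { toFun := fun i => ⟨f i, by have := hb i (by have := i.isLt; omega); omega⟩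
      monotone' := fun i j h => hm i j h (by have := j.isLt; omega) }

lemma val_mkN {a b : SimplexCategory} {f : ℕ → ℕ} {hb : ∀ v ≤ a.len, f v ≤ b.len}
    {hm : ∀ v w, v ≤ w → w ≤ a.len → f v ≤ f w} {v : ℕ} (hv : v ≤ a.len) :
    val (mkN a b f hb hm) v = f v := by
  change f (min v a.len) = f v
  rw [min_eq_left hv]

lemma eq_const_iff {m : SimplexCategory} {f : m ⟶ ⦋1⦌} {c : Fin 2} :
    f = SimplexCategory.const m ⦋1⦌ c ↔ ∀ j ≤ m.len, val f j = c := by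
  constructor
  · rintro rfl j _
    rfl
  · intro h
    apply val_ext
    intro v hv
    rw [h v hv]
    rfl

structure Blocks {D S : Shape} (ι : SHom D S) (c : Fin 2) where
  P : ℕ → ℕ → ℕ
  O : ℕ → ℕ → ℕ
  z : ℕ → ℕ
  hP : ∀ {n i}, i ≤ n → P n i ≤ (S.Q.obj ⦋n⦌).len
  hO : ∀ {n i}, i ≤ n → O n i ≤ (S.Q.obj ⦋n⦌).len
  hz : ∀ n, z n ≤ (S.Q.obj ⦋n⦌).len
  cover : ∀ {n v}, v ≤ (S.Q.obj ⦋n⦌).len → v = z n ∨ ∃ i ≤ n, v = P n i ∨ v = O n i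
  injP : ∀ {n i j}, P n i = P n j → i = j
  injO : ∀ {n i j}, O n i = O n j → i = j
  ord : (∀ n i j, i ≤ n → j ≤ n → P n i < O n j ∧ O n j < z n) ∨
    (∀ n i j, i ≤ n → j ≤ n → z n < O n j ∧ O n j < P n i)
  mapP : ∀ {n i} (ρ : (⦋n⦌ : SimplexCategory) ⟶ ⦋n⦌), i ≤ n →
    val (S.Q.map ρ) (P n i) = P n (val ρ i)
  mapO : ∀ {n i} (ρ : (⦋n⦌ : SimplexCategory) ⟶ ⦋n⦌), i ≤ n →
    val (S.Q.map ρ) (O n i) = O n (val ρ i)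
  mapz : ∀ {n} (ρ : (⦋n⦌ : SimplexCategory) ⟶ ⦋n⦌), val (S.Q.map ρ) (z n) = z n
  colP : ∀ {n i}, i ≤ n → val (S.col ⦋n⦌) (P n i) ≠ c
  colO : ∀ {n i}, i ≤ n → val (S.col ⦋n⦌) (O n i) = c
  colz : ∀ {n}, val (S.col ⦋n⦌) (z n) = c
  fac : ∀ {n : ℕ} {m : SimplexCategory} (g : m ⟶ S.Q.obj ⦋n⦌),
    (∃ g' : m ⟶ D.Q.obj ⦋n⦌, g' ≫ ι.app _ = g) ↔ ∀ j ≤ m.len, val g j ≠ z n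

namespace Blocks
variable {D S : Shape} {ι : SHom D S} {c : Fin 2} (B : Blocks ι c)
include B

lemma ret_val {n : ℕ} (p : ℕ → Prop) (hp : ∃ i ≤ n, p i) :
    ∃ u : (⦋n⦌ : SimplexCategory) ⟶ ⦋n⦌, (∀ i, p (val u i)) ∧ ∀ i ≤ n, p i → val u i = i := by
  classical
  obtain ⟨i, hi, h⟩ := hp
  obtain ⟨u, h1, h2⟩ := exists_ret (n := n) (Finset.univ.filter (fun i : Fin (n+1) => p i))
    ⟨⟨i, by omega⟩, by simpa⟩
  refine ⟨u, fun i => ?_, fun i hi h => ?_⟩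
  · have := h1 (⟨min i n, by omega⟩ : Fin (n+1))
    exact (Finset.mem_filter.1 this).2
  · have := h2 (⟨i, Nat.lt_succ_of_le hi⟩ : Fin (n+1)) (by simpa)
    have e := val_fin u (⟨i, Nat.lt_succ_of_le hi⟩ : Fin (n+1))
    rw [this] at e
    exact e

lemma fix {n i v : ℕ} (hi : i ≤ n) (hv : v = B.P n i ∨ v = B.O n i)
    (ρ : (⦋n⦌ : SimplexCategory) ⟶ ⦋n⦌) : val (S.Q.map ρ) v = v ↔ val ρ i = i := by
  rcases hv with rfl | rfl
  · rw [B.mapP _ hi]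
    exact ⟨fun h => B.injP h, fun h => by rw [h]⟩
  · rw [B.mapO _ hi]
    exact ⟨fun h => B.injO h, fun h => by rw [h]⟩

lemma comp_eq_iff {n : ℕ} {m : SimplexCategory} (g : m ⟶ S.Q.obj ⦋n⦌)
    (ρ : (⦋n⦌ : SimplexCategory) ⟶ ⦋n⦌) : g ≫ S.Q.map ρ = g ↔
    ∀ i ≤ n, (∃ j ≤ m.len, val g j = B.P n i ∨ val g j = B.O n i) → val ρ i = i := by
  constructor
  · rintro h i hi ⟨j, hj, hv⟩
    rw [← B.fix hi hv, ← val_comp, h]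
  · intro h
    apply val_ext
    intro j hj
    rw [val_comp]
    rcases B.cover (val_le g j) with e | ⟨i, hi, hv⟩
    · rw [e, B.mapz]
    · rw [B.fix hi hv]
      exact h i hi ⟨j, hj, hv⟩

lemma condK : CondK S := by
  intro n m g ρ ρ' h h'
  by_cases hp : ∃ i ≤ n, val ρ i = i ∧ val ρ' i = i
  · obtain ⟨u, h1, h2⟩ := B.ret_val _ hp
    right; right
    refine ⟨u, ?_, ?_⟩
    · rw [B.comp_eq_iff] at h h' ⊢
      intro i hi hj
      exact h2 i hi ⟨h i hi hj, h' i hi hj⟩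
    · apply val_ext
      intro i _
      rw [val_comp, val_comp, (h1 i).1, (h1 i).2]
  · have : g ≫ S.col _ = SimplexCategory.const m ⦋1⦌ c := by
      rw [eq_const_iff]
      intro j hj
      rw [val_comp]
      rcases B.cover (val_le g j) with e | ⟨i, hi, hv⟩
      · rw [e, B.colz]
      · rw [B.comp_eq_iff] at h h'
        exact absurd ⟨i, hi, h i hi ⟨j, hj, hv⟩, h' i hi ⟨j, hj, hv⟩⟩ hp
    fin_cases c
    · exact Or.inr (Or.inl this)
    · exact Or.inl this

lemma inS_iff {n : ℕ} {m : SimplexCategory} (g : m ⟶ S.Q.obj ⦋n⦌) : ¬ InS ι n g ↔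
    (∃ j ≤ m.len, val g j = B.z n) ∧ (∃ i ≤ n, ∃ j ≤ m.len, val g j = B.P n i) ∧
    ∀ i ≤ n, (∃ j ≤ m.len, val g j = B.P n i) ∨ (∃ j ≤ m.len, val g j = B.O n i) := by
  constructor
  · intro h
    unfold InS at h
    push Not at h
    obtain ⟨h1, h2, h3, h4⟩ := h
    have a : ∃ i ≤ n, ∃ j ≤ m.len, val g j = B.P n i := by
      by_contra hne
      have : g ≫ S.col _ = SimplexCategory.const m ⦋1⦌ c := by
        rw [eq_const_iff]
        intro j hj
        rw [val_comp]
        rcases B.cover (val_le g j) with e | ⟨i, hi, hv | hv⟩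
        · rw [e, B.colz]
        · exact absurd ⟨i, hi, j, hj, hv⟩ hne
        · rw [hv, B.colO hi]
      fin_cases c
      · exact h3 this
      · exact h2 this
    refine ⟨?_, a, ?_⟩
    · by_contra hne
      push Not at hne
      obtain ⟨g', hg'⟩ := (B.fac g).2 hne
      exact h1 g' hg'
    · intro i hi
      by_contra hne
      obtain ⟨i', hi', j', hj', e'⟩ := a
      obtain ⟨u, hu1, hu2⟩ := B.ret_val (n := n)
        (fun i => (∃ j ≤ m.len, val g j = B.P n i) ∨ (∃ j ≤ m.len, val g j = B.O n i))
        ⟨i', hi', Or.inl ⟨j', hj', e'⟩⟩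
      apply h4 u
      · intro hs
        obtain ⟨y, hy⟩ := hs ⟨i, by change i < n + 1; omega⟩
        have e := val_fin u y
        rw [hy] at e
        have := hu1 y
        rw [e] at this
        exact hne this
      · rw [B.comp_eq_iff]
        rintro i hi ⟨j, hj, hv | hv⟩
        · exact hu2 i hi (Or.inl ⟨j, hj, hv⟩)
        · exact hu2 i hi (Or.inr ⟨j, hj, hv⟩)
  · rintro ⟨⟨j, hj, hz⟩, ⟨i, hi, j', hj', hP⟩, h⟩ hS
    rcases hS with h1 | h1 | h1 | ⟨ρ, h1, h2⟩
    · exact (B.fac g).1 h1 j hj hz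
    · rw [eq_const_iff] at h1
      have e1 := h1 j hj
      have e2 := h1 j' hj'
      rw [val_comp, hz, B.colz] at e1
      rw [val_comp, hP, ← e1] at e2
      exact B.colP hi e2
    · rw [eq_const_iff] at h1
      have e1 := h1 j hj
      have e2 := h1 j' hj'
      rw [val_comp, hz, B.colz] at e1
      rw [val_comp, hP, ← e1] at e2
      exact B.colP hi e2
    · apply h1
      rw [B.comp_eq_iff] at h2
      intro x
      refine ⟨x, ?_⟩
      apply Fin.ext
      rw [← val_fin]
      have hx : (x : ℕ) ≤ n := by have := x.isLt; change (x : ℕ) < n + 1 at this; omega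
      apply h2 x hx
      rcases h x hx with ⟨j, hj, hv⟩ | ⟨j, hj, hv⟩
      · exact ⟨j, hj, Or.inl hv⟩
      · exact ⟨j, hj, Or.inr hv⟩

lemma anodyne (n : ℕ) : SSet.innerAnodyneExtensions (Ssub ι n).ι := by
  have key : ∀ {m N : ℕ} (g : (Δ[N] : SSet.{0}) _⦋m⦌) (v : Fin (N+1)),
      v ∈ vs g ↔ ∃ j ≤ m, val (SSet.stdSimplex.objEquiv g) j = v := by
    intro m N g v
    simp only [vs, Finset.mem_image, Finset.mem_univ, true_and]
    constructor
    · rintro ⟨i, rfl⟩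
      exact ⟨i, by omega, val_fin _ i⟩
    · rintro ⟨j, hj, h⟩
      refine ⟨⟨j, by omega⟩, ?_⟩
      apply Fin.ext
      rw [← h]
      exact (val_fin (SSet.stdSimplex.objEquiv g) ⟨j, by change j < m + 1; omega⟩).symm
  let P' : Fin (n+1) → Fin ((S.Q.obj ⦋n⦌).len + 1) := fun i =>
    ⟨B.P n i, by have := B.hP (n := n) (i := i) (by omega); omega⟩
  let O' : Fin (n+1) → Fin ((S.Q.obj ⦋n⦌).len + 1) := fun i =>
    ⟨B.O n i, by have := B.hO (n := n) (i := i) (by omega); omega⟩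
  let z' : Fin ((S.Q.obj ⦋n⦌).len + 1) := ⟨B.z n, by have := B.hz n; omega⟩
  refine Toggle.innerAnodyne (N := (S.Q.obj ⦋n⦌).len) (A := Ssub ι n)
    (mkToggle P' O' z' ?_ ?_ ?_)
  · intro i j h
    exact Fin.ext (B.injO (congrArg Fin.val h))
  · refine B.ord.imp (fun h i j => ?_) (fun h i j => ?_)
    · exact h n i j (by omega) (by omega)
    · exact h n i j (by omega) (by omega)
  · intro m g
    refine (B.inS_iff (SSet.stdSimplex.objEquiv g)).trans ?_
    unfold PMis
    rw [key]
    refine and_congr Iff.rfl (and_congr ?_ ?_)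
    · constructor
      · rintro ⟨i, hi, h⟩
        exact ⟨⟨i, by omega⟩, (key _ _).2 h⟩
      · rintro ⟨i, h⟩
        exact ⟨i, by omega, (key _ _).1 h⟩
    · constructor
      · intro h i
        exact (h i (by omega)).imp (key _ _).2 (key _ _).2
      · intro h i hi
        exact (h ⟨i, by omega⟩).imp (key _ _).1 (key _ _).1

theorem hEquiv {C : SSet.{0}} [SSet.Quasicategory C] (X Y : C _⦋0⦌)
    (hmono : ∀ n : ℕ, Mono (ι.app ⦋n⦌)) : HEquiv (Mp S C X Y) (Mp D C X Y) :=
  HEquiv.of_lift (ι.ind C X Y) (fun n => ind_lift ι X Y hmono B.condK B.anodyne n)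

end Blocks
end SSetAux


namespace SSetAux
open SSetPaper

def mkM (a b : ℕ) (f : ℕ → ℕ) (hb : ∀ v ≤ a, f v ≤ b)
    (hm : ∀ v w, v ≤ w → w ≤ a → f v ≤ f w) : (⦋a⦌ : SimplexCategory) ⟶ ⦋b⦌ :=
  mkN ⦋a⦌ ⦋b⦌ f hb hm

lemma val_mkM {a b : ℕ} {f : ℕ → ℕ} {hb : ∀ v ≤ a, f v ≤ b}
    {hm : ∀ v w, v ≤ w → w ≤ a → f v ≤ f w} {v : ℕ} (hv : v ≤ a) :
    val (mkM a b f hb hm) v = f v := val_mkN hv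

lemma vext {a : ℕ} {b : SimplexCategory} {f g : (⦋a⦌ : SimplexCategory) ⟶ b}
    (h : ∀ v ≤ a, val f v = val g v) : f = g := val_ext h

lemma val_id_mk {a v : ℕ} (h : v ≤ a) : val (𝟙 (⦋a⦌ : SimplexCategory)) v = v := val_id h

/-- doubled map -/
def dMap {k l : SimplexCategory} (α : k ⟶ l) :
    (⦋2 * k.len + 1⦌ : SimplexCategory) ⟶ ⦋2 * l.len + 1⦌ :=
  mkM _ _ (fun v => if v ≤ k.len then val α v else l.len + 1 + val α (v - (k.len + 1)))
    (by
      intro v hv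
      have := val_le α v
      have := val_le α (v - (k.len + 1))
      split_ifs <;> omega)
    (by
      intro v w hvw hw
      have := val_le α v
      have := val_mono α hvw
      have := val_mono α (show v - (k.len + 1) ≤ w - (k.len + 1) by omega)
      split_ifs <;> omega)

lemma dMap_lo {k l : SimplexCategory} (α : k ⟶ l) {v : ℕ} (h : v ≤ k.len) :
    val (dMap α) v = val α v := by
  unfold dMap
  rw [val_mkM (by omega), if_pos h]

lemma dMap_hi {k l : SimplexCategory} (α : k ⟶ l) {v : ℕ} (h : v ≤ k.len) :
    val (dMap α) (k.len + 1 + v) = l.len + 1 + val α v := by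
  unfold dMap
  rw [val_mkM (by omega), if_neg (by omega), Nat.add_sub_cancel_left]

lemma dext {k b : SimplexCategory} {f g : (⦋2 * k.len + 1⦌ : SimplexCategory) ⟶ b}
    (h1 : ∀ v ≤ k.len, val f v = val g v)
    (h2 : ∀ v ≤ k.len, val f (k.len + 1 + v) = val g (k.len + 1 + v)) : f = g := by
  apply vext
  intro v hv
  by_cases h : v ≤ k.len
  · exact h1 v h
  · have := h2 (v - (k.len + 1)) (by omega)
    rwa [show k.len + 1 + (v - (k.len + 1)) = v by omega] at this

/-- colouring by a threshold -/
def thr (a t : ℕ) : (⦋a⦌ : SimplexCategory) ⟶ ⦋1⦌ :=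
  mkM a 1 (fun v => if v ≤ t then 0 else 1)
    (by intro v hv; split_ifs <;> omega)
    (by intro v w hv hw; split_ifs <;> omega)

lemma thr_lo {a t v : ℕ} (h : v ≤ t) (h' : v ≤ a) : val (thr a t) v = 0 := by
  unfold thr
  rw [val_mkM h', if_pos h]

lemma thr_hi {a t v : ℕ} (h : t < v) (h' : v ≤ a) : val (thr a t) v = 1 := by
  unfold thr
  rw [val_mkM h', if_neg (by omega)]

def shD : Shape where
  Q :=
    { obj := fun k => ⦋2 * k.len + 1⦌
      map := fun α => dMap α
      map_id := fun k => by
        apply dext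
        · intro v hv
          rw [dMap_lo _ hv, val_id hv, val_id_mk (by omega)]
        · intro v hv
          rw [dMap_hi _ hv, val_id hv, val_id_mk (by omega)]
      map_comp := fun f g => by
        apply dext
        · intro v hv
          rw [val_comp, dMap_lo _ hv, dMap_lo _ hv, dMap_lo _ (val_le _ _), val_comp]
        · intro v hv
          rw [val_comp, dMap_hi _ hv, dMap_hi _ hv, dMap_hi _ (val_le _ _), val_comp] }
  col k := thr (2 * k.len + 1) k.len
  nat {k l} α := by
    apply dext
    · intro v hv
      have := val_le α v
      rw [val_comp, dMap_lo _ hv, thr_lo (by omega) (by omega), thr_lo (by omega) (by omega)]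
    · intro v hv
      have := val_le α v
      rw [val_comp, dMap_hi _ hv, thr_hi (by omega) (by omega), thr_hi (by omega) (by omega)]

/-- doubled map with a top point -/
def tMap {k l : SimplexCategory} (α : k ⟶ l) :
    (⦋2 * k.len + 2⦌ : SimplexCategory) ⟶ ⦋2 * l.len + 2⦌ :=
  mkM _ _ (fun v => if v ≤ 2 * k.len + 1 then val (dMap α) v else 2 * l.len + 2)
    (by
      intro v hv
      have : _ ≤ 2 * l.len + 1 := val_le (dMap α) v
      split_ifs <;> omega)
    (by
      intro v w hvw hw
      have : _ ≤ 2 * l.len + 1 := val_le (dMap α) v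
      have := val_mono (dMap α) hvw
      split_ifs <;> omega)

lemma tMap_lo {k l : SimplexCategory} (α : k ⟶ l) {v : ℕ} (h : v ≤ k.len) :
    val (tMap α) v = val α v := by
  unfold tMap
  rw [val_mkM (by omega), if_pos (by omega), dMap_lo _ h]

lemma tMap_hi {k l : SimplexCategory} (α : k ⟶ l) {v : ℕ} (h : v ≤ k.len) :
    val (tMap α) (k.len + 1 + v) = l.len + 1 + val α v := by
  unfold tMap
  rw [val_mkM (by omega), if_pos (by omega), dMap_hi _ h]

lemma tMap_top {k l : SimplexCategory} (α : k ⟶ l) :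
    val (tMap α) (2 * k.len + 2) = 2 * l.len + 2 := by
  unfold tMap
  rw [val_mkM (by omega), if_neg (by omega)]

lemma text {k b : SimplexCategory} {f g : (⦋2 * k.len + 2⦌ : SimplexCategory) ⟶ b}
    (h1 : ∀ v ≤ k.len, val f v = val g v)
    (h2 : ∀ v ≤ k.len, val f (k.len + 1 + v) = val g (k.len + 1 + v))
    (h3 : val f (2 * k.len + 2) = val g (2 * k.len + 2)) : f = g := by
  apply vext
  intro v hv
  by_cases h : v ≤ k.len
  · exact h1 v h
  · by_cases h' : v ≤ 2 * k.len + 1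
    · have := h2 (v - (k.len + 1)) (by omega)
      rwa [show k.len + 1 + (v - (k.len + 1)) = v by omega] at this
    · rwa [show v = 2 * k.len + 2 by omega]

def shT : Shape where
  Q :=
    { obj := fun k => ⦋2 * k.len + 2⦌
      map := fun α => tMap α
      map_id := fun k => by
        apply text
        · intro v hv
          rw [tMap_lo _ hv, val_id hv, val_id_mk (by omega)]
        · intro v hv
          rw [tMap_hi _ hv, val_id hv, val_id_mk (by omega)]
        · rw [tMap_top, val_id_mk (by omega)]
      map_comp := fun f g => by
        apply text
        · intro v hv
          rw [val_comp, tMap_lo _ hv, tMap_lo _ hv, tMap_lo _ (val_le _ _), val_comp]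
        · intro v hv
          rw [val_comp, tMap_hi _ hv, tMap_hi _ hv, tMap_hi _ (val_le _ _), val_comp]
        · rw [val_comp, tMap_top, tMap_top, tMap_top] }
  col k := thr (2 * k.len + 2) k.len
  nat {k l} α := by
    apply text
    · intro v hv
      have := val_le α v
      rw [val_comp, tMap_lo _ hv, thr_lo (by omega) (by omega), thr_lo (by omega) (by omega)]
    · intro v hv
      have := val_le α v
      rw [val_comp, tMap_hi _ hv, thr_hi (by omega) (by omega), thr_hi (by omega) (by omega)]
    · rw [val_comp, tMap_top, thr_hi (by omega) (by omega), thr_hi (by omega) (by omega)]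

/-- doubled map with a bottom point -/
def bMap {k l : SimplexCategory} (α : k ⟶ l) :
    (⦋2 * k.len + 2⦌ : SimplexCategory) ⟶ ⦋2 * l.len + 2⦌ :=
  mkM _ _ (fun v => if v = 0 then 0 else 1 + val (dMap α) (v - 1))
    (by
      intro v hv
      have : _ ≤ 2 * l.len + 1 := val_le (dMap α) (v - 1)
      split_ifs <;> omega)
    (by
      intro v w hvw hw
      have := val_mono (dMap α) (show v - 1 ≤ w - 1 by omega)
      split_ifs <;> omega)

lemma bMap_bot {k l : SimplexCategory} (α : k ⟶ l) : val (bMap α) 0 = 0 := by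
  unfold bMap
  rw [val_mkM (by omega), if_pos rfl]

lemma bMap_lo {k l : SimplexCategory} (α : k ⟶ l) {v : ℕ} (h : v ≤ k.len) :
    val (bMap α) (1 + v) = 1 + val α v := by
  unfold bMap
  rw [val_mkM (by omega), if_neg (by omega), Nat.add_sub_cancel_left, dMap_lo _ h]

lemma bMap_hi {k l : SimplexCategory} (α : k ⟶ l) {v : ℕ} (h : v ≤ k.len) :
    val (bMap α) (k.len + 2 + v) = l.len + 2 + val α v := by
  unfold bMap
  rw [val_mkM (by omega), if_neg (by omega),
    show k.len + 2 + v - 1 = k.len + 1 + v by omega, dMap_hi _ h]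
  omega

lemma bext {k b : SimplexCategory} {f g : (⦋2 * k.len + 2⦌ : SimplexCategory) ⟶ b}
    (h0 : val f 0 = val g 0)
    (h1 : ∀ v ≤ k.len, val f (1 + v) = val g (1 + v))
    (h2 : ∀ v ≤ k.len, val f (k.len + 2 + v) = val g (k.len + 2 + v)) : f = g := by
  apply vext
  intro v hv
  by_cases h : v = 0
  · rwa [h]
  · by_cases h' : v ≤ k.len + 1
    · have := h1 (v - 1) (by omega)
      rwa [show 1 + (v - 1) = v by omega] at this
    · have := h2 (v - (k.len + 2)) (by omega)
      rwa [show k.len + 2 + (v - (k.len + 2)) = v by omega] at this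

def shB : Shape where
  Q :=
    { obj := fun k => ⦋2 * k.len + 2⦌
      map := fun α => bMap α
      map_id := fun k => by
        apply bext
        · rw [bMap_bot, val_id_mk (by omega)]
        · intro v hv
          rw [bMap_lo _ hv, val_id hv, val_id_mk (by omega)]
        · intro v hv
          rw [bMap_hi _ hv, val_id hv, val_id_mk (by omega)]
      map_comp := fun f g => by
        apply bext
        · rw [val_comp, bMap_bot, bMap_bot, bMap_bot]
        · intro v hv
          rw [val_comp, bMap_lo _ hv, bMap_lo _ hv, bMap_lo _ (val_le _ _), val_comp]
        · intro v hv
          rw [val_comp, bMap_hi _ hv, bMap_hi _ hv, bMap_hi _ (val_le _ _), val_comp] }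
  col k := thr (2 * k.len + 2) (k.len + 1)
  nat {k l} α := by
    apply bext
    · rw [val_comp, bMap_bot, thr_lo (by omega) (by omega), thr_lo (by omega) (by omega)]
    · intro v hv
      have := val_le α v
      rw [val_comp, bMap_lo _ hv, thr_lo (by omega) (by omega), thr_lo (by omega) (by omega)]
    · intro v hv
      have := val_le α v
      rw [val_comp, bMap_hi _ hv, thr_hi (by omega) (by omega), thr_hi (by omega) (by omega)]

lemma joinPt_lo {k l : SimplexCategory} (α : k ⟶ l) {v : ℕ} (h : v ≤ k.len) :
    val (joinPt α) v = val α v := by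
  have e := val_fin (joinPt α) (⟨v, by change v < k.len + 1 + 1; omega⟩)
  rw [joinPt_apply_of_lt α _ (by change v < _; omega)] at e
  refine e.trans ?_
  exact (val_fin α ⟨v, by omega⟩).symm

lemma joinPt_top {k l : SimplexCategory} (α : k ⟶ l) :
    val (joinPt α) (k.len + 1) = l.len + 1 := by
  have e := val_fin (joinPt α) (⟨k.len + 1, by change k.len + 1 < k.len + 1 + 1; omega⟩)
  rw [joinPt_apply_of_ge α _ (by change ¬ (k.len + 1 < _); omega)] at e
  exact e

lemma joinPtL_bot {k l : SimplexCategory} (α : k ⟶ l) :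
    val (joinPtL α) 0 = 0 := by
  have e := val_fin (joinPtL α) 0
  rw [joinPtL_apply_zero α _ rfl] at e
  exact e

lemma joinPtL_hi {k l : SimplexCategory} (α : k ⟶ l) {v : ℕ} (h : v ≤ k.len) :
    val (joinPtL α) (1 + v) = 1 + val α v := by
  have e := val_fin (joinPtL α) (⟨1 + v, by change 1 + v < k.len + 1 + 1; omega⟩)
  rw [joinPtL_apply_pos α _ (by change ¬ (1 + v = _); omega)] at e
  refine e.trans ?_
  rw [Fin.val_succ, ← val_fin]
  change val α (1 + v - 1) + 1 = _
  rw [Nat.add_sub_cancel_left, add_comm]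

lemma jext {k b : SimplexCategory} {f g : (⦋k.len + 1⦌ : SimplexCategory) ⟶ b}
    (h1 : ∀ v ≤ k.len, val f v = val g v)
    (h3 : val f (k.len + 1) = val g (k.len + 1)) : f = g := by
  apply vext
  intro v hv
  by_cases h : v ≤ k.len
  · exact h1 v h
  · rwa [show v = k.len + 1 by omega]

lemma jlext {k b : SimplexCategory} {f g : (⦋k.len + 1⦌ : SimplexCategory) ⟶ b}
    (h1 : val f 0 = val g 0)
    (h3 : ∀ v ≤ k.len, val f (1 + v) = val g (1 + v)) : f = g := by
  apply vext
  intro v hv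
  by_cases h : v = 0
  · rwa [h]
  · have := h3 (v - 1) (by omega)
    rwa [show 1 + (v - 1) = v by omega] at this

def shJ : Shape where
  Q :=
    { obj := fun k => ⦋k.len + 1⦌
      map := fun α => joinPt α
      map_id := fun k => joinPt_id k
      map_comp := fun f g => joinPt_comp f g }
  col k := thr (k.len + 1) k.len
  nat {k l} α := by
    apply jext
    · intro v hv
      have := val_le α v
      rw [val_comp, joinPt_lo _ hv, thr_lo (by omega) (by omega), thr_lo (by omega) (by omega)]
    · rw [val_comp, joinPt_top, thr_hi (by omega) (by omega), thr_hi (by omega) (by omega)]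

def shL : Shape where
  Q :=
    { obj := fun k => ⦋k.len + 1⦌
      map := fun α => joinPtL α
      map_id := fun k => joinPtL_id k
      map_comp := fun f g => joinPtL_comp f g }
  col k := thr (k.len + 1) 0
  nat {k l} α := by
    apply jlext
    · rw [val_comp, joinPtL_bot, thr_lo (by omega) (by omega), thr_lo (by omega) (by omega)]
    · intro v hv
      have := val_le α v
      rw [val_comp, joinPtL_hi _ hv, thr_hi (by omega) (by omega), thr_hi (by omega) (by omega)]

end SSetAux


namespace SSetAux
open SSetPaper

def sh (a b s : ℕ) (h : a + s ≤ b) : (⦋a⦌ : SimplexCategory) ⟶ ⦋b⦌ :=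
  mkM a b (fun v => v + s) (by intros; omega) (by intros; omega)

lemma val_sh {a b s v : ℕ} {h : a + s ≤ b} (hv : v ≤ a) : val (sh a b s h) v = v + s := by
  unfold sh
  rw [val_mkM hv]

lemma ιT_nat {k l : SimplexCategory} (α : k ⟶ l) :
    dMap α ≫ sh (2 * l.len + 1) (2 * l.len + 2) 0 (by omega) =
      sh (2 * k.len + 1) (2 * k.len + 2) 0 (by omega) ≫ tMap α := by
  apply dext
  · intro v hv
    have := val_le α v
    rw [val_comp, val_comp, dMap_lo _ hv, val_sh (by omega), val_sh (by omega),
      add_zero, add_zero, tMap_lo _ hv]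
  · intro v hv
    have := val_le α v
    rw [val_comp, val_comp, dMap_hi _ hv, val_sh (by omega), val_sh (by omega),
      add_zero, add_zero, tMap_hi _ hv]

def ιT : SHom shD shT where
  app k := sh (2 * k.len + 1) (2 * k.len + 2) 0 (by omega)
  nat α := ιT_nat α
  col k := by
    apply dext
    · intro v hv
      change val (_ ≫ thr _ _) _ = val (thr _ _) _
      rw [val_comp, val_sh (by omega), thr_lo (by omega) (by omega), thr_lo (by omega) (by omega)]
    · intro v hv
      change val (_ ≫ thr _ _) _ = val (thr _ _) _
      rw [val_comp, val_sh (by omega), thr_hi (by omega) (by omega), thr_hi (by omega) (by omega)]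

lemma ιB_nat {k l : SimplexCategory} (α : k ⟶ l) :
    dMap α ≫ sh (2 * l.len + 1) (2 * l.len + 2) 1 (by omega) =
      sh (2 * k.len + 1) (2 * k.len + 2) 1 (by omega) ≫ bMap α := by
  apply dext
  · intro v hv
    have := val_le α v
    rw [val_comp, val_comp, dMap_lo _ hv, val_sh (by omega), val_sh (by omega),
      add_comm v 1, bMap_lo _ hv, add_comm]
  · intro v hv
    have := val_le α v
    rw [val_comp, val_comp, dMap_hi _ hv, val_sh (by omega), val_sh (by omega),
      show k.len + 1 + v + 1 = k.len + 2 + v by omega, bMap_hi _ hv]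
    omega

def ιB : SHom shD shB where
  app k := sh (2 * k.len + 1) (2 * k.len + 2) 1 (by omega)
  nat α := ιB_nat α
  col k := by
    apply dext
    · intro v hv
      change val (_ ≫ thr _ _) _ = val (thr _ _) _
      rw [val_comp, val_sh (by omega), thr_lo (by omega) (by omega), thr_lo (by omega) (by omega)]
    · intro v hv
      change val (_ ≫ thr _ _) _ = val (thr _ _) _
      rw [val_comp, val_sh (by omega), thr_hi (by omega) (by omega), thr_hi (by omega) (by omega)]

lemma sh_mono {a b s : ℕ} (h : a + s ≤ b) : Mono (sh a b s h) := by
  rw [SimplexCategory.mono_iff_injective]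
  intro i j e
  have e' : (i : ℕ) + s = j + s := congrArg Fin.val e
  apply Fin.ext
  omega

def blT : Blocks ιT 1 where
  P n i := i
  O n i := n + 1 + i
  z n := 2 * n + 2
  hP {n i} h := by change i ≤ 2 * n + 2; omega
  hO {n i} h := by change n + 1 + i ≤ 2 * n + 2; omega
  hz n := by change 2 * n + 2 ≤ 2 * n + 2; omega
  cover {n v} h := by
    change v ≤ 2 * n + 2 at h
    by_cases h1 : v ≤ n
    · exact Or.inr ⟨v, h1, Or.inl rfl⟩
    by_cases h2 : v = 2 * n + 2
    · exact Or.inl h2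
    · exact Or.inr ⟨v - (n + 1), by omega, Or.inr (by omega)⟩
  injP h := h
  injO h := by omega
  ord := Or.inl (by intros; omega)
  mapP {n i} ρ h := tMap_lo ρ h
  mapO {n i} ρ h := tMap_hi ρ h
  mapz {n} ρ := tMap_top ρ
  colP {n i} h := by
    have : val (thr (2 * n + 2) n) i = 0 := thr_lo h (by omega)
    change val (thr (2 * n + 2) n) i ≠ 1
    omega
  colO {n i} h := thr_hi (a := 2 * n + 2) (t := n) (by omega) (by omega)
  colz {n} := thr_hi (a := 2 * n + 2) (t := n) (by omega) (by omega)
  fac {n m} g := by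
    constructor
    · rintro ⟨g', rfl⟩ j hj
      have : val g' j ≤ 2 * n + 1 := val_le g' j
      have e : val (g' ≫ ιT.app ⦋n⦌) j = val g' j + 0 :=
        (val_comp g' (ιT.app ⦋n⦌) j).trans (val_sh (h := by simp) this)
      rw [e]
      omega
    · intro h
      have hle : ∀ v ≤ m.len, val g v ≤ 2 * n + 1 := by
        intro v hv
        have := h v hv
        have : val g v ≤ 2 * n + 2 := val_le g v
        omega
      refine ⟨mkN m ⦋2 * n + 1⦌ (fun v => val g v) hle (fun v w h _ => val_mono g h), ?_⟩
      apply val_ext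
      intro v hv
      refine (val_comp _ (ιT.app ⦋n⦌) v).trans
          ((congrArg _ (val_mkN hv)).trans ?_)
      exact val_sh (h := by simp) (hle v hv)

def blB : Blocks ιB 0 where
  P n i := n + 2 + i
  O n i := 1 + i
  z n := 0
  hP {n i} h := by change n + 2 + i ≤ 2 * n + 2; omega
  hO {n i} h := by change 1 + i ≤ 2 * n + 2; omega
  hz n := by omega
  cover {n v} h := by
    change v ≤ 2 * n + 2 at h
    by_cases h1 : v = 0
    · exact Or.inl h1
    by_cases h2 : v ≤ n + 1
    · exact Or.inr ⟨v - 1, by omega, Or.inr (by omega)⟩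
    · exact Or.inr ⟨v - (n + 2), by omega, Or.inl (by omega)⟩
  injP h := by omega
  injO h := by omega
  ord := Or.inr (by intros; omega)
  mapP {n i} ρ h := bMap_hi ρ h
  mapO {n i} ρ h := bMap_lo ρ h
  mapz {n} ρ := bMap_bot ρ
  colP {n i} h := by
    have : val (thr (2 * n + 2) (n + 1)) (n + 2 + i) = 1 := thr_hi (by omega) (by omega)
    change val (thr (2 * n + 2) (n + 1)) (n + 2 + i) ≠ 0
    omega
  colO {n i} h := thr_lo (a := 2 * n + 2) (t := n + 1) (by omega) (by omega)
  colz {n} := thr_lo (a := 2 * n + 2) (t := n + 1) (by omega) (by omega)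
  fac {n m} g := by
    constructor
    · rintro ⟨g', rfl⟩ j hj
      have : val g' j ≤ 2 * n + 1 := val_le g' j
      have e : val (g' ≫ ιB.app ⦋n⦌) j = val g' j + 1 :=
        (val_comp g' (ιB.app ⦋n⦌) j).trans (val_sh (h := by simp) this)
      rw [e]
      omega
    · intro h
      have hle : ∀ v, val g v ≤ 2 * n + 2 := fun v => val_le g v
      have hle' : ∀ v, val g v - 1 ≤ 2 * n + 1 := by
        intro v
        have := hle v
        omega
      refine ⟨mkN m ⦋2 * n + 1⦌ (fun v => val g v - 1) (fun v _ => hle' v) (fun v w h _ => ?_), ?_⟩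
      · have := val_mono g h
        omega
      · apply val_ext
        intro v hv
        refine (val_comp _ (ιB.app ⦋n⦌) v).trans
          ((congrArg _ (val_mkN hv)).trans ?_)
        have e : val (ιB.app ⦋n⦌) (val g v - 1) = val g v - 1 + 1 :=
          val_sh (h := by simp) (hle' v)
        rw [e]
        have := h v hv
        omega

lemma hEquiv_TD {C : SSet.{0}} [SSet.Quasicategory C] (X Y : C _⦋0⦌) :
    HEquiv (Mp shT C X Y) (Mp shD C X Y) :=
  blT.hEquiv X Y (fun _ => sh_mono (by simp))

lemma hEquiv_BD {C : SSet.{0}} [SSet.Quasicategory C] (X Y : C _⦋0⦌) :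
    HEquiv (Mp shB C X Y) (Mp shD C X Y) :=
  blB.hEquiv X Y (fun _ => sh_mono (by simp))

end SSetAux


namespace SSetAux
open SSetPaper

section top

def vT (k : SimplexCategory) : (⦋k.len + 1⦌ : SimplexCategory) ⟶ ⦋2 * k.len + 2⦌ :=
  mkM _ _ (fun v => if v ≤ k.len then v else 2 * k.len + 2)
    (by intro v hv; split_ifs <;> omega) (by intro v w hv hw; split_ifs <;> omega)

lemma vT_lo {k : SimplexCategory} {v : ℕ} (h : v ≤ k.len) : val (vT k) v = v := by
  unfold vT
  rw [val_mkM (by omega), if_pos h]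

lemma vT_top {k : SimplexCategory} : val (vT k) (k.len + 1) = 2 * k.len + 2 := by
  unfold vT
  rw [val_mkM (by omega), if_neg (by omega)]

def cT (k : SimplexCategory) : (⦋2 * k.len + 2⦌ : SimplexCategory) ⟶ ⦋k.len + 1⦌ :=
  mkM _ _ (fun v => min v (k.len + 1))
    (by intro v hv; omega) (by intro v w hv hw; omega)

lemma cT_lo {k : SimplexCategory} {v : ℕ} (h : v ≤ k.len) : val (cT k) v = v := by
  unfold cT
  rw [val_mkM (by omega)]
  omega

lemma cT_hi {k : SimplexCategory} {v : ℕ} (h : k.len < v) (h' : v ≤ 2 * k.len + 2) :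
    val (cT k) v = k.len + 1 := by
  unfold cT
  rw [val_mkM (by omega)]
  omega

def hT (k : SimplexCategory) (φ : k ⟶ ⦋1⦌) :
    (⦋2 * k.len + 2⦌ : SimplexCategory) ⟶ ⦋2 * k.len + 2⦌ :=
  mkM _ _ (fun v => if v ≤ k.len then v else
      if val φ (v - (k.len + 1)) = 0 ∧ v ≤ 2 * k.len + 1 then v else 2 * k.len + 2)
    (by intro v hv; split_ifs <;> omega)
    (by
      intro v w hv hw
      have := val_mono φ (show v - (k.len + 1) ≤ w - (k.len + 1) by omega)
      split_ifs <;> omega)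

lemma hT_lo {k : SimplexCategory} (φ : k ⟶ ⦋1⦌) {v : ℕ} (h : v ≤ k.len) :
    val (hT k φ) v = v := by
  unfold hT
  rw [val_mkM (by omega), if_pos h]

lemma hT_hi {k : SimplexCategory} (φ : k ⟶ ⦋1⦌) {v : ℕ} (h : v ≤ k.len) :
    val (hT k φ) (k.len + 1 + v) = if val φ v = 0 then k.len + 1 + v else 2 * k.len + 2 := by
  unfold hT
  rw [val_mkM (by omega), if_neg (by omega), Nat.add_sub_cancel_left]
  congr 1
  apply propext
  constructor
  · exact fun h => h.1
  · exact fun h => ⟨h, by omega⟩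

lemma hT_top {k : SimplexCategory} (φ : k ⟶ ⦋1⦌) :
    val (hT k φ) (2 * k.len + 2) = 2 * k.len + 2 := by
  unfold hT
  rw [val_mkM (by omega), if_neg (by omega), if_neg (by omega)]

lemma vT_nat {k l : SimplexCategory} (α : k ⟶ l) : joinPt α ≫ vT l = vT k ≫ tMap α := by
  apply jext
  · intro v hv
    rw [val_comp, val_comp, joinPt_lo _ hv, vT_lo hv, vT_lo (val_le _ _), tMap_lo _ hv]
  · rw [val_comp, val_comp, joinPt_top, vT_top, vT_top, tMap_top]

lemma vT_col (k : SimplexCategory) :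
    vT k ≫ thr (2 * k.len + 2) k.len = thr (k.len + 1) k.len := by
  apply jext
  · intro v hv
    rw [val_comp, vT_lo hv, thr_lo (by omega) (by omega), thr_lo (by omega) (by omega)]
  · rw [val_comp, vT_top, thr_hi (by omega) (by omega), thr_hi (by omega) (by omega)]

lemma cT_nat {k l : SimplexCategory} (α : k ⟶ l) : tMap α ≫ cT l = cT k ≫ joinPt α := by
  apply text
  · intro v hv
    rw [val_comp, val_comp, tMap_lo _ hv, cT_lo hv, cT_lo (val_le _ _), joinPt_lo _ hv]
  · intro v hv
    have := val_le α v
    rw [val_comp, val_comp, tMap_hi _ hv, cT_hi (by omega) (by omega),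
      cT_hi (by omega) (by omega), joinPt_top]
  · rw [val_comp, val_comp, tMap_top, cT_hi (by omega) (by omega),
      cT_hi (by omega) (by omega), joinPt_top]

lemma cT_col (k : SimplexCategory) :
    cT k ≫ thr (k.len + 1) k.len = thr (2 * k.len + 2) k.len := by
  apply text
  · intro v hv
    rw [val_comp, cT_lo hv, thr_lo (by omega) (by omega), thr_lo (by omega) (by omega)]
  · intro v hv
    rw [val_comp, cT_hi (by omega) (by omega), thr_hi (by omega) (by omega),
      thr_hi (by omega) (by omega)]
  · rw [val_comp, cT_hi (by omega) (by omega), thr_hi (by omega) (by omega),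
      thr_hi (by omega) (by omega)]

lemma vT_cT (k : SimplexCategory) : vT k ≫ cT k = 𝟙 _ := by
  apply jext
  · intro v hv
    rw [val_comp, vT_lo hv, cT_lo hv, val_id_mk (by omega)]
  · rw [val_comp, vT_top, cT_hi (by omega) (by omega), val_id_mk (by omega)]

lemma hT_nat {k l : SimplexCategory} (α : k ⟶ l) (φ : l ⟶ ⦋1⦌) :
    tMap α ≫ hT l φ = hT k (α ≫ φ) ≫ tMap α := by
  apply text
  · intro v hv
    rw [val_comp, val_comp, tMap_lo _ hv, hT_lo _ hv, hT_lo _ (val_le _ _), tMap_lo _ hv]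
  · intro v hv
    rw [val_comp, val_comp, tMap_hi _ hv, hT_hi _ hv, hT_hi _ (val_le _ _), val_comp]
    split_ifs with h
    · rw [tMap_hi _ hv]
    · rw [tMap_top]
  · rw [val_comp, val_comp, tMap_top, hT_top, hT_top, tMap_top]

lemma hT_col (k : SimplexCategory) (φ : k ⟶ ⦋1⦌) :
    hT k φ ≫ thr (2 * k.len + 2) k.len = thr (2 * k.len + 2) k.len := by
  apply text
  · intro v hv
    rw [val_comp, hT_lo _ hv]
  · intro v hv
    rw [val_comp, hT_hi _ hv]
    split_ifs
    · rfl
    · rw [thr_hi (by omega) (by omega), thr_hi (by omega) (by omega)]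
  · rw [val_comp, hT_top]

lemma hT_zero (k : SimplexCategory) : hT k (SimplexCategory.const k ⦋1⦌ 0) = 𝟙 _ := by
  apply text
  · intro v hv
    rw [hT_lo _ hv, val_id_mk (by omega)]
  · intro v hv
    rw [hT_hi _ hv, val_id_mk (by omega)]
    exact if_pos rfl
  · rw [hT_top, val_id_mk (by omega)]

lemma hT_one (k : SimplexCategory) : hT k (SimplexCategory.const k ⦋1⦌ 1) = cT k ≫ vT k := by
  apply text
  · intro v hv
    rw [hT_lo _ hv, val_comp, cT_lo hv, vT_lo hv]
  · intro v hv
    rw [hT_hi _ hv, val_comp, cT_hi (by omega) (by omega), vT_top]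
    exact if_neg Nat.one_ne_zero
  · rw [hT_top, val_comp, cT_hi (by omega) (by omega), vT_top]

def sVT : SHom shJ shT := ⟨vT, vT_nat, vT_col⟩
def sCT : SHom shT shJ := ⟨cT, cT_nat, cT_col⟩
def sHT : SHtpy (SHom.id shT) (sCT.comp sVT) := ⟨hT, hT_nat, hT_col, hT_zero, hT_one⟩

lemma hEquiv_TJ (C : SSet.{0}) (X Y : C _⦋0⦌) : HEquiv (Mp shT C X Y) (Mp shJ C X Y) :=
  HEquiv.of_shape sVT sCT (SHom.ext (funext vT_cT)) (Or.inl ⟨sHT⟩) C X Y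

end top

section bot

def vB (k : SimplexCategory) : (⦋k.len + 1⦌ : SimplexCategory) ⟶ ⦋2 * k.len + 2⦌ :=
  mkM _ _ (fun v => if v = 0 then 0 else k.len + 1 + v)
    (by intro v hv; split_ifs <;> omega) (by intro v w hv hw; split_ifs <;> omega)

lemma vB_bot {k : SimplexCategory} : val (vB k) 0 = 0 := by
  unfold vB
  rw [val_mkM (by omega)]
  exact if_pos rfl

lemma vB_hi {k : SimplexCategory} {v : ℕ} (h : v ≤ k.len) :
    val (vB k) (1 + v) = k.len + 2 + v := by
  unfold vB
  rw [val_mkM (by omega), if_neg (by omega)]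
  omega

def cB (k : SimplexCategory) : (⦋2 * k.len + 2⦌ : SimplexCategory) ⟶ ⦋k.len + 1⦌ :=
  mkM _ _ (fun v => v - (k.len + 1))
    (by intro v hv; omega) (by intro v w hv hw; omega)

lemma cB_lo {k : SimplexCategory} {v : ℕ} (h : v ≤ k.len + 1) : val (cB k) v = 0 := by
  unfold cB
  rw [val_mkM (by omega)]
  omega

lemma cB_hi {k : SimplexCategory} {v : ℕ} (h : v ≤ k.len) :
    val (cB k) (k.len + 2 + v) = 1 + v := by
  unfold cB
  rw [val_mkM (by omega)]
  omega

def hB (k : SimplexCategory) (φ : k ⟶ ⦋1⦌) :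
    (⦋2 * k.len + 2⦌ : SimplexCategory) ⟶ ⦋2 * k.len + 2⦌ :=
  mkM _ _ (fun v => if v ≤ k.len + 1 ∧ val φ (v - 1) = 0 then 0 else v)
    (by intro v hv; split_ifs <;> omega)
    (by
      intro v w hv hw
      have := val_mono φ (show v - 1 ≤ w - 1 by omega)
      split_ifs <;> omega)

lemma hB_bot {k : SimplexCategory} (φ : k ⟶ ⦋1⦌) : val (hB k φ) 0 = 0 := by
  unfold hB
  rw [val_mkM (by omega)]
  split_ifs <;> rfl

lemma hB_lo {k : SimplexCategory} (φ : k ⟶ ⦋1⦌) {v : ℕ} (h : v ≤ k.len) :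
    val (hB k φ) (1 + v) = if val φ v = 0 then 0 else 1 + v := by
  unfold hB
  rw [val_mkM (by omega), Nat.add_sub_cancel_left]
  congr 1
  apply propext
  constructor
  · exact fun h => h.2
  · exact fun h => ⟨by omega, h⟩

lemma hB_hi {k : SimplexCategory} (φ : k ⟶ ⦋1⦌) {v : ℕ} (h : v ≤ k.len) :
    val (hB k φ) (k.len + 2 + v) = k.len + 2 + v := by
  unfold hB
  rw [val_mkM (by omega), if_neg (by omega)]

lemma vB_nat {k l : SimplexCategory} (α : k ⟶ l) : joinPtL α ≫ vB l = vB k ≫ bMap α := by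
  apply jlext
  · rw [val_comp, val_comp, joinPtL_bot, vB_bot, vB_bot, bMap_bot]
  · intro v hv
    rw [val_comp, val_comp, joinPtL_hi _ hv, vB_hi hv, vB_hi (val_le _ _), bMap_hi _ hv]

lemma vB_col (k : SimplexCategory) :
    vB k ≫ thr (2 * k.len + 2) (k.len + 1) = thr (k.len + 1) 0 := by
  apply jlext
  · rw [val_comp, vB_bot, thr_lo (by omega) (by omega), thr_lo (by omega) (by omega)]
  · intro v hv
    rw [val_comp, vB_hi hv, thr_hi (by omega) (by omega), thr_hi (by omega) (by omega)]

lemma cB_nat {k l : SimplexCategory} (α : k ⟶ l) : bMap α ≫ cB l = cB k ≫ joinPtL α := by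
  apply bext
  · rw [val_comp, val_comp, bMap_bot, cB_lo (by omega), cB_lo (by omega), joinPtL_bot]
  · intro v hv
    have := val_le α v
    rw [val_comp, val_comp, bMap_lo _ hv, cB_lo (by omega), cB_lo (by omega), joinPtL_bot]
  · intro v hv
    rw [val_comp, val_comp, bMap_hi _ hv, cB_hi hv, cB_hi (val_le _ _), joinPtL_hi _ hv]

lemma cB_col (k : SimplexCategory) :
    cB k ≫ thr (k.len + 1) 0 = thr (2 * k.len + 2) (k.len + 1) := by
  apply bext
  · rw [val_comp, cB_lo (by omega), thr_lo (by omega) (by omega), thr_lo (by omega) (by omega)]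
  · intro v hv
    rw [val_comp, cB_lo (by omega), thr_lo (by omega) (by omega), thr_lo (by omega) (by omega)]
  · intro v hv
    rw [val_comp, cB_hi hv, thr_hi (by omega) (by omega), thr_hi (by omega) (by omega)]

lemma vB_cB (k : SimplexCategory) : vB k ≫ cB k = 𝟙 _ := by
  apply jlext
  · rw [val_comp, vB_bot, cB_lo (by omega), val_id_mk (by omega)]
  · intro v hv
    rw [val_comp, vB_hi hv, cB_hi hv, val_id_mk (by omega)]

lemma hB_nat {k l : SimplexCategory} (α : k ⟶ l) (φ : l ⟶ ⦋1⦌) :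
    bMap α ≫ hB l φ = hB k (α ≫ φ) ≫ bMap α := by
  apply bext
  · rw [val_comp, val_comp, bMap_bot, hB_bot, hB_bot, bMap_bot]
  · intro v hv
    rw [val_comp, val_comp, bMap_lo _ hv, hB_lo _ hv, hB_lo _ (val_le _ _), val_comp]
    split_ifs with h
    · rw [bMap_bot]
    · rw [bMap_lo _ hv]
  · intro v hv
    rw [val_comp, val_comp, bMap_hi _ hv, hB_hi _ hv, hB_hi _ (val_le _ _), bMap_hi _ hv]

lemma hB_col (k : SimplexCategory) (φ : k ⟶ ⦋1⦌) :
    hB k φ ≫ thr (2 * k.len + 2) (k.len + 1) = thr (2 * k.len + 2) (k.len + 1) := by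
  apply bext
  · rw [val_comp, hB_bot]
  · intro v hv
    rw [val_comp, hB_lo _ hv]
    split_ifs
    · rw [thr_lo (by omega) (by omega), thr_lo (by omega) (by omega)]
    · rfl
  · intro v hv
    rw [val_comp, hB_hi _ hv]

lemma hB_zero (k : SimplexCategory) : hB k (SimplexCategory.const k ⦋1⦌ 0) = cB k ≫ vB k := by
  apply bext
  · rw [hB_bot, val_comp, cB_lo (by omega), vB_bot]
  · intro v hv
    rw [hB_lo _ hv, val_comp, cB_lo (by omega), vB_bot]
    exact if_pos rfl
  · intro v hv
    rw [hB_hi _ hv, val_comp, cB_hi hv, vB_hi hv]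

lemma hB_one (k : SimplexCategory) : hB k (SimplexCategory.const k ⦋1⦌ 1) = 𝟙 _ := by
  apply bext
  · rw [hB_bot, val_id_mk (by omega)]
  · intro v hv
    rw [hB_lo _ hv, val_id_mk (by omega)]
    exact if_neg Nat.one_ne_zero
  · intro v hv
    rw [hB_hi _ hv, val_id_mk (by omega)]

def sVB : SHom shL shB := ⟨vB, vB_nat, vB_col⟩
def sCB : SHom shB shL := ⟨cB, cB_nat, cB_col⟩
def sHB : SHtpy (sCB.comp sVB) (SHom.id shB) := ⟨hB, hB_nat, hB_col, hB_zero, hB_one⟩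

lemma hEquiv_BL (C : SSet.{0}) (X Y : C _⦋0⦌) : HEquiv (Mp shB C X Y) (Mp shL C X Y) :=
  HEquiv.of_shape sVB sCB (SHom.ext (funext vB_cB)) (Or.inr ⟨sHB⟩) C X Y

end bot

end SSetAux


namespace SSetAux
open SSetPaper

lemma cst_zero (C : SSet.{0}) (X : C _⦋0⦌) : cst C X ⦋0⦌ = X := by
  unfold cst
  rw [toZero_unique (SimplexCategory.const ⦋0⦌ ⦋0⦌ 0) (𝟙 _), op_id, FunctorToTypes.map_id_apply]

lemma val_botIncl {k : SimplexCategory} {v : ℕ} (hv : v ≤ k.len) : val (botIncl k) v = v :=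
  val_fin (botIncl k) ⟨v, by omega⟩

lemma val_topIncl {k : SimplexCategory} {v : ℕ} (hv : v ≤ k.len) : val (topIncl k) v = v + 1 :=
  val_fin (topIncl k) ⟨v, by omega⟩

lemma val_lastVtx {k : SimplexCategory} (v : ℕ) : val (lastVtx k) v = k.len + 1 := rfl
lemma val_zeroVtx {k : SimplexCategory} (v : ℕ) : val (zeroVtx k) v = 0 := rfl

lemma good_J (C : SSet.{0}) (X Y : C _⦋0⦌) (k : SimplexCategory)
    (σ : C.obj (op ⦋k.len + 1⦌)) : Good shJ C X Y k σ ↔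
    (C.map (botIncl k).op σ = C.map (SimplexCategory.const k ⦋0⦌ 0).op X ∧
      C.map (lastVtx k).op σ = Y) := by
  constructor
  · intro h
    constructor
    · refine (h k (botIncl k)).1 ?_
      rw [eq_const_iff]
      intro j hj
      refine (val_comp (botIncl k) (thr (k.len + 1) k.len) j).trans ?_
      rw [val_botIncl hj, thr_lo (by omega) (by omega)]
      rfl
    · refine ((h ⦋0⦌ (lastVtx k)).2 ?_).trans (cst_zero C Y)
      rw [eq_const_iff]
      intro j hj
      refine (val_comp (lastVtx k) (thr (k.len + 1) k.len) j).trans ?_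
      rw [val_lastVtx, thr_hi (by omega) (by omega)]
      rfl
  · rintro ⟨h1, h2⟩ m (θ : m ⟶ ⦋k.len + 1⦌)
    have hle : ∀ v, val θ v ≤ k.len + 1 := fun v => val_le θ v
    constructor
    · intro (e : θ ≫ thr (k.len + 1) k.len = SimplexCategory.const m ⦋1⦌ 0)
      rw [eq_const_iff] at e
      have e' : ∀ j ≤ m.len, val θ j ≤ k.len := by
        intro j hj
        by_contra hne
        have a := (val_comp θ (thr (k.len + 1) k.len) j).symm.trans (e j hj)
        rw [thr_hi (by omega) (hle j)] at a
        exact absurd a one_ne_zero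
      have : θ = mkN m k (fun j => val θ j) e' (fun v w h _ => val_mono θ h) ≫ botIncl k := by
        apply val_ext
        intro v hv
        rw [val_comp, val_mkN hv, val_botIncl (e' v hv)]
      rw [this]
      refine (map_map C _ (botIncl k) σ).symm.trans ?_
      rw [h1]
      exact map_cst C X _
    · intro (e : θ ≫ thr (k.len + 1) k.len = SimplexCategory.const m ⦋1⦌ 1)
      rw [eq_const_iff] at e
      have e' : ∀ j ≤ m.len, val θ j = k.len + 1 := by
        intro j hj
        by_contra hne
        have := hle j
        have a := (val_comp θ (thr (k.len + 1) k.len) j).symm.trans (e j hj)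
        rw [thr_lo (by omega) (hle j)] at a
        exact absurd a zero_ne_one
      have : θ = SimplexCategory.const m ⦋0⦌ 0 ≫ lastVtx k := by
        apply val_ext
        intro v hv
        exact e' v hv
      rw [this]
      refine (map_map C _ (lastVtx k) σ).symm.trans ?_
      rw [h2]
      rfl

lemma good_L (C : SSet.{0}) (X Y : C _⦋0⦌) (k : SimplexCategory)
    (σ : C.obj (op ⦋k.len + 1⦌)) : Good shL C X Y k σ ↔
    (C.map (zeroVtx k).op σ = X ∧
      C.map (topIncl k).op σ = C.map (SimplexCategory.const k ⦋0⦌ 0).op Y) := by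
  constructor
  · intro h
    constructor
    · refine ((h ⦋0⦌ (zeroVtx k)).1 ?_).trans (cst_zero C X)
      rw [eq_const_iff]
      intro j hj
      refine (val_comp (zeroVtx k) (thr (k.len + 1) 0) j).trans ?_
      rw [val_zeroVtx, thr_lo (by omega) (by omega)]
      rfl
    · refine (h k (topIncl k)).2 ?_
      rw [eq_const_iff]
      intro j hj
      refine (val_comp (topIncl k) (thr (k.len + 1) 0) j).trans ?_
      rw [val_topIncl hj, thr_hi (by omega) (by omega)]
      rfl
  · rintro ⟨h1, h2⟩ m (θ : m ⟶ ⦋k.len + 1⦌)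
    have hle : ∀ v, val θ v ≤ k.len + 1 := fun v => val_le θ v
    constructor
    · intro (e : θ ≫ thr (k.len + 1) 0 = SimplexCategory.const m ⦋1⦌ 0)
      rw [eq_const_iff] at e
      have e' : ∀ j ≤ m.len, val θ j = 0 := by
        intro j hj
        by_contra hne
        have a := (val_comp θ (thr (k.len + 1) 0) j).symm.trans (e j hj)
        rw [thr_hi (by omega) (hle j)] at a
        exact absurd a one_ne_zero
      have : θ = SimplexCategory.const m ⦋0⦌ 0 ≫ zeroVtx k := by
        apply val_ext
        intro v hv
        exact e' v hv
      rw [this]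
      refine (map_map C _ (zeroVtx k) σ).symm.trans ?_
      rw [h1]
      rfl
    · intro (e : θ ≫ thr (k.len + 1) 0 = SimplexCategory.const m ⦋1⦌ 1)
      rw [eq_const_iff] at e
      have e' : ∀ j ≤ m.len, 0 < val θ j := by
        intro j hj
        by_contra hne
        have a := (val_comp θ (thr (k.len + 1) 0) j).symm.trans (e j hj)
        rw [thr_lo (by omega) (hle j)] at a
        exact absurd a zero_ne_one
      have hb : ∀ j ≤ m.len, val θ j - 1 ≤ k.len := by
        intro j hj
        have := hle j
        omega
      have hm : ∀ v w, v ≤ w → w ≤ m.len → val θ v - 1 ≤ val θ w - 1 := by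
        intro v w h _
        have := val_mono θ h
        omega
      have : θ = mkN m k (fun j => val θ j - 1) hb hm ≫ topIncl k := by
        apply val_ext
        intro v hv
        rw [val_comp, val_mkN hv, val_topIncl (hb v hv)]
        have := e' v hv
        omega
      rw [this]
      refine (map_map C _ (topIncl k) σ).symm.trans ?_
      rw [h2]
      exact map_cst C Y _

lemma hEquiv_J (C : SSet.{0}) (X Y : C _⦋0⦌) : HEquiv (RightHom C X Y) (Mp shJ C X Y) :=
  HEquiv.of_inv
    { app := fun a => ↾fun σ => ⟨σ.1, (good_J C X Y a.unop σ.1).2 σ.2⟩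
      naturality := fun _ _ _ => rfl }
    { app := fun a => ↾fun σ => ⟨σ.1, (good_J C X Y a.unop σ.1).1 σ.2⟩
      naturality := fun _ _ _ => rfl }
    rfl rfl

lemma hEquiv_L (C : SSet.{0}) (X Y : C _⦋0⦌) : HEquiv (LeftHom C X Y) (Mp shL C X Y) :=
  HEquiv.of_inv
    { app := fun a => ↾fun σ => ⟨σ.1, (good_L C X Y a.unop σ.1).2 σ.2⟩
      naturality := fun _ _ _ => rfl }
    { app := fun a => ↾fun σ => ⟨σ.1, (good_L C X Y a.unop σ.1).1 σ.2⟩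
      naturality := fun _ _ _ => rfl }
    rfl rfl

theorem main (C : SSet.{0}) [SSet.Quasicategory C] (X Y : C _⦋0⦌) :
    HEquiv (RightHom C X Y) (LeftHom C X Y) :=
  (hEquiv_J C X Y).trans <| (hEquiv_TJ C X Y).symm.trans <| (hEquiv_TD X Y).trans <|
    (hEquiv_BD X Y).symm.trans <| (hEquiv_BL C X Y).trans (hEquiv_L C X Y).symm

end SSetAux


/-!
STATEMENT 1: Let `C` be a quasicategory and let `X` and `Y` be objects of `C`.  Then the
two models of the mapping space, `Hom_C(X,Y)` and `Hom^L_C(X,Y)`, are homotopy equivalent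
simplicial sets.
-/

open SSetPaper in
theorem rightHom_homotopyEquivalent_leftHom
    (C : SSet.{0}) [SSet.Quasicategory C] (X Y : C _⦋0⦌) :
    ∃ f : RightHom C X Y ⟶ LeftHom C X Y, IsHomotopyEquivalence f := by
  exact SSetAux.main C X Y
end

section
/- Let C be a quasicategory. An object X of C is a terminal object, i.e. the projection C_{/X} → C is a trivial Kan fibration, if and only if for every object X′ of C the mapping space Hom_C(X′, X) is a contractible Kan complex. -/
open CategoryTheory Simplicial Opposite

namespace SSetPaper

universe u

/-- The slice `C_{/X}`: its `n`-simplices are the `(n+1)`-simplices of `C` whose final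
vertex is `X`, with faces and degeneracies inherited from `C`. -/
def Slice (C : SSet.{u}) (X : C _⦋0⦌) : SSet.{u} where
  obj a := { σ : C.obj (op ⦋a.unop.len + 1⦌) // C.map (lastVtx a.unop).op σ = X }
  map {a b} f := ↾fun σ => ⟨C.map (joinPt f.unop).op σ.1, by
    rw [← FunctorToTypes.map_comp_apply, ← op_comp, lastVtx_joinPt]
    exact σ.2⟩
  map_id a := by
    refine ConcreteCategory.hom_ext _ _ fun σ => ?_
    apply Subtype.ext
    show C.map (joinPt (𝟙 a).unop).op σ.1 = σ.1
    rw [unop_id, joinPt_id, op_id, FunctorToTypes.map_id_apply]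
  map_comp {a b c} f g := by
    refine ConcreteCategory.hom_ext _ _ fun σ => ?_
    apply Subtype.ext
    show C.map (joinPt (f ≫ g).unop).op σ.1
        = C.map (joinPt g.unop).op (C.map (joinPt f.unop).op σ.1)
    rw [unop_comp, joinPt_comp, op_comp, FunctorToTypes.map_comp_apply]

/-- The projection `C_{/X} ⟶ C`, sending an `(n+1)`-simplex with final vertex `X` to its
face opposite the final vertex. -/
def sliceProj (C : SSet.{u}) (X : C _⦋0⦌) : Slice C X ⟶ C where
  app a := ↾fun σ => C.map (botIncl a.unop).op σ.1
  naturality a b f := by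
    refine ConcreteCategory.hom_ext _ _ fun σ => ?_
    show C.map (botIncl b.unop).op (C.map (joinPt f.unop).op σ.1)
        = C.map f (C.map (botIncl a.unop).op σ.1)
    rw [← FunctorToTypes.map_comp_apply, ← op_comp, botIncl_joinPt, op_comp,
      FunctorToTypes.map_comp_apply]
    rfl

/-- A map of simplicial sets is a trivial Kan fibration if every commutative square
whose left edge is a boundary inclusion `∂Δ[n] ⊆ Δ[n]` admits a diagonal lift. -/
def IsTrivialKanFibration {X Y : SSet.{0}} (p : X ⟶ Y) : Prop :=
  ∀ (n : ℕ) (t : (∂Δ[n] : SSet) ⟶ X) (b : (Δ[n] : SSet) ⟶ Y),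
    t ≫ p = (SSet.boundary n).ι ≫ b →
    ∃ l : (Δ[n] : SSet) ⟶ X, (SSet.boundary n).ι ≫ l = t ∧ l ≫ p = b

/-- An object `X` of a quasicategory `C` is terminal if the projection `C_{/X} ⟶ C`
is a trivial Kan fibration. -/
def IsTerminalObject (C : SSet.{0}) (X : C _⦋0⦌) : Prop :=
  IsTrivialKanFibration (sliceProj C X)

/-- A simplicial set is contractible if every map `∂Δ[n] ⟶ S` extends to `Δ[n] ⟶ S`
(equivalently, the map `S ⟶ Δ[0]` is a trivial Kan fibration). -/
def IsContractible (S : SSet.{0}) : Prop :=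
  ∀ (n : ℕ) (t : (∂Δ[n] : SSet) ⟶ S), ∃ l : (Δ[n] : SSet) ⟶ S, (SSet.boundary n).ι ≫ l = t

/-- A simplicial set `S` is a Kan complex if for every `n : ℕ` and `0 ≤ i ≤ n` every map
`Λ[n, i] ⟶ S` extends to `Δ[n] ⟶ S` (the definition of `SSet.KanComplex` in the older
Mathlib, which includes the case `n = 0`). -/
class KanComplex (S : SSet.{u}) : Prop where
  hornFilling : ∀ ⦃n : ℕ⦄ ⦃i : Fin (n + 1)⦄ (σ₀ : (Λ[n, i] : SSet) ⟶ S),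
    ∃ σ : Δ[n] ⟶ S, σ₀ = (SSet.horn n i).ι ≫ σ

end SSetPaper


namespace SSetPaper

/-- The set of vertices hit by a simplex of `Δ[N]`. -/
def rg {a : SimplexCategory} {N : ℕ} (x : a ⟶ ⦋N⦌) : Set (Fin (N + 1)) :=
  Set.range x.toOrderHom

lemma mem_rg {a : SimplexCategory} {N : ℕ} (x : a ⟶ ⦋N⦌) (i : Fin (N + 1)) :
    i ∈ rg x ↔ ∃ t, x.toOrderHom t = i := Iff.rfl

lemma rg_comp_subset {a b : SimplexCategory} {N : ℕ} (f : b ⟶ a) (x : a ⟶ ⦋N⦌) :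
    rg (f ≫ x) ⊆ rg x := by
  rintro _ ⟨t, rfl⟩
  exact ⟨f.toOrderHom t, rfl⟩

lemma rg_comp {a : SimplexCategory} {m N : ℕ} (y : a ⟶ ⦋m⦌) (e : ⦋m⦌ ⟶ (⦋N⦌ : SimplexCategory)) :
    rg (y ≫ e) = (e.toOrderHom : Fin (m + 1) → Fin (N + 1)) '' rg y := by
  ext i
  constructor
  · rintro ⟨t, rfl⟩
    exact ⟨_, ⟨t, rfl⟩, rfl⟩
  · rintro ⟨_, ⟨t, rfl⟩, rfl⟩
    exact ⟨t, rfl⟩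

lemma mapc (C : SSet.{0}) {a b c : SimplexCategory} (f : a ⟶ b) (g : b ⟶ c) (σ : C.obj (op c)) :
    C.map (f ≫ g).op σ = C.map f.op (C.map g.op σ) := by
  rw [op_comp, Functor.map_comp_apply]

/-- A partially defined map from `Δ[N]` to `C`, defined on the simplices whose vertex
set satisfies `D`. -/
structure PM (C : SSet.{0}) (N : ℕ) (D : Set (Fin (N + 1)) → Prop) where
  v : ∀ (a : SimplexCategory) (x : a ⟶ ⦋N⦌), D (rg x) → C.obj (op a)
  nat : ∀ (a b : SimplexCategory) (f : b ⟶ a) (x : a ⟶ ⦋N⦌) (h : D (rg x)) (h' : D (rg (f ≫ x))),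
    v b (f ≫ x) h' = C.map f.op (v a x h)

/-- Downward closed domains. -/
def Dn {N : ℕ} (D : Set (Fin (N + 1)) → Prop) : Prop := ∀ S T, S ⊆ T → D T → D S

/-- `q` extends `p`. -/
def Extends {C : SSet.{0}} {N : ℕ} {D D' : Set (Fin (N + 1)) → Prop} (p : PM C N D)
    (q : PM C N D') : Prop :=
  ∀ a x h, ∃ h', q.v a x h' = p.v a x h

/-- Every partial map on `D` extends to `D'`. -/
def Ext (C : SSet.{0}) {N : ℕ} (D D' : Set (Fin (N + 1)) → Prop) : Prop :=
  ∀ p : PM C N D, ∃ q : PM C N D', Extends p q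

variable {C : SSet.{0}} {N : ℕ}

lemma Extends.trans {D D' D'' : Set (Fin (N + 1)) → Prop} {p : PM C N D} {q : PM C N D'}
    {r : PM C N D''} (h : Extends p q) (h' : Extends q r) : Extends p r := by
  intro a x hx
  obtain ⟨h1, e1⟩ := h a x hx
  obtain ⟨h2, e2⟩ := h' a x h1
  exact ⟨h2, e2.trans e1⟩

lemma Ext.trans {D D' D'' : Set (Fin (N + 1)) → Prop} (h : Ext C D D') (h' : Ext C D' D'') :
    Ext C D D'' := by
  intro p
  obtain ⟨q, hq⟩ := h p
  obtain ⟨r, hr⟩ := h' q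
  exact ⟨r, hq.trans hr⟩

lemma Ext.congr {D D' E E' : Set (Fin (N + 1)) → Prop} (h : Ext C D D')
    (h1 : ∀ T, D T ↔ E T) (h2 : ∀ T, D' T ↔ E' T) : Ext C E E' := by
  have e1 : D = E := funext fun T => propext (h1 T)
  have e2 : D' = E' := funext fun T => propext (h2 T)
  subst e1 e2
  exact h

/-- restriction of the domain -/
def PM.restrict {D D' : Set (Fin (N + 1)) → Prop} (p : PM C N D) (h : ∀ T, D' T → D T) :
    PM C N D' where
  v a x hx := p.v a x (h _ hx)
  nat a b f x hx hx' := p.nat a b f x _ _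

open Classical in
/-- gluing -/
noncomputable def PM.glue {D D' : Set (Fin (N + 1)) → Prop} (p : PM C N D) (q : PM C N D')
    (hD : Dn D) (hD' : Dn D') (hpq : ∀ a x h h', p.v a x h = q.v a x h') :
    PM C N (fun T => D T ∨ D' T) where
  v a x hx := if h : D (rg x) then p.v a x h else q.v a x (hx.resolve_left h)
  nat a b f x hx hx' := by
    by_cases h : D (rg x)
    · have h' : D (rg (f ≫ x)) := hD _ _ (rg_comp_subset f x) h
      rw [dif_pos h, dif_pos h']
      exact p.nat ..
    · have h1 := hx.resolve_left h
      have h' : D' (rg (f ≫ x)) := hD' _ _ (rg_comp_subset f x) h1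
      rw [dif_neg h, ← q.nat _ _ f x h1 h']
      split_ifs with h2
      · exact hpq ..
      · rfl

lemma PM.glue_left {D D' : Set (Fin (N + 1)) → Prop} (p : PM C N D) (q : PM C N D')
    (hD : Dn D) (hD' : Dn D') (hpq : ∀ a x h h', p.v a x h = q.v a x h') :
    Extends p (p.glue q hD hD' hpq) := by
  intro a x h
  exact ⟨Or.inl h, dif_pos h⟩

lemma PM.glue_right {D D' : Set (Fin (N + 1)) → Prop} (p : PM C N D) (q : PM C N D')
    (hD : Dn D) (hD' : Dn D') (hpq : ∀ a x h h', p.v a x h = q.v a x h') :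
    Extends q (p.glue q hD hD' hpq) := by
  intro a x h
  refine ⟨Or.inr h, ?_⟩
  by_cases h' : D (rg x)
  · exact (dif_pos h').trans (hpq ..)
  · exact dif_neg h'

lemma Ext.union {D B : Set (Fin (N + 1)) → Prop} (hD : Dn D) (hB : Dn B)
    (h : Ext C (fun T => D T ∧ B T) B) : Ext C D (fun T => D T ∨ B T) := by
  intro p
  obtain ⟨q, hq⟩ := h (p.restrict fun T hT => hT.1)
  have hpq : ∀ a x h h', p.v a x h = q.v a x h' := ?_
  · exact ⟨p.glue q hD hB hpq, PM.glue_left p q hD hB hpq⟩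
  intro a x h h'
  obtain ⟨_, e⟩ := hq a x ⟨h, h'⟩
  exact e.symm

/-- the total map associated to a simplex -/
def PM.ofSimplex (σ : C.obj (op ⦋N⦌)) : PM C N (fun _ => True) where
  v a x _ := C.map x.op σ
  nat a b f x _ _ := mapc C f x σ

/-- pull back along a map -/
def PM.pull {m : ℕ} {D : Set (Fin (N + 1)) → Prop} (p : PM C N D)
    (e : ⦋m⦌ ⟶ (⦋N⦌ : SimplexCategory)) {D' : Set (Fin (m + 1)) → Prop}
    (hD : ∀ T, D' T → D ((e.toOrderHom : Fin (m + 1) → Fin (N + 1)) '' T)) : PM C m D' where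
  v a y hy := p.v a (y ≫ e) (by rw [rg_comp]; exact hD _ hy)
  nat a b f y hy hy' := by
    have := p.nat a b f (y ≫ e) (by rw [rg_comp]; exact hD _ hy)
      (by rw [← Category.assoc, rg_comp]; exact hD _ hy')
    rw [← this]
    congr 1

/-- factor through a mono -/
lemma exists_factor {a : SimplexCategory} {m : ℕ} (e : ⦋m⦌ ⟶ (⦋N⦌ : SimplexCategory))
    (he : Function.Injective e.toOrderHom) (x : a ⟶ ⦋N⦌)
    (hx : rg x ⊆ rg e) : ∃ y : a ⟶ ⦋m⦌, y ≫ e = x := by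
  have hx' : ∀ t, ∃ s, e.toOrderHom s = x.toOrderHom t := fun t => hx ⟨t, rfl⟩
  choose s hs using hx'
  have hsm : StrictMono e.toOrderHom := e.toOrderHom.monotone.strictMono_of_injective he
  refine ⟨SimplexCategory.Hom.mk ⟨s, ?_⟩, ?_⟩
  · intro t t' htt
    rw [← hsm.le_iff_le, hs, hs]
    exact x.toOrderHom.monotone htt
  · apply SimplexCategory.Hom.ext
    apply OrderHom.ext
    funext t
    exact hs t

lemma cancel_e {a : SimplexCategory} {m : ℕ} (e : ⦋m⦌ ⟶ (⦋N⦌ : SimplexCategory))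
    (he : Function.Injective e.toOrderHom) {y y' : a ⟶ ⦋m⦌} (h : y ≫ e = y' ≫ e) : y = y' := by
  have : Mono e := SimplexCategory.mono_iff_injective.2 he
  exact (cancel_mono e).1 h

/-- push forward along a mono -/
lemma PM.exists_push {m : ℕ} {D : Set (Fin (m + 1)) → Prop} (p : PM C m D)
    (e : ⦋m⦌ ⟶ (⦋N⦌ : SimplexCategory)) (he : Function.Injective e.toOrderHom)
    {D' : Set (Fin (N + 1)) → Prop} (hD : ∀ T, D' T → T ⊆ rg e ∧
      D ((e.toOrderHom : Fin (m + 1) → Fin (N + 1)) ⁻¹' T)) :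
    ∃ q : PM C N D', ∀ a y h h', q.v a (y ≫ e) h = p.v a y h' := by
  have key : ∀ (a : SimplexCategory) (x : a ⟶ ⦋N⦌), D' (rg x) →
      ∃ y : a ⟶ ⦋m⦌, y ≫ e = x := fun a x hx => exists_factor e he x (hD _ hx).1
  choose s hs using key
  have hr : ∀ (a : SimplexCategory) (y : a ⟶ ⦋m⦌),
      (e.toOrderHom : Fin (m + 1) → Fin (N + 1)) ⁻¹' (rg (y ≫ e)) = rg y := by
    intro a y
    rw [rg_comp]
    exact Set.preimage_image_eq _ he
  have hs' : ∀ a x h, D (rg (s a x h)) := by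
    intro a x h
    have := (hD _ h).2
    rw [← hs a x h, hr] at this
    exact this
  refine ⟨⟨fun a x h => p.v a (s a x h) (hs' a x h), ?_⟩, ?_⟩
  · intro a b f x h h'
    have e1 : s b (f ≫ x) h' = f ≫ s a x h := by
      apply cancel_e e he
      rw [hs, Category.assoc, hs]
    rw [← p.nat _ _ f _ _ (by rw [← e1]; exact hs' _ _ _)]
    congr 1
  · intro a y h h'
    have e1 : s a (y ≫ e) h = y := cancel_e e he (hs ..)
    dsimp only
    congr 1

lemma PM.exists_addFace {m : ℕ} {D B : Set (Fin (N + 1)) → Prop} (p : PM C N D) (hD : Dn D)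
    (hB : Dn B)
    (e : ⦋m⦌ ⟶ (⦋N⦌ : SimplexCategory)) (he : Function.Injective e.toOrderHom)
    (hBe : ∀ T, B T → T ⊆ rg e)
    (σ : C.obj (op ⦋m⦌)) (hσ : ∀ a (y : a ⟶ ⦋m⦌) h, B (rg (y ≫ e)) →
      p.v a (y ≫ e) h = C.map y.op σ) :
    ∃ q : PM C N (fun T => D T ∨ B T), Extends p q ∧
      ∀ a (y : a ⟶ ⦋m⦌) h, B (rg (y ≫ e)) → q.v a (y ≫ e) h = C.map y.op σ := by
  obtain ⟨r, hr⟩ := (PM.ofSimplex σ).exists_push (D' := B) e he (fun T hT => ⟨hBe T hT, trivial⟩)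
  have hpr : ∀ a x h h', p.v a x h = r.v a x h' := by
    intro a x h h'
    obtain ⟨y, rfl⟩ := exists_factor e he x (hBe _ h')
    rw [hr _ _ _ trivial, hσ _ _ _ h']
    rfl
  refine ⟨p.glue r hD hB hpr, PM.glue_left p r hD hB hpr, ?_⟩
  intro a y h hB'
  obtain ⟨_, e1⟩ := PM.glue_right p r hD hB hpr a (y ≫ e) hB'
  rw [e1, hr _ _ _ trivial]
  rfl

lemma app_eq (f : Δ[N] ⟶ C) {a : SimplexCategory} (x : a ⟶ ⦋N⦌) :
    f.app (op a) (SSet.stdSimplex.objEquiv.symm x) = C.map x.op (SSet.yonedaEquiv f) := by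
  obtain ⟨τ, rfl⟩ := SSet.yonedaEquiv.symm.surjective f
  rw [Equiv.apply_symm_apply]
  rfl

/-- partial maps on a horn -/
lemma PM.fill_horn [SSet.Quasicategory C] {i : Fin (N + 1)} (h0 : 0 < i) (hN : i < Fin.last N)
    (p : PM C N (fun T => ∃ j, j ≠ i ∧ j ∉ T)) :
    ∃ σ : C.obj (op ⦋N⦌), ∀ a x h, p.v a x h = C.map x.op σ := by
  have key : ∀ (a : SimplexCategoryᵒᵖ) (x : (Λ[N, i] : SSet.{0}).obj a),
      ∃ j, j ≠ i ∧ j ∉ rg (SSet.stdSimplex.objEquiv x.1) := by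
    rintro ⟨a⟩ ⟨x, hx⟩
    induction a using SimplexCategory.rec with | _ d
    rw [SSet.mem_horn_iff_notMem_range] at hx
    obtain ⟨j, hj, hj'⟩ := hx
    exact ⟨j, hj, hj'⟩
  let f : (Λ[N, i] : SSet.{0}) ⟶ C :=
    { app a := ↾fun x => p.v a.unop (SSet.stdSimplex.objEquiv x.1) (key a x)
      naturality a b g := by
        refine ConcreteCategory.hom_ext _ _ fun x => ?_
        exact p.nat _ _ g.unop _ _ _ }
  obtain ⟨σ, hσ⟩ := SSet.Quasicategory.hornFilling h0 hN f
  refine ⟨SSet.yonedaEquiv σ, ?_⟩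
  intro a x h
  have hx : SSet.stdSimplex.objEquiv.symm x ∈ (Λ[N, i] : (Δ[N] : SSet.{0}).Subcomplex).obj (op a) := by
    induction a using SimplexCategory.rec with | _ d
    rw [SSet.mem_horn_iff_notMem_range]
    obtain ⟨j, hj, hj'⟩ := h
    exact ⟨j, hj, hj'⟩
  have h1 := ConcreteCategory.congr_hom (congr_app hσ (op a)) ⟨SSet.stdSimplex.objEquiv.symm x, hx⟩
  exact h1.trans (app_eq σ x)

end SSetPaper


namespace SSetPaper

lemma contractible_extend {S : SSet.{0}} (hS : IsContractible S) {A B : SSet.{0}} (i : A ⟶ B)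
    [Mono i] (f : A ⟶ S) : ∃ g : B ⟶ S, i ≫ g = f := by
  have h : (SSet.modelCategoryQuillen.I.{0}).rlp (Limits.terminal.from S) := by
    rintro _ _ _ ⟨n⟩
    constructor
    intro t b sq
    obtain ⟨l, hl⟩ := hS n t
    exact ⟨⟨⟨l, hl, Subsingleton.elim _ _⟩⟩⟩
  rw [← SSet.rlp_monomorphisms] at h
  have h2 : HasLiftingProperty i (Limits.terminal.from S) :=
    h i (MorphismProperty.monomorphisms.infer_property i)
  have sq : CommSq f i (Limits.terminal.from S) (Limits.terminal.from B) :=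
    ⟨Subsingleton.elim _ _⟩
  exact ⟨sq.lift, sq.fac_left⟩

lemma contractible_kan {S : SSet.{0}} (hS : IsContractible S) : SSetPaper.KanComplex S where
  hornFilling n i f := by
    obtain ⟨g, hg⟩ := contractible_extend hS (SSet.horn n i).ι f
    exact ⟨g, hg.symm⟩

variable {C : SSet.{0}} {N : ℕ}

lemma extG_base [SSet.Quasicategory C] (S : Finset (Fin (N + 1))) (v k l : Fin (N + 1))
    (hv : v ∈ S) (hk : k ∈ S) (hl : l ∈ S) (hkv : k < v) (hvl : v < l) :
    Ext C (fun T => T ⊆ (S : Set (Fin (N + 1))) ∧ ∃ i ∈ S.erase v, i ∉ T)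
      (fun T => T ⊆ (S : Set (Fin (N + 1)))) := by
  intro p
  obtain ⟨m, hm⟩ : ∃ m, S.card = m + 1 :=
    Nat.exists_eq_succ_of_ne_zero (Finset.card_pos.2 ⟨v, hv⟩).ne'
  let e : ⦋m⦌ ⟶ (⦋N⦌ : SimplexCategory) :=
    SimplexCategory.Hom.mk (S.orderEmbOfFin hm).toOrderHom
  have eapp : ∀ i, e.toOrderHom i = S.orderEmbOfFin hm i := fun i => rfl
  have he : Function.Injective e.toOrderHom := (S.orderEmbOfFin hm).injective
  have hsm : StrictMono e.toOrderHom := (S.orderEmbOfFin hm).strictMono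
  have hr : rg e = (S : Set (Fin (N + 1))) := Finset.range_orderEmbOfFin S hm
  have hex : ∀ i ∈ S, ∃ i', e.toOrderHom i' = i := by
    intro i hi
    have : i ∈ rg e := by rw [hr]; exact hi
    exact this
  obtain ⟨v', hv'⟩ := hex v hv
  obtain ⟨k', hk'⟩ := hex k hk
  obtain ⟨l', hl'⟩ := hex l hl
  have h0 : 0 < v' := by
    refine lt_of_le_of_lt (Fin.zero_le k') ?_
    rw [← hsm.lt_iff_lt, hk', hv']; exact hkv
  have h1 : v' < Fin.last m := by
    refine lt_of_lt_of_le ?_ (Fin.le_last l')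
    rw [← hsm.lt_iff_lt, hl', hv']; exact hvl
  have heS : ∀ i, e.toOrderHom i ∈ S := fun i => by
    have : e.toOrderHom i ∈ rg e := ⟨i, rfl⟩
    rw [hr] at this; exact this
  obtain ⟨σ, hσ⟩ := PM.fill_horn h0 h1 (p.pull e (D' := fun T => ∃ j, j ≠ v' ∧ j ∉ T) (by
    rintro T ⟨j, hj, hjT⟩
    refine ⟨?_, e.toOrderHom j, ?_, ?_⟩
    · rintro _ ⟨i, _, rfl⟩
      exact heS i
    · refine Finset.mem_erase.2 ⟨?_, heS j⟩
      rw [← hv']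
      exact fun h => hj (he h)
    · rintro ⟨i, hi, hij⟩
      rw [he hij] at hi
      exact hjT hi))
  obtain ⟨q, hq⟩ := (PM.ofSimplex σ).exists_push (D' := fun T => T ⊆ (S : Set (Fin (N + 1)))) e he
    (fun T hT => ⟨by rw [hr]; exact hT, trivial⟩)
  refine ⟨q, ?_⟩
  intro a x h
  refine ⟨h.1, ?_⟩
  obtain ⟨y, rfl⟩ := exists_factor e he x (by rw [hr]; exact h.1)
  rw [hq _ _ _ trivial]
  refine (hσ a y ?_).symm
  obtain ⟨-, i, hi, hi2⟩ := h
  rw [Finset.mem_erase] at hi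
  obtain ⟨i', rfl⟩ := hex i hi.2
  refine ⟨i', ?_, ?_⟩
  · rintro rfl
    exact hi.1 hv'
  · intro hi'
    apply hi2
    rw [rg_comp]
    exact ⟨i', hi', rfl⟩

lemma extG_aux [SSet.Quasicategory C] (v k l : Fin (N + 1)) (hkv : k < v) (hvl : v < l) (d : ℕ) :
    ∀ (S I : Finset (Fin (N + 1))), I ⊆ S → v ∈ S → v ∉ I → k ∈ I → l ∈ I →
      S.card + (S \ I).card ≤ d →
    Ext C (fun T => T ⊆ (S : Set (Fin (N + 1))) ∧ ∃ i ∈ I, i ∉ T)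
      (fun T => T ⊆ (S : Set (Fin (N + 1)))) := by
  induction d with
  | zero =>
    intro S I hIS hv hvI hk hl hd
    have := Finset.card_pos.2 ⟨v, hv⟩
    omega
  | succ d ih =>
    intro S I hIS hv hvI hk hl hd
    by_cases hI : I = S.erase v
    · subst hI
      exact extG_base S v k l hv (hIS hk) (hIS hl) hkv hvl
    · obtain ⟨j, hjS, hjI, hjv⟩ : ∃ j ∈ S, j ∉ I ∧ j ≠ v := by
        by_contra hcon
        push Not at hcon
        apply hI
        ext i
        rw [Finset.mem_erase]
        constructor
        · intro hi
          exact ⟨fun h => hvI (h ▸ hi), hIS hi⟩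
        · rintro ⟨h1, h2⟩
          by_contra h3
          exact h1 (hcon i h2 h3)
      have hIS' : I ⊆ S.erase j := fun i hi =>
        Finset.mem_erase.2 ⟨fun h => hjI (h ▸ hi), hIS hi⟩
      have c1 := Finset.card_erase_lt_of_mem hjS
      have c2 : (S.erase j \ I).card ≤ (S \ I).card :=
        Finset.card_le_card (Finset.sdiff_subset_sdiff (Finset.erase_subset j S) le_rfl)
      have c3 : (S \ insert j I).card < (S \ I).card := by
        apply Finset.card_lt_card
        refine ⟨Finset.sdiff_subset_sdiff le_rfl (Finset.subset_insert j I), fun h => ?_⟩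
        have := h (Finset.mem_sdiff.2 ⟨hjS, hjI⟩)
        simp at this
      have e1 := ih (S.erase j) I hIS' (Finset.mem_erase.2 ⟨hjv.symm, hv⟩) hvI hk hl (by omega)
      have e2 := ih S (insert j I) (Finset.insert_subset hjS hIS) hv
        (by simp [hvI, hjv.symm]) (Finset.mem_insert_of_mem hk) (Finset.mem_insert_of_mem hl)
        (by omega)
      have hsub : ∀ T : Set (Fin (N + 1)), T ⊆ ((S.erase j : Finset _) : Set (Fin (N + 1))) ↔
          T ⊆ (S : Set (Fin (N + 1))) ∧ j ∉ T := by
        intro T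
        rw [Finset.coe_erase, Set.subset_diff, Set.disjoint_singleton_right]
      refine Ext.trans (Ext.congr (Ext.union
        (D := fun T => T ⊆ (S : Set (Fin (N + 1))) ∧ ∃ i ∈ I, i ∉ T)
        (B := fun T => T ⊆ ((S.erase j : Finset _) : Set (Fin (N + 1)))) ?_ ?_ ?_)
        (fun T => Iff.rfl) ?_) e2
      · rintro T T' h ⟨h1, i, hi, hi'⟩
        exact ⟨h.trans h1, i, hi, fun h' => hi' (h h')⟩
      · exact fun T T' h h' => h.trans h'
      · refine Ext.congr e1 ?_ (fun T => Iff.rfl)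
        intro T
        simp only [hsub]
        tauto
      · intro T
        simp only [hsub, Finset.mem_insert, exists_eq_or_imp]
        rw [← and_or_left, or_comm]

/-- generalised inner horns -/
lemma extG [SSet.Quasicategory C] (v k l : Fin (N + 1)) (hkv : k < v) (hvl : v < l)
    (S I : Finset (Fin (N + 1))) (hI : I ⊆ S) (hv : v ∈ S) (hvI : v ∉ I) (hk : k ∈ I)
    (hl : l ∈ I) :
    Ext C (fun T => T ⊆ (S : Set (Fin (N + 1))) ∧ ∃ i ∈ I, i ∉ T)
      (fun T => T ⊆ (S : Set (Fin (N + 1)))) :=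
  extG_aux v k l hkv hvl _ S I hI hv hvI hk hl le_rfl

end SSetPaper


namespace SSetPaper

variable {C : SSet.{0}}

lemma delta_val {n : ℕ} (i : Fin (n + 2)) (j : Fin (n + 1)) :
    ((SimplexCategory.δ i).toOrderHom j : Fin (n + 2)).val =
      if j.val < i.val then j.val else j.val + 1 := by
  change (i.succAbove j).val = _
  simp only [Fin.succAbove, Fin.lt_def, Fin.val_castSucc]
  split_ifs <;> simp

lemma delta_inj {n : ℕ} (i : Fin (n + 2)) :
    Function.Injective (SimplexCategory.δ i).toOrderHom :=
  Fin.succAbove_right_injective (p := i)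

lemma mem_rg_delta {n : ℕ} (i j : Fin (n + 2)) : j ∈ rg (SimplexCategory.δ i) ↔ j ≠ i := by
  have : rg (SimplexCategory.δ i) = {i}ᶜ := Fin.range_succAbove i
  rw [this]; rfl

lemma subset_rg_delta {n : ℕ} (i : Fin (n + 2)) (T : Set (Fin (n + 2))) (h : i ∉ T) :
    T ⊆ rg (SimplexCategory.δ i) := by
  intro j hj
  rw [mem_rg_delta]
  rintro rfl
  exact h hj

lemma hom_ext_val {a : SimplexCategory} {n : ℕ} {f g : a ⟶ ⦋n⦌}
    (h : ∀ i, (f.toOrderHom i : Fin (n + 1)).val = (g.toOrderHom i : Fin (n + 1)).val) : f = g := by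
  apply SimplexCategory.Hom.ext
  apply OrderHom.ext
  funext i
  exact Fin.ext (h i)

lemma factor_delta {a : SimplexCategory} {n : ℕ} (i : Fin (n + 2)) (x : a ⟶ ⦋n + 1⦌)
    (h : i ∉ rg x) : ∃ y : a ⟶ ⦋n⦌, y ≫ SimplexCategory.δ i = x :=
  exists_factor _ (delta_inj i) x (subset_rg_delta i _ h)

lemma notMem_rg_comp_delta {a : SimplexCategory} {n : ℕ} (i : Fin (n + 2)) (y : a ⟶ ⦋n⦌) :
    i ∉ rg (y ≫ SimplexCategory.δ i) := by
  intro h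
  have := rg_comp_subset _ _ h
  rw [mem_rg_delta] at this
  exact this rfl

/-- collapse the first `k` vertices to the vertex 0 -/
def cc (n k : ℕ) : (⦋n⦌ : SimplexCategory) ⟶ ⦋n⦌ :=
  SimplexCategory.Hom.mk
    { toFun := fun i => if i.val < k then 0 else i
      monotone' := by
        intro i j hij
        have : i.val ≤ j.val := hij
        dsimp only
        split_ifs
        · exact le_rfl
        · exact Fin.zero_le _
        · omega
        · exact hij }

lemma cc_val (n k : ℕ) (i : Fin (n + 1)) : ((cc n k).toOrderHom i : Fin (n + 1)).val =
    if i.val < k then 0 else i.val := by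
  change (if i.val < k then (0 : Fin (n + 1)) else i).val = _
  split_ifs <;> rfl

/-- collapse vertices `0, ..., k` and shift the others -/
def cd (n k : ℕ) : (⦋n + 1⦌ : SimplexCategory) ⟶ ⦋n⦌ :=
  SimplexCategory.Hom.mk
    { toFun := fun i => if i.val ≤ k then 0 else ⟨i.val - 1, by
        have : i.val < n + 1 + 1 := i.isLt
        change i.val - 1 < n + 1
        omega⟩
      monotone' := by
        intro i j hij
        have : i.val ≤ j.val := hij
        dsimp only
        split_ifs
        · exact le_rfl
        · exact Fin.zero_le _
        · omega
        · rw [Fin.le_def]; dsimp only; omega }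

lemma cd_val (n k : ℕ) (i : Fin (n + 2)) : ((cd n k).toOrderHom i : Fin (n + 1)).val =
    if i.val ≤ k then 0 else i.val - 1 := by
  change (if i.val ≤ k then (0 : Fin (n + 1)) else ⟨i.val - 1, _⟩).val = _
  split_ifs <;> rfl

lemma comp_val {a : SimplexCategory} {m n : ℕ} (f : a ⟶ ⦋m⦌) (g : (⦋m⦌ : SimplexCategory) ⟶ ⦋n⦌)
    (i) : ((f ≫ g).toOrderHom i : Fin (n + 1)) = g.toOrderHom (f.toOrderHom i) := rfl

lemma delta_cd (n k : ℕ) (hk : k < n + 2) :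
    SimplexCategory.δ (⟨k, hk⟩ : Fin (n + 2)) ≫ cd n k = cc n k := by
  apply hom_ext_val
  intro i
  rw [comp_val, cd_val, delta_val, cc_val]
  dsimp only
  split_ifs <;> omega

lemma delta_cd' (n k : ℕ) (hk : k + 1 < n + 2) :
    SimplexCategory.δ (⟨k + 1, hk⟩ : Fin (n + 2)) ≫ cd n k = cc n (k + 1) := by
  apply hom_ext_val
  intro i
  rw [comp_val, cd_val, delta_val, cc_val]
  dsimp only
  split_ifs <;> omega

lemma delta_delta_last (n k : ℕ) (hk : k < n + 2) (hk' : k < n + 3) :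
    SimplexCategory.δ (Fin.last (n + 1)) ≫ SimplexCategory.δ (⟨k, hk'⟩ : Fin (n + 3)) =
    SimplexCategory.δ (⟨k, hk⟩ : Fin (n + 2)) ≫ SimplexCategory.δ (Fin.last (n + 2)) := by
  apply hom_ext_val
  intro i
  have hi : (i : Fin (n + 1)).val < n + 1 := i.isLt
  rw [comp_val, comp_val, delta_val, delta_val, delta_val, delta_val]
  simp only [Fin.val_last]
  split_ifs <;> omega

lemma const_last_delta (n k : ℕ) (hk : k < n + 2) :
    SimplexCategory.const ⦋0⦌ ⦋n + 1⦌ (Fin.last (n + 1)) ≫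
      SimplexCategory.δ (⟨k, by omega⟩ : Fin (n + 3)) =
    SimplexCategory.const ⦋0⦌ ⦋n + 2⦌ (Fin.last (n + 2)) := by
  apply hom_ext_val
  intro i
  rw [comp_val, delta_val]
  change (if n + 1 < k then n + 1 else n + 1 + 1) = n + 2
  split_ifs <;> omega

/-- the filling property with last face degenerate along `cc n k` -/
def Fillable (C : SSet.{0}) (X : C _⦋0⦌) (n k : ℕ) : Prop :=
  ∀ p : PM C (n + 1) (fun T => ∃ j, j ∉ T),
    (∀ h, p.v ⦋0⦌ (SimplexCategory.const ⦋0⦌ ⦋n + 1⦌ (Fin.last (n + 1))) h = X) →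
    (∃ σ0 : C.obj (op ⦋n⦌), ∀ h, p.v ⦋n⦌ (SimplexCategory.δ (Fin.last (n + 1))) h =
      C.map (cc n k).op σ0) →
    ∃ σ : C.obj (op ⦋n + 1⦌), ∀ a x h, p.v a x h = C.map x.op σ

lemma extJ [SSet.Quasicategory C] {N : ℕ} (K V L : Fin (N + 1)) (hKV : K < V) (hVL : V < L)
    (J : Finset (Fin (N + 1))) (hK : K ∉ J) (hV : V ∉ J) (hL : L ∉ J) :
    Ext C (fun T => (K ∉ T ∧ ∃ j, j ≠ K ∧ j ∉ T) ∨ L ∉ T)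
      (fun T => ((K ∉ T ∧ ∃ j, j ≠ K ∧ j ∉ T) ∨ L ∉ T) ∨ ∃ j ∈ J, j ∉ T) := by
  induction J using Finset.induction_on with
  | empty =>
    intro p
    refine ⟨p.restrict ?_, ?_⟩
    · rintro T (h | ⟨j, hj, -⟩)
      · exact h
      · simp at hj
    · intro a x h
      exact ⟨Or.inl h, rfl⟩
  | insert j J hj ih =>
    rw [Finset.mem_insert, not_or] at hK hV hL
    have e1 := ih hK.2 hV.2 hL.2
    have hsub : ∀ T : Set (Fin (N + 1)),
        T ⊆ ((Finset.univ.erase j : Finset _) : Set (Fin (N + 1))) ↔ j ∉ T := by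
      intro T
      rw [Finset.coe_erase, Set.subset_diff, Set.disjoint_singleton_right]
      simp
    have e2 := extG (C := C) V K L hKV hVL (Finset.univ.erase j) (insert K (insert L J))
      (by
        intro i hi
        rw [Finset.mem_erase]
        refine ⟨?_, Finset.mem_univ _⟩
        rintro rfl
        simp only [Finset.mem_insert] at hi
        rcases hi with rfl | rfl | hi
        · exact hK.1 rfl
        · exact hL.1 rfl
        · exact hj hi)
      (by simp [hV.1]) (by simp [hV.2, hKV.ne', hVL.ne]) (by simp) (by simp)
    refine Ext.trans e1 (Ext.congr (Ext.union
      (D := fun T => ((K ∉ T ∧ ∃ j, j ≠ K ∧ j ∉ T) ∨ L ∉ T) ∨ ∃ j ∈ J, j ∉ T)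
      (B := fun T => j ∉ T) ?_ ?_ ?_) (fun T => Iff.rfl) ?_)
    · rintro S T hST ((⟨h1, i, hi, hi'⟩ | h) | ⟨i, hi, hi'⟩)
      · exact Or.inl (Or.inl ⟨fun h => h1 (hST h), i, hi, fun h => hi' (hST h)⟩)
      · exact Or.inl (Or.inr fun h' => h (hST h'))
      · exact Or.inr ⟨i, hi, fun h => hi' (hST h)⟩
    · exact fun S T hST h h' => h (hST h')
    · refine Ext.congr e2 ?_ (fun T => hsub T)
      intro T
      simp only [hsub, Finset.mem_insert, exists_eq_or_imp]
      constructor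
      · rintro ⟨h, h1 | h1 | h1⟩
        · exact ⟨Or.inl (Or.inl ⟨h1, j, fun h => hK.1 h.symm, h⟩), h⟩
        · exact ⟨Or.inl (Or.inr h1), h⟩
        · exact ⟨Or.inr h1, h⟩
      · rintro ⟨(⟨h1, -⟩ | h1) | h1, h⟩
        · exact ⟨h, Or.inl h1⟩
        · exact ⟨h, Or.inr (Or.inl h1)⟩
        · exact ⟨h, Or.inr (Or.inr h1)⟩
    · intro T
      simp only [Finset.mem_insert, exists_eq_or_imp]
      rw [or_assoc, or_comm (a := ∃ j ∈ J, j ∉ T)]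

lemma fillable_step [SSet.Quasicategory C] (X : C _⦋0⦌) (n k : ℕ) (h1 : 1 ≤ k) (hkn : k ≤ n)
    (ih : Fillable C X n (k + 1)) : Fillable C X n k := by
  rintro p hX ⟨σ0, hσ0⟩
  let K : Fin (n + 3) := ⟨k, by omega⟩
  let V : Fin (n + 3) := ⟨k + 1, by omega⟩
  let L : Fin (n + 3) := Fin.last (n + 2)
  let K' : Fin (n + 2) := ⟨k, by omega⟩
  let V' : Fin (n + 2) := ⟨k + 1, by omega⟩
  have hKV : K < V := by rw [Fin.lt_def]; dsimp [K, V]; omega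
  have hVL : V < L := by rw [Fin.lt_def]; dsimp [L, V]; omega
  have hKL : K < L := hKV.trans hVL
  let τ : C.obj (op ⦋n + 1⦌) := C.map (cd n k).op σ0
  have dK := delta_delta_last n k (by omega) (by omega)
  have dV := delta_delta_last n (k + 1) (by omega) (by omega)
  have τK : C.map (SimplexCategory.δ K').op τ = C.map (cc n k).op σ0 := by
    rw [← delta_cd n k (by omega), mapc]
  have τV : C.map (SimplexCategory.δ V').op τ = C.map (cc n (k + 1)).op σ0 := by
    rw [← delta_cd' n k (by omega), mapc]
  -- the first piece
  obtain ⟨q0, hq0⟩ := p.exists_push (D' := fun T => K ∉ T ∧ ∃ j, j ≠ K ∧ j ∉ T)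
    (SimplexCategory.δ K) (delta_inj K) (by
      rintro T ⟨hT, j, hj, hjT⟩
      refine ⟨subset_rg_delta K T hT, ?_⟩
      obtain ⟨j', rfl⟩ := (mem_rg_delta K j).2 hj
      exact ⟨j', hjT⟩)
  have dn0 : Dn (fun T : Set (Fin (n + 3)) => K ∉ T ∧ ∃ j, j ≠ K ∧ j ∉ T) := by
    rintro S T hST ⟨h1, i, hi, hi'⟩
    exact ⟨fun h => h1 (hST h), i, hi, fun h => hi' (hST h)⟩
  obtain ⟨q1, hq01, hq1⟩ := q0.exists_addFace (B := fun T => L ∉ T) dn0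
    (fun S T hST h h' => h (hST h')) (SimplexCategory.δ L) (delta_inj L)
    (fun T hT => subset_rg_delta L T hT) τ (by
      intro a y h hL
      obtain ⟨u, rfl⟩ := factor_delta K' y (by
        rintro ⟨i, hi⟩
        refine h.1 ⟨i, ?_⟩
        apply Fin.ext
        rw [comp_val, delta_val, hi]
        change (if k < n + 2 then k else k + 1) = k
        rw [if_pos (by omega)])
      have e1 : (u ≫ SimplexCategory.δ K') ≫ SimplexCategory.δ L =
          (u ≫ SimplexCategory.δ (Fin.last (n + 1))) ≫ SimplexCategory.δ K := by
        rw [Category.assoc, Category.assoc, dK]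
      have h' := h
      rw [e1] at h'
      have hl : ∃ j, j ∉ rg (SimplexCategory.δ (Fin.last (n + 1))) :=
        ⟨Fin.last (n + 1), by rw [mem_rg_delta]; simp⟩
      have hl' : ∃ j, j ∉ rg (u ≫ SimplexCategory.δ (Fin.last (n + 1))) :=
        ⟨Fin.last (n + 1), notMem_rg_comp_delta _ _⟩
      have e2 : q0.v a ((u ≫ SimplexCategory.δ K') ≫ SimplexCategory.δ L) h =
        q0.v a ((u ≫ SimplexCategory.δ (Fin.last (n + 1))) ≫ SimplexCategory.δ K) h' := by
        congr 1
      rw [e2, hq0 _ _ _ hl', p.nat _ _ u _ hl, hσ0, mapc, τK])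
  -- the intermediate faces
  obtain ⟨q2, hq12⟩ := extJ K V L hKV hVL (Finset.univ \ {K, V, L}) (by simp) (by simp) (by simp) q1
  have hdom : ∀ T : Set (Fin (n + 3)), (∃ j, j ≠ V ∧ j ∉ T) → (V ∉ T ∨ ∃ j, j ≠ K ∧ j ≠ V ∧ j ∉ T) →
      ((K ∉ T ∧ ∃ j, j ≠ K ∧ j ∉ T) ∨ L ∉ T) ∨ ∃ j ∈ Finset.univ \ {K, V, L}, j ∉ T := by
    rintro T h1 h2
    by_cases hLT : L ∉ T
    · exact Or.inl (Or.inr hLT)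
    by_cases h3 : ∃ j, j ≠ K ∧ j ≠ V ∧ j ∉ T
    · obtain ⟨j, ha, hb, hc⟩ := h3
      refine Or.inr ⟨j, ?_, hc⟩
      simp only [Finset.mem_sdiff, Finset.mem_univ, Finset.mem_insert, Finset.mem_singleton,
        true_and, not_or]
      refine ⟨ha, hb, ?_⟩
      rintro rfl
      exact hLT hc
    · have hV := h2.resolve_right h3
      obtain ⟨j, hj, hj'⟩ := h1
      by_cases hjK : j = K
      · subst hjK
        exact Or.inl (Or.inl ⟨hj', V, hKV.ne', hV⟩)
      · exact absurd ⟨j, hjK, hj, hj'⟩ h3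
  have hq02 := hq01.trans hq12
  have pulldom : ∀ T : Set (Fin (n + 2)), (∃ j, j ∉ T) →
      ((K ∉ ((SimplexCategory.δ V).toOrderHom : Fin (n + 2) → Fin (n + 3)) '' T ∧
        ∃ j, j ≠ K ∧ j ∉ ((SimplexCategory.δ V).toOrderHom : Fin (n + 2) → Fin (n + 3)) '' T) ∨
        L ∉ ((SimplexCategory.δ V).toOrderHom : Fin (n + 2) → Fin (n + 3)) '' T) ∨
        ∃ j ∈ Finset.univ \ {K, V, L},
          j ∉ ((SimplexCategory.δ V).toOrderHom : Fin (n + 2) → Fin (n + 3)) '' T := by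
    rintro T ⟨j, hj⟩
    apply hdom
    · refine ⟨(SimplexCategory.δ V).toOrderHom j, (mem_rg_delta V _).1 ⟨j, rfl⟩, ?_⟩
      rintro ⟨i, hi, hij⟩
      rw [delta_inj V hij] at hi
      exact hj hi
    · left
      rintro ⟨i, hi, hij⟩
      exact (mem_rg_delta V V).1 ⟨i, hij⟩ rfl
  obtain ⟨ρ, hρ⟩ := ih (q2.pull (SimplexCategory.δ V) pulldom) (by
      intro h
      have hc : ∃ j, j ∉ rg (SimplexCategory.const ⦋0⦌ ⦋n + 1⦌ (Fin.last (n + 1))) := by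
        refine ⟨0, ?_⟩
        rintro ⟨i, hi⟩
        have := congrArg Fin.val hi
        change n + 1 = 0 at this
        omega
      have hr : rg (SimplexCategory.const ⦋0⦌ ⦋n + 2⦌ (Fin.last (n + 2))) = {L} := by
        ext i
        constructor
        · rintro ⟨_, rfl⟩; rfl
        · rintro rfl; exact ⟨0, rfl⟩
      have cK := const_last_delta n k (by omega)
      have cV := const_last_delta n (k + 1) (by omega)
      have hd0 : K ∉ rg (SimplexCategory.const ⦋0⦌ ⦋n + 1⦌ (Fin.last (n + 1)) ≫
          SimplexCategory.δ K) ∧ ∃ j, j ≠ K ∧ j ∉ rg (SimplexCategory.const ⦋0⦌ ⦋n + 1⦌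
            (Fin.last (n + 1)) ≫ SimplexCategory.δ K) := by
        rw [cK, hr]
        exact ⟨hKL.ne, V, hKV.ne', hVL.ne⟩
      obtain ⟨h2, e2⟩ := hq02 _ _ hd0
      rw [hq0 _ _ _ hc, hX] at e2
      rw [← e2]
      change q2.v _ _ _ = _
      congr 1
      exact cV.trans cK.symm) ⟨σ0, by
      intro h
      have hd1 : L ∉ rg (SimplexCategory.δ V' ≫ SimplexCategory.δ L) := notMem_rg_comp_delta _ _
      obtain ⟨h2, e2⟩ := hq12 _ (SimplexCategory.δ V' ≫ SimplexCategory.δ L) (Or.inr hd1)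
      rw [hq1 _ _ _ hd1, τV] at e2
      rw [← e2]
      change q2.v _ _ _ = _
      congr 1⟩
  have dn2 : Dn (fun T : Set (Fin (n + 3)) => ((K ∉ T ∧ ∃ j, j ≠ K ∧ j ∉ T) ∨ L ∉ T) ∨
      ∃ j ∈ Finset.univ \ {K, V, L}, j ∉ T) := by
    rintro S T hST ((⟨h1, i, hi, hi'⟩ | h) | ⟨i, hi, hi'⟩)
    · exact Or.inl (Or.inl ⟨fun h => h1 (hST h), i, hi, fun h => hi' (hST h)⟩)
    · exact Or.inl (Or.inr fun h' => h (hST h'))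
    · exact Or.inr ⟨i, hi, fun h => hi' (hST h)⟩
  obtain ⟨q3, hq23, -⟩ := q2.exists_addFace (B := fun T => V ∉ T) dn2
    (fun S T hST h h' => h (hST h')) (SimplexCategory.δ V) (delta_inj V)
    (fun T hT => subset_rg_delta V T hT) ρ (by
      intro a y h hV
      refine hρ a y ?_
      by_contra hcon
      push Not at hcon
      have hall : ∀ j, j ≠ V → j ∈ rg (y ≫ SimplexCategory.δ V) := by
        intro j hj
        obtain ⟨j', rfl⟩ := (mem_rg_delta V j).2 hj
        rw [rg_comp]
        exact ⟨j', hcon j', rfl⟩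
      rcases h with (⟨h, -⟩ | h) | ⟨j, hj, h⟩
      · exact h (hall K hKV.ne)
      · exact h (hall L hVL.ne')
      · simp only [Finset.mem_sdiff, Finset.mem_univ, Finset.mem_insert, Finset.mem_singleton,
          true_and, not_or] at hj
        exact h (hall j hj.2.1))
  obtain ⟨σ, hσ⟩ := PM.fill_horn (i := K) (by rw [Fin.lt_def]; exact h1)
    hKL (q3.restrict (D' := fun T => ∃ j, j ≠ K ∧ j ∉ T) (by
      rintro T ⟨j, hj, hjT⟩
      by_cases hjV : j = V
      · subst hjV; exact Or.inr hjT
      · exact Or.inl (hdom T ⟨j, hjV, hjT⟩ (Or.inr ⟨j, hj, hjV, hjT⟩))))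
  refine ⟨C.map (SimplexCategory.δ K).op σ, ?_⟩
  intro a x h
  obtain ⟨j, hj⟩ := h
  have hxK : ∃ j, j ≠ K ∧ j ∉ rg (x ≫ SimplexCategory.δ K) := by
    refine ⟨(SimplexCategory.δ K).toOrderHom j, (mem_rg_delta K _).1 ⟨j, rfl⟩, ?_⟩
    rw [rg_comp]
    rintro ⟨i, hi, hij⟩
    rw [delta_inj K hij] at hi
    exact hj hi
  rw [← mapc, ← hσ a _ hxK]
  obtain ⟨h3, e3⟩ := (hq02.trans hq23) a (x ≫ SimplexCategory.δ K)
    ⟨notMem_rg_comp_delta _ _, hxK⟩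
  rw [hq0 _ _ _ ⟨j, hj⟩] at e3
  exact e3.symm

end SSetPaper


namespace SSetPaper

variable {C : SSet.{0}}

lemma bmem {n : ℕ} {a : SimplexCategory} (w : a ⟶ ⦋n⦌) (h : ∃ j, j ∉ rg w) :
    SSet.stdSimplex.objEquiv.symm w ∈ (∂Δ[n] : (Δ[n] : SSet.{0}).Subcomplex).obj (op a) := by
  induction a using SimplexCategory.rec with | _ d
  rw [SSet.mem_boundary_iff_notMem_range]
  obtain ⟨j, hj⟩ := h
  exact ⟨j, hj⟩

lemma of_bmem {n : ℕ} {a : SimplexCategoryᵒᵖ} (x : (∂Δ[n] : SSet.{0}).obj a) :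
    ∃ j, j ∉ rg (SSet.stdSimplex.objEquiv x.1) := by
  obtain ⟨a⟩ := a
  obtain ⟨x, hx⟩ := x
  induction a using SimplexCategory.rec with | _ d
  rw [SSet.mem_boundary_iff_notMem_range] at hx
  obtain ⟨j, hj⟩ := hx
  exact ⟨j, hj⟩

/-- value of a map on a simplex of the boundary -/
def bval {n : ℕ} {S : SSet.{0}} (t : (∂Δ[n] : SSet.{0}) ⟶ S) {a : SimplexCategory} (w : a ⟶ ⦋n⦌)
    (h : ∃ j, j ∉ rg w) : S.obj (op a) :=
  t.app (op a) ⟨SSet.stdSimplex.objEquiv.symm w, bmem w h⟩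

lemma bval_nat {n : ℕ} {S : SSet.{0}} (t : (∂Δ[n] : SSet.{0}) ⟶ S) {a b : SimplexCategory}
    (f : b ⟶ a) (w : a ⟶ ⦋n⦌) (h : ∃ j, j ∉ rg w) (h' : ∃ j, j ∉ rg (f ≫ w)) :
    bval t (f ≫ w) h' = S.map f.op (bval t w h) :=
  ConcreteCategory.congr_hom (t.naturality f.op) ⟨SSet.stdSimplex.objEquiv.symm w, bmem w h⟩

lemma bval_ext {n : ℕ} {S : SSet.{0}} (t : (∂Δ[n] : SSet.{0}) ⟶ S) (l : Δ[n] ⟶ S)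
    (h : ∀ (a : SimplexCategory) (w : a ⟶ ⦋n⦌) h, S.map w.op (SSet.yonedaEquiv l) = bval t w h) :
    (SSet.boundary n).ι ≫ l = t := by
  ext a x
  have := h a.unop (SSet.stdSimplex.objEquiv x.1) (of_bmem x)
  rw [← app_eq] at this
  exact this

lemma bval_of_ext {n : ℕ} {S : SSet.{0}} (t : (∂Δ[n] : SSet.{0}) ⟶ S) (l : Δ[n] ⟶ S)
    (hl : (SSet.boundary n).ι ≫ l = t) (a : SimplexCategory) (w : a ⟶ ⦋n⦌) (h) :
    bval t w h = S.map w.op (SSet.yonedaEquiv l) := by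
  subst hl
  rw [← app_eq]
  rfl

lemma botIncl_eq (n : ℕ) : botIncl ⦋n⦌ = SimplexCategory.δ (Fin.last (n + 1)) := by
  apply hom_ext_val
  intro i
  rw [delta_val]
  have : (i : Fin (n + 1)).val < n + 1 := i.isLt
  rw [if_pos (by rw [Fin.val_last]; exact this)]
  rfl

lemma castSucc_mem_rg_joinPt {a : SimplexCategory} {n : ℕ} (w : a ⟶ ⦋n⦌) (j : Fin (n + 1)) :
    j.castSucc ∈ rg (N := n + 1) (joinPt w) ↔ j ∈ rg w := by
  constructor
  · rintro ⟨i, hi⟩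
    by_cases h : (i : ℕ) < a.len + 1
    · rw [joinPt_apply_of_lt _ _ h] at hi
      exact ⟨⟨i, h⟩, Fin.castSucc_injective _ hi⟩
    · rw [joinPt_apply_of_ge _ _ h] at hi
      exact absurd hi.symm (Fin.castSucc_lt_last j).ne
  · rintro ⟨i, hi⟩
    refine ⟨i.castSucc, ?_⟩
    have h : ((i.castSucc : Fin (a.len + 2)) : ℕ) < a.len + 1 := i.isLt
    rw [joinPt_apply_of_lt _ _ h]
    exact congrArg Fin.castSucc hi

lemma joinPt_delta {n : ℕ} (j : Fin (n + 2)) :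
    joinPt (SimplexCategory.δ j) = SimplexCategory.δ (n := n + 1) j.castSucc := by
  apply hom_ext_val (n := n + 2)
  intro i
  rw [delta_val]
  have hi : (i : Fin (n + 2)).val < n + 2 := i.isLt
  have hj := j.isLt
  by_cases h : (i : Fin (n + 2)).val < n + 1
  · rw [joinPt_apply_of_lt _ _ h]
    exact delta_val j ⟨i, h⟩
  · rw [joinPt_apply_of_ge _ _ h, if_neg (by rw [Fin.val_castSucc]; omega)]
    change n + 2 = _
    omega

lemma missing_joinPt {a : SimplexCategory} {n : ℕ} (w : a ⟶ ⦋n⦌) (h : ∃ j, j ∉ rg w) :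
    ∃ j, j ∉ rg (N := n + 1) (joinPt w) := by
  obtain ⟨j, hj⟩ := h
  exact ⟨j.castSucc, by rwa [castSucc_mem_rg_joinPt]⟩

/-- if the vertex set is reduced to the last vertex, factor through it -/
lemma factor_last {a : SimplexCategory} {n : ℕ} (x : a ⟶ ⦋n + 1⦌)
    (h : ∀ j : Fin (n + 1), j.castSucc ∉ rg x) :
    SimplexCategory.const a ⦋0⦌ 0 ≫ lastVtx ⦋n⦌ = x := by
  apply hom_ext_val (n := n + 1)
  intro i
  change n + 1 = _
  by_contra hcon
  have hlt : (x.toOrderHom i : Fin (n + 2)).val < n + 2 := (x.toOrderHom i).isLt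
  apply h ⟨(x.toOrderHom i : Fin (n + 2)).val, by omega⟩
  exact ⟨i, rfl⟩

lemma fillable_base (X : C _⦋0⦌) (n : ℕ) (hC : ∀ X' : C _⦋0⦌, IsContractible (RightHom C X' X)) :
    Fillable C X n (n + 1) := by
  rintro p hX ⟨σ0, hσ0⟩
  let X' : C _⦋0⦌ := C.map (SimplexCategory.const ⦋0⦌ ⦋n⦌ 0).op σ0
  have hL : ∃ j, j ∉ rg (SimplexCategory.δ (Fin.last (n + 1))) :=
    ⟨Fin.last (n + 1), by rw [mem_rg_delta]; simp⟩
  have hV : ∃ j, j ∉ rg (SimplexCategory.const ⦋0⦌ ⦋n + 1⦌ (Fin.last (n + 1))) := by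
    refine ⟨0, ?_⟩
    rintro ⟨i, hi⟩
    have := congrArg Fin.val hi
    change n + 1 = 0 at this
    omega
  have hcc : SimplexCategory.const ⦋n⦌ ⦋0⦌ 0 ≫ SimplexCategory.const ⦋0⦌ ⦋n⦌ 0 = cc n (n + 1) := by
    apply hom_ext_val
    intro i
    rw [cc_val, if_pos (show (i : Fin (n + 1)).val < n + 1 from i.isLt)]
    rfl
  have hface : p.v ⦋n⦌ (botIncl ⦋n⦌) (by rw [botIncl_eq]; exact hL) =
      C.map (SimplexCategory.const ⦋n⦌ ⦋0⦌ 0).op X' := by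
    rw [← mapc, hcc, ← hσ0 hL]
    congr 1
    exact botIncl_eq n
  have hface' : ∀ (a : SimplexCategory) (y : a ⟶ ⦋n⦌) h, p.v a (y ≫ botIncl ⦋n⦌) h =
      C.map (SimplexCategory.const a ⦋0⦌ 0).op X' := by
    intro a y h
    rw [p.nat _ _ y _ (by rw [botIncl_eq]; exact hL), hface, ← mapc]
    rfl
  let t : (∂Δ[n] : SSet.{0}) ⟶ RightHom C X' X :=
    { app a := ↾fun x => ⟨p.v ⦋a.unop.len + 1⦌ (joinPt (SSet.stdSimplex.objEquiv x.1))
          (missing_joinPt _ (of_bmem x)), by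
        have hm := missing_joinPt _ (of_bmem x)
        constructor
        · have h' : ∃ j, j ∉ rg (N := n + 1) (botIncl _ ≫ joinPt (SSet.stdSimplex.objEquiv x.1)) := by
            obtain ⟨j, hj⟩ := hm
            exact ⟨j, fun h => hj (rg_comp_subset _ _ h)⟩
          refine (p.nat _ _ (botIncl _) _ hm h').symm.trans ?_
          rw [← hface' _ (SSet.stdSimplex.objEquiv x.1) (by
            rw [botIncl_joinPt] at h'; exact h')]
          congr 1
          exact botIncl_joinPt _
        · have h' : ∃ j, j ∉ rg (N := n + 1) (lastVtx _ ≫ joinPt (SSet.stdSimplex.objEquiv x.1)) := by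
            obtain ⟨j, hj⟩ := hm
            exact ⟨j, fun h => hj (rg_comp_subset _ _ h)⟩
          refine (p.nat _ _ (lastVtx _) _ hm h').symm.trans ?_
          rw [← hX hV]
          congr 1
          exact lastVtx_joinPt _⟩
      naturality a b g := by
        refine ConcreteCategory.hom_ext _ _ fun x => ?_
        apply Subtype.ext
        have hm := missing_joinPt _ (of_bmem x)
        have h' : ∃ j, j ∉ rg (N := n + 1)
            (joinPt g.unop ≫ joinPt (SSet.stdSimplex.objEquiv x.1)) := by
          obtain ⟨j, hj⟩ := hm
          exact ⟨j, fun h => hj (rg_comp_subset _ _ h)⟩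
        refine Eq.trans ?_ (p.nat _ _ (joinPt g.unop) _ hm h')
        change p.v _ (joinPt (g.unop ≫ SSet.stdSimplex.objEquiv x.1)) _ = _
        congr 1
        exact joinPt_comp _ _ }
  have ht : ∀ (a : SimplexCategory) (w : a ⟶ ⦋n⦌) h,
      (bval t w h).1 = p.v ⦋a.len + 1⦌ (joinPt w) (missing_joinPt _ h) := fun a w h => rfl
  obtain ⟨l, hl⟩ := hC X' n t
  have hl' := bval_of_ext t l hl
  obtain ⟨τ, τb, τl, τj⟩ : ∃ τ : C.obj (op ⦋n + 1⦌),
      C.map (botIncl ⦋n⦌).op τ = C.map (SimplexCategory.const ⦋n⦌ ⦋0⦌ 0).op X' ∧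
      C.map (lastVtx ⦋n⦌).op τ = X ∧ ∀ (a : SimplexCategory) (w : a ⟶ ⦋n⦌) (_ : ∃ j, j ∉ rg w) h',
        p.v ⦋a.len + 1⦌ (joinPt w) h' = C.map (joinPt w).op τ :=
    ⟨(SSet.yonedaEquiv l).1, (SSet.yonedaEquiv l).2.1, (SSet.yonedaEquiv l).2.2,
      fun a w h _ => congrArg Subtype.val (hl' a w h)⟩
  clear_value t
  clear hl hl' ht
  refine ⟨τ, ?_⟩
  intro a x h
  by_cases hx : Fin.last (n + 1) ∈ rg x
  · by_cases hx2 : ∀ j : Fin (n + 1), j.castSucc ∉ rg x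
    · have e := factor_last x hx2
      subst e
      rw [mapc, τl, ← hX hV]
      exact p.nat _ _ (SimplexCategory.const a ⦋0⦌ 0) _ hV h
    · push Not at hx2
      obtain ⟨j0, hj0⟩ := hx2
      obtain ⟨j, hj⟩ := h
      obtain ⟨j, rfl⟩ : ∃ j' : Fin (n + 1), j'.castSucc = j := by
        refine ⟨j.castPred ?_, Fin.castSucc_castPred _ _⟩
        rintro rfl
        exact hj hx
      obtain _ | n := n
      · exact absurd hj0 (by
          obtain rfl : j0 = j := Fin.ext (by omega)
          exact hj)
      obtain ⟨y, rfl⟩ := factor_delta j.castSucc x hj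
      have e : y ≫ SimplexCategory.δ j.castSucc = y ≫ joinPt (SimplexCategory.δ j) := by
        rw [joinPt_delta]
      have hd : ∃ i, i ∉ rg (SimplexCategory.δ j) := ⟨j, by rw [mem_rg_delta]; simp⟩
      have hdj := missing_joinPt _ hd
      have h2 : ∃ i, i ∉ rg (N := n + 2) (y ≫ joinPt (SimplexCategory.δ j)) := by
        rw [← e]; exact ⟨_, hj⟩
      have e2 : p.v a (y ≫ SimplexCategory.δ j.castSucc) ⟨_, hj⟩ =
          p.v a (y ≫ joinPt (SimplexCategory.δ j)) h2 := by
        congr 1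
      rw [e2, p.nat _ _ y _ hdj, τj _ _ hd, e]
      exact (mapc C _ _ _).symm
  · obtain ⟨y, rfl⟩ := factor_delta _ x hx
    have e : y ≫ SimplexCategory.δ (Fin.last (n + 1)) = y ≫ botIncl ⦋n⦌ := by
      rw [botIncl_eq]
    have h2 := h
    rw [e] at h2
    have e2 : p.v a (y ≫ SimplexCategory.δ (Fin.last (n + 1))) h =
          p.v a (y ≫ botIncl ⦋n⦌) h2 := by
        congr 1
    rw [e2, e, p.nat _ _ y _ (by rw [botIncl_eq]; exact hL), hface, mapc, τb]

lemma fillable_one [SSet.Quasicategory C] (X : C _⦋0⦌) (n : ℕ)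
    (hC : ∀ X' : C _⦋0⦌, IsContractible (RightHom C X' X)) :
    Fillable C X n 1 := by
  have key : ∀ d k, k + d = n + 1 → 1 ≤ k → Fillable C X n k := by
    intro d
    induction d with
    | zero =>
      intro k hk _
      obtain rfl : k = n + 1 := by omega
      exact fillable_base X n hC
    | succ d ih =>
      intro k hk h1
      exact fillable_step X n k h1 (by omega) (ih (k + 1) (by omega) (by omega))
  exact key n 1 (by omega) le_rfl

lemma cc_one (n : ℕ) : cc n 1 = 𝟙 _ := by
  apply hom_ext_val
  intro i
  rw [cc_val]
  change _ = i.val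
  split_ifs <;> omega

lemma fill_boundary [SSet.Quasicategory C] (X : C _⦋0⦌) (n : ℕ)
    (hC : ∀ X' : C _⦋0⦌, IsContractible (RightHom C X' X))
    (p : PM C (n + 1) (fun T => ∃ j, j ∉ T))
    (hX : ∀ h, p.v ⦋0⦌ (SimplexCategory.const ⦋0⦌ ⦋n + 1⦌ (Fin.last (n + 1))) h = X) :
    ∃ σ : C.obj (op ⦋n + 1⦌), ∀ a x h, p.v a x h = C.map x.op σ := by
  refine fillable_one X n hC p hX ⟨p.v ⦋n⦌ (SimplexCategory.δ (Fin.last (n + 1)))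
    ⟨Fin.last (n + 1), by rw [mem_rg_delta]; simp⟩, ?_⟩
  intro h
  rw [cc_one, op_id, FunctorToTypes.map_id_apply]

end SSetPaper


namespace SSetPaper

variable {C : SSet.{0}}

lemma factor_join {a : SimplexCategory} {n : ℕ} (y : a ⟶ ⦋n + 1⦌) (j : Fin (n + 1))
    (hj : j.castSucc ∈ rg y) : ∃ (w : a ⟶ ⦋n⦌) (u : a ⟶ ⦋a.len + 1⦌), u ≫ joinPt w = y ∧
      ∀ k : Fin (n + 1), k ∈ rg w → k.castSucc ∈ rg y := by
  classical
  let Y : Fin (a.len + 1) → Fin (n + 2) := y.toOrderHom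
  have hY : Monotone Y := y.toOrderHom.monotone
  obtain ⟨i1, hi1⟩ : ∃ i, Y i = j.castSucc := hj
  obtain ⟨i0, hi0, hmax⟩ := (Finset.univ.filter fun i => (Y i).val < n + 1).exists_max_image id
    ⟨i1, by
      rw [Finset.mem_filter, hi1]
      exact ⟨Finset.mem_univ _, j.isLt⟩⟩
  simp only [Finset.mem_filter, Finset.mem_univ, true_and, id] at hi0 hmax
  have hlt : ∀ i, (Y (min i i0)).val < n + 1 := fun i =>
    lt_of_le_of_lt (hY (min_le_right i i0)) hi0
  let w : a ⟶ ⦋n⦌ := SimplexCategory.Hom.mk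
    { toFun := fun i => ⟨(Y (min i i0)).val, hlt i⟩
      monotone' := fun i i' hii => hY (min_le_min_right i0 hii) }
  let u : a ⟶ ⦋a.len + 1⦌ := SimplexCategory.Hom.mk
    { toFun := fun i => if (Y i).val < n + 1 then Fin.castSucc i else Fin.last (a.len + 1)
      monotone' := by
        intro i i' hii
        have := hY hii
        rw [Fin.le_def] at this
        dsimp only
        split_ifs
        · exact Fin.castSucc_le_castSucc_iff.mpr hii
        · exact Fin.le_last _
        · omega
        · exact le_rfl }
  refine ⟨w, u, ?_, ?_⟩
  rotate_left
  · rintro _ ⟨i, rfl⟩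
    exact ⟨min i i0, rfl⟩
  apply hom_ext_val (n := n + 1)
  intro i
  change ((joinPt w).toOrderHom (if (Y i).val < n + 1 then Fin.castSucc i else
    Fin.last (a.len + 1)) : Fin (n + 2)).val = (Y i).val
  by_cases hi : (Y i).val < n + 1
  · rw [if_pos hi, joinPt_apply_of_lt _ _ (show (Fin.castSucc i).val < a.len + 1 from i.isLt)]
    change (Y (min i i0)).val = (Y i).val
    rw [min_eq_left (hmax i hi)]
  · rw [if_neg hi, joinPt_apply_of_ge _ _ (by simp)]
    change n + 1 = (Y i).val
    have := (Y i).isLt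
    omega

lemma joinPt_delta_inj {n : ℕ} (j : Fin (n + 2)) :
    Function.Injective (joinPt (SimplexCategory.δ j)).toOrderHom := by
  rw [joinPt_delta]
  exact delta_inj _

lemma delta_missing {n : ℕ} (j : Fin (n + 2)) : ∃ i, i ∉ rg (SimplexCategory.δ j) :=
  ⟨j, by rw [mem_rg_delta]; simp⟩

lemma build_pm (X : C _⦋0⦌) (n : ℕ)
    (F : ∀ (a : SimplexCategory) (w : a ⟶ ⦋n + 1⦌), (∃ j, j ∉ rg w) → C.obj (op ⦋a.len + 1⦌))
    (hF : ∀ a b (f : b ⟶ a) (w : a ⟶ ⦋n + 1⦌) h h', F b (f ≫ w) h' = C.map (joinPt f).op (F a w h))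
    (hFl : ∀ a w h, C.map (lastVtx a).op (F a w h) = X) (β : C.obj (op ⦋n + 1⦌))
    (hFb : ∀ a w h, C.map (botIncl a).op (F a w h) = C.map w.op β)
    (J : Finset (Fin (n + 2))) :
    ∃ q : PM C (n + 2) (fun T => Fin.last (n + 2) ∉ T ∨ ∃ j ∈ J, j.castSucc ∉ T),
      (∀ a (y : a ⟶ ⦋n + 1⦌) h, q.v a (y ≫ SimplexCategory.δ (Fin.last (n + 2))) h = C.map y.op β) ∧
      ∀ j ∈ J, ∀ a (y : a ⟶ ⦋n + 1⦌) h, q.v a (y ≫ SimplexCategory.δ j.castSucc) h =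
        C.map y.op (F _ (SimplexCategory.δ j) (delta_missing j)) := by
  induction J using Finset.induction_on with
  | empty =>
    obtain ⟨q, hq⟩ := (PM.ofSimplex β).exists_push (N := n + 2)
      (D' := fun T => Fin.last (n + 2) ∉ T ∨ ∃ j ∈ (∅ : Finset (Fin (n + 2))), j.castSucc ∉ T)
      (SimplexCategory.δ (Fin.last (n + 2))) (delta_inj _) (by
        rintro T (h | ⟨j, hj, -⟩)
        · exact ⟨subset_rg_delta _ _ h, trivial⟩
        · simp at hj)
    refine ⟨q, fun a y h => hq a y h trivial, ?_⟩
    intro j hj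
    simp at hj
  | insert j J hjJ ih =>
    obtain ⟨q, hqb, hqJ⟩ := ih
    have dn : Dn (fun T => Fin.last (n + 2) ∉ T ∨ ∃ j ∈ J, j.castSucc ∉ T) := by
      rintro S T hST (h | ⟨i, hi, h⟩)
      · exact Or.inl fun h' => h (hST h')
      · exact Or.inr ⟨i, hi, fun h' => h (hST h')⟩
    obtain ⟨r, hqr, hr⟩ := q.exists_addFace (B := fun T => j.castSucc ∉ T) dn
      (fun S T hST h h' => h (hST h')) (SimplexCategory.δ j.castSucc) (delta_inj _)
      (fun T hT => subset_rg_delta _ T hT) (F _ (SimplexCategory.δ j) (delta_missing j)) (by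
        intro a y h hB
        by_cases hl : Fin.last (n + 2) ∈ rg (y ≫ SimplexCategory.δ j.castSucc)
        · obtain ⟨j2, hj2, hm2⟩ := h.resolve_left (fun h => h hl)
          obtain ⟨z, hz⟩ := factor_delta _ _ hm2
          have e0 : q.v a (y ≫ SimplexCategory.δ j.castSucc) h =
              q.v a (z ≫ SimplexCategory.δ j2.castSucc) (by rw [hz]; exact h) := by
            congr 1
            exact hz.symm
          rw [e0, hqJ j2 hj2]
          by_cases hy : ∀ i : Fin (n + 1), i.castSucc ∉ rg y
          · have ey := factor_last y hy
            have ez : SimplexCategory.const a ⦋0⦌ 0 ≫ lastVtx ⦋n⦌ = z := by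
              apply cancel_e _ (delta_inj j2.castSucc)
              rw [hz, ← ey]
              apply hom_ext_val (n := n + 2)
              intro i
              have h1 := j2.isLt
              have h2 := j.isLt
              refine (delta_val _ _).trans (Eq.trans ?_ (delta_val _ _).symm)
              change (if n + 1 < j2.val then n + 1 else n + 1 + 1) =
                (if n + 1 < j.val then n + 1 else n + 1 + 1)
              rw [if_neg (by omega), if_neg (by omega)]
            rw [← ey, ← ez, mapc, mapc]
            exact congrArg _ ((hFl ⦋n⦌ _ _).trans (hFl ⦋n⦌ _ _).symm)
          · push Not at hy
            obtain ⟨i, hi⟩ := hy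
            obtain ⟨w, u, huw, hwy⟩ := factor_join y i hi
            have hne : j2 ∉ rg (w ≫ SimplexCategory.δ j) := by
              rw [rg_comp]
              rintro ⟨k, hk, hkj⟩
              apply hm2
              rw [rg_comp]
              refine ⟨k.castSucc, hwy k hk, ?_⟩
              rw [← hkj]
              apply Fin.ext
              rw [delta_val, Fin.val_castSucc, Fin.val_castSucc, Fin.val_castSucc, delta_val]
            obtain ⟨w2, hw2⟩ := factor_delta j2 _ hne
            have ez : z = u ≫ joinPt w2 := by
              apply cancel_e _ (delta_inj j2.castSucc)
              rw [hz, ← huw, ← joinPt_delta, ← joinPt_delta, Category.assoc, Category.assoc]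
              congr 1
              refine (joinPt_comp _ _).symm.trans (Eq.trans ?_ (joinPt_comp _ _))
              rw [hw2]
            have hm : ∃ i, i ∉ rg (w ≫ SimplexCategory.δ j) := ⟨j2, hne⟩
            have hm' : ∃ i, i ∉ rg (w2 ≫ SimplexCategory.δ j2) := by rw [hw2]; exact hm
            have e1 := hF _ _ w2 _ (delta_missing j2) hm'
            have e2 := hF _ _ w _ (delta_missing j) hm
            rw [ez, ← huw]
            refine (mapc C _ _ _).trans (Eq.trans ?_ (mapc C _ _ _).symm)
            refine congrArg _ (e1.symm.trans (Eq.trans ?_ e2))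
            congr 1
        · obtain ⟨z, hz⟩ := factor_delta _ _ hl
          have e0 : q.v a (y ≫ SimplexCategory.δ j.castSucc) h =
              q.v a (z ≫ SimplexCategory.δ (Fin.last (n + 2))) (by rw [hz]; exact h) := by
            congr 1
            exact hz.symm
          rw [e0, hqb]
          obtain ⟨y', rfl⟩ := factor_delta (Fin.last (n + 1)) y (by
            rintro ⟨i, hi⟩
            refine hl ⟨i, ?_⟩
            apply Fin.ext
            rw [comp_val, hi, delta_val]
            have := j.isLt
            simp only [Fin.val_last, Fin.val_castSucc]
            split_ifs <;> omega)
          have ez : z = y' ≫ SimplexCategory.δ j := by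
            apply cancel_e _ (delta_inj (Fin.last (n + 2)))
            rw [hz, Category.assoc, Category.assoc]
            congr 1
            exact delta_delta_last n j.val j.isLt _
          rw [ez, mapc, mapc, ← hFb ⦋n⦌ (SimplexCategory.δ j) (delta_missing j)]
          have : botIncl ⦋n⦌ = SimplexCategory.δ (Fin.last (n + 1)) := botIncl_eq n
          rw [this])
    have hdom : ∀ T : Set (Fin (n + 3)),
        (Fin.last (n + 2) ∉ T ∨ ∃ i ∈ insert j J, i.castSucc ∉ T) →
        ((Fin.last (n + 2) ∉ T ∨ ∃ j ∈ J, j.castSucc ∉ T) ∨ j.castSucc ∉ T) := by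
      rintro T (h | ⟨i, hi, h⟩)
      · exact Or.inl (Or.inl h)
      · rcases Finset.mem_insert.1 hi with rfl | hi
        · exact Or.inr h
        · exact Or.inl (Or.inr ⟨i, hi, h⟩)
    refine ⟨r.restrict hdom, ?_, ?_⟩
    · intro a y h
      obtain ⟨_, e⟩ := hqr a (y ≫ SimplexCategory.δ (Fin.last (n + 2)))
        (Or.inl (notMem_rg_comp_delta _ _))
      exact e.trans (hqb a y _)
    · intro i hi a y h
      by_cases hij : i = j
      · subst hij
        exact hr a y _ (notMem_rg_comp_delta _ _)
      · have hi := (Finset.mem_insert.1 hi).resolve_left hij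
        obtain ⟨_, e⟩ := hqr a (y ≫ SimplexCategory.δ i.castSucc)
          (Or.inr ⟨i, hi, notMem_rg_comp_delta _ _⟩)
        exact e.trans (hqJ i hi a y _)

end SSetPaper


namespace SSetPaper

variable {C : SSet.{0}}

lemma no_missing_zero {a : SimplexCategory} (w : a ⟶ ⦋0⦌) (h : ∃ j, j ∉ rg w) : False := by
  obtain ⟨j, hj⟩ := h
  apply hj
  have : w.toOrderHom 0 = j := Subsingleton.elim (α := Fin 1) _ _
  exact ⟨0, this⟩

lemma yoneda_comp {n : ℕ} {S T : SSet.{0}} (l : Δ[n] ⟶ S) (f : S ⟶ T) :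
    SSet.yonedaEquiv (l ≫ f) = f.app (op ⦋n⦌) (SSet.yonedaEquiv l) := rfl

lemma rightHom_contractible_of_terminal (X : C _⦋0⦌) (hX : IsTerminalObject C X) (X' : C _⦋0⦌) :
    IsContractible (RightHom C X' X) := by
  intro n t
  let inc : RightHom C X' X ⟶ Slice C X :=
    { app a := ↾fun σ => ⟨σ.1, σ.2.2⟩
      naturality a b f := rfl }
  let b : (Δ[n] : SSet.{0}) ⟶ C :=
    SSet.yonedaEquiv.symm (C.map (SimplexCategory.const ⦋n⦌ ⦋0⦌ 0).op X')
  have hb : SSet.yonedaEquiv b = C.map (SimplexCategory.const ⦋n⦌ ⦋0⦌ 0).op X' :=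
    Equiv.apply_symm_apply _ _
  obtain ⟨l, hl1, hl2⟩ := hX n (t ≫ inc) b (by
    ext a x
    have e1 := (t.app a x).2.1
    have e2 := app_eq b (SSet.stdSimplex.objEquiv x.1)
    rw [hb, ← mapc] at e2
    exact e1.trans e2.symm)
  have h2 : C.map (botIncl ⦋n⦌).op (SSet.yonedaEquiv l).1 =
      C.map (SimplexCategory.const ⦋n⦌ ⦋0⦌ 0).op X' := by
    rw [← hb, ← hl2]
    rfl
  let τ : (RightHom C X' X).obj (op ⦋n⦌) :=
    ⟨(SSet.yonedaEquiv l).1, h2, (SSet.yonedaEquiv l).2⟩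
  refine ⟨SSet.yonedaEquiv.symm τ, ?_⟩
  apply bval_ext
  intro a w h
  rw [Equiv.apply_symm_apply]
  apply Subtype.ext
  have := congrArg Subtype.val (bval_of_ext _ l hl1 a w h)
  exact this.symm

lemma terminal_of_contractible [SSet.Quasicategory C] (X : C _⦋0⦌)
    (hC : ∀ X' : C _⦋0⦌, IsContractible (RightHom C X' X)) : IsTerminalObject C X := by
  intro n t b htb
  obtain ⟨β, hβ⟩ : ∃ β, SSet.yonedaEquiv b = β := ⟨_, rfl⟩
  suffices hs : ∃ σ : C.obj (op ⦋n + 1⦌), C.map (lastVtx ⦋n⦌).op σ = X ∧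
      C.map (botIncl ⦋n⦌).op σ = β ∧
      ∀ (a : SimplexCategory) (w : a ⟶ ⦋n⦌) h, C.map (joinPt w).op σ = (bval t w h).1 by
    obtain ⟨σ, h1, h2, h3⟩ := hs
    let τ : (Slice C X).obj (op ⦋n⦌) := ⟨σ, h1⟩
    refine ⟨SSet.yonedaEquiv.symm τ, ?_, ?_⟩
    · apply bval_ext
      intro a w h
      rw [Equiv.apply_symm_apply]
      exact Subtype.ext (h3 a w h)
    · apply SSet.yonedaEquiv.injective
      rw [yoneda_comp, Equiv.apply_symm_apply, hβ]
      exact h2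
  obtain _ | n := n
  · let t0 : (∂Δ[0] : SSet.{0}) ⟶ RightHom C β X :=
      { app a := ↾fun x => False.elim (no_missing_zero _ (of_bmem x))
        naturality a b f := by
          refine ConcreteCategory.hom_ext _ _ fun x => ?_
          exact False.elim (no_missing_zero _ (of_bmem x)) }
    obtain ⟨l, -⟩ := hC β 0 t0
    refine ⟨(SSet.yonedaEquiv l).1, (SSet.yonedaEquiv l).2.2, ?_, ?_⟩
    · refine (SSet.yonedaEquiv l).2.1.trans ?_
      have : SimplexCategory.const ⦋0⦌ ⦋0⦌ 0 = 𝟙 _ := toZero_unique _ _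
      change C.map (SimplexCategory.const ⦋0⦌ ⦋0⦌ 0).op β = β
      rw [this, op_id, FunctorToTypes.map_id_apply]
    · intro a w h
      exact False.elim (no_missing_zero w h)
  · have hFb : ∀ (a : SimplexCategory) (w : a ⟶ ⦋n + 1⦌) h,
        C.map (botIncl a).op (bval t w h).1 = C.map w.op β := by
      intro a w h
      have e := ConcreteCategory.congr_hom (congr_app htb (op a))
        ⟨SSet.stdSimplex.objEquiv.symm w, bmem w h⟩
      rw [← hβ, ← app_eq]
      exact e
    have hF : ∀ (a b : SimplexCategory) (f : b ⟶ a) (w : a ⟶ ⦋n + 1⦌) h h',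
        (bval t (f ≫ w) h').1 = C.map (joinPt f).op (bval t w h).1 := fun a b f w h h' =>
      congrArg Subtype.val (bval_nat t f w h h')
    obtain ⟨q, hqb, hqJ⟩ := build_pm X n (fun a w h => (bval t w h).1) hF
      (fun a w h => (bval t w h).2) β hFb Finset.univ
    have hdom : ∀ T : Set (Fin (n + 3)), (∃ j, j ∉ T) →
        (Fin.last (n + 2) ∉ T ∨ ∃ j ∈ (Finset.univ : Finset (Fin (n + 2))), j.castSucc ∉ T) := by
      rintro T ⟨j, hj⟩
      by_cases hjl : j = Fin.last (n + 2)
      · subst hjl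
        exact Or.inl hj
      · exact Or.inr ⟨j.castPred hjl, Finset.mem_univ _, by rwa [Fin.castSucc_castPred]⟩
    have hlast : lastVtx ⦋n⦌ ≫ SimplexCategory.δ ((0 : Fin (n + 2)).castSucc) =
        SimplexCategory.const ⦋0⦌ ⦋n + 2⦌ (Fin.last (n + 2)) := by
      rw [← joinPt_delta]
      exact lastVtx_joinPt _
    obtain ⟨σ, hσ⟩ := fill_boundary X (n + 1) hC (q.restrict hdom) (by
      intro h
      have h' := hdom _ h
      rw [← hlast] at h'
      have e := hqJ 0 (Finset.mem_univ _) _ (lastVtx ⦋n⦌) h'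
      refine Eq.trans ?_ (e.trans (bval t (SimplexCategory.δ 0) (delta_missing 0)).2)
      change q.v _ _ _ = _
      congr 1)
    have hσj : ∀ j : Fin (n + 2), C.map (SimplexCategory.δ j.castSucc).op σ =
        (bval t (SimplexCategory.δ j) (delta_missing j)).1 := by
      intro j
      have hm : ∃ i, i ∉ rg (𝟙 _ ≫ SimplexCategory.δ j.castSucc) :=
        ⟨_, notMem_rg_comp_delta _ _⟩
      have e1 := hσ _ (𝟙 _ ≫ SimplexCategory.δ j.castSucc) hm
      have e2 := hqJ j (Finset.mem_univ _) _ (𝟙 _) (hdom _ hm)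
      have e3 := e1.symm.trans e2
      rw [Category.id_comp, op_id, FunctorToTypes.map_id_apply] at e3
      exact e3
    refine ⟨σ, ?_, ?_, ?_⟩
    · have e := hσj 0
      have e' := (bval t (SimplexCategory.δ (0 : Fin (n + 2))) (delta_missing 0)).2
      change C.map (SimplexCategory.const ⦋0⦌ ⦋n + 2⦌ (Fin.last (n + 2))).op σ = X
      rw [← hlast, mapc, e]
      exact e'
    · have hm : ∃ i, i ∉ rg (𝟙 _ ≫ SimplexCategory.δ (Fin.last (n + 2))) :=
        ⟨_, notMem_rg_comp_delta _ _⟩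
      have e1 := hσ _ (𝟙 _ ≫ SimplexCategory.δ (Fin.last (n + 2))) hm
      have e2 := hqb _ (𝟙 _) (hdom _ hm)
      have e3 := e1.symm.trans e2
      rw [Category.id_comp, op_id, FunctorToTypes.map_id_apply] at e3
      rw [botIncl_eq]
      exact e3
    · intro a w h
      obtain ⟨j, hj⟩ := h
      obtain ⟨y, rfl⟩ := factor_delta j w hj
      rw [hF _ _ y _ (delta_missing j), ← hσj j, ← joinPt_delta, joinPt_comp]
      exact mapc C _ _ _

end SSetPaper

/-!
STATEMENT 2: Let `C` be a quasicategory.  An object `X` of `C` is a terminal object,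
i.e. the projection `C_{/X} → C` is a trivial Kan fibration, if and only if for every
object `X'` of `C` the mapping space `Hom_C(X', X)` is a contractible Kan complex.
-/

open SSetPaper in
theorem isTerminalObject_iff_mapping_spaces_contractible
    (C : SSet.{0}) [SSet.Quasicategory C] (X : C _⦋0⦌) :
    IsTerminalObject C X ↔
      ∀ X' : C _⦋0⦌,
        IsContractible (RightHom C X' X) ∧ SSetPaper.KanComplex (RightHom C X' X) := by

  constructor
  · intro h X'
    have := rightHom_contractible_of_terminal X h X'
    exact ⟨this, contractible_kan this⟩
  · intro h
    exact terminal_of_contractible X fun X' => (h X').1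
end
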